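/- arXiv:1809.07736 — 2 statements merged into one kernel-verified Lean document; each statement's English description precedes it below -/
import Mathlib

section
/- There exists a constant c > 0 such that for every positive integer k, every Hamiltonian graph G on n vertices with n ≥ c·k^{11/5} and independence number at most k is pancyclic, i.e., G contains a cycle of every length ℓ with 3 ≤ ℓ ≤ n. -/
/-!
The cycle lengths `ℓ` fall into three ranges, and `d` is a parameter, equal to `5` in `statement0`.

* `ℓ ≥ 10⁶ k²`: any path between `a` and `b` of this length has a counterpart with exactly one
  vertex fewer, so a Hamilton cycle can be shortened one vertex at a time. All but few vertices have
  large degree, so the path has many gaps, short stretches of such vertices. Pósa rotations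
  reroute the part before a gap in many ways, each recorded by a pair of vertices, and by pigeonhole
  two gaps share a pair. Combining the two reroutings gives a path that skips both gaps, into which
  all skipped vertices but one can be inserted again.
* `4k ≤ ℓ < n / 2`: a subset `U` of one half of the Hamilton cycle that is minimal with
  `|U| / α(U)` large is highly connected. It contains a chain of triangles with paths of many
  lengths between its ends, and the rest of the Hamilton cycle closes them up.
* `ℓ ≤ 4k`: explore `U` by breadth-first search. If the first `d` layers all had few vertices
  relative to their independence number, the independence number of the balls would grow by a
  factor of `t` in each step, which is impossible if `t ^ d > k`. In the remaining layer there are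
  paths of all short lengths, which the search tree closes up to cycles. For `ℓ ≤ 4d`, a path in
  the neighbourhood of a vertex suffices.
-/

namespace Pancyclicity

open Finset

variable {V : Type*} {G : SimpleGraph V}

/-! ### Independent sets -/

lemma card_le_of_indepSetFree {k : ℕ} (hα : G.IndepSetFree (k + 1)) {s : Finset V}
    (hs : G.IsIndepSet s) : #s ≤ k := by
  by_contra! hk
  obtain ⟨t, hts, ht⟩ := exists_subset_card_eq (Nat.succ_le_of_lt hk)
  exact hα t ⟨hs.mono hts, ht⟩

lemma indepSetFree_of_forall_card_le {k : ℕ}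
    (h : ∀ s : Finset V, (∀ u ∈ s, ∀ v ∈ s, u ≠ v → ¬G.Adj u v) → #s ≤ k) :
    G.IndepSetFree (k + 1) := fun s hs ↦
  absurd (h s fun _ hu _ hv ↦ hs.isIndepSet hu hv) (by rw [hs.card_eq]; lia)

lemma exists_adj_of_lt_card {k : ℕ} (hα : G.IndepSetFree (k + 1)) {s : Finset V} (hs : k < #s) :
    ∃ a ∈ s, ∃ b ∈ s, G.Adj a b := by
  by_contra! h
  exact hs.not_ge (card_le_of_indepSetFree hα fun a ha b hb _ ↦ h a ha b hb)

lemma exists_lt_adj_of_lt_card {k : ℕ} (hα : G.IndepSetFree (k + 1)) {ι : Type*} [LinearOrder ι]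
    {s : Finset ι} {f : ι → V} (hf : Set.InjOn f s) (hs : k < #s) :
    ∃ i ∈ s, ∃ j ∈ s, i < j ∧ G.Adj (f i) (f j) := by
  classical
  obtain ⟨a, ha, b, hb, hab⟩ := exists_adj_of_lt_card hα (hs.trans_eq (card_image_of_injOn hf).symm)
  obtain ⟨i, hi, rfl⟩ := mem_image.1 ha
  obtain ⟨j, hj, rfl⟩ := mem_image.1 hb
  rcases lt_trichotomy i j with hij | rfl | hij
  · exact ⟨i, hi, j, hj, hij, hab⟩
  · exact absurd hab G.irrefl
  · exact ⟨j, hj, i, hi, hij, hab.symm⟩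

open Classical in
/-- The neighbours of `v` lying in `U`. -/
noncomputable def neighborsIn (G : SimpleGraph V) (U : Finset V) (v : V) : Finset V :=
  {w ∈ U | G.Adj v w}

@[simp]
lemma mem_neighborsIn {U : Finset V} {v w : V} : w ∈ neighborsIn G U v ↔ w ∈ U ∧ G.Adj v w := by
  classical exact mem_filter

lemma neighborsIn_subset (U : Finset V) (v : V) : neighborsIn G U v ⊆ U :=
  fun _ hw ↦ (mem_neighborsIn.1 hw).1

open Classical in
/-- The closed neighbourhood of `I` in `U`: the set `I` together with its neighbours in `U`. -/
noncomputable def closedNhdIn (G : SimpleGraph V) (U I : Finset V) : Finset V :=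
  I ∪ I.biUnion (neighborsIn G U)

lemma mem_closedNhdIn {U I : Finset V} {x : V} :
    x ∈ closedNhdIn G U I ↔ x ∈ I ∨ ∃ w ∈ I, x ∈ U ∧ G.Adj w x := by
  simp only [closedNhdIn, mem_union, mem_biUnion, mem_neighborsIn]

lemma subset_closedNhdIn (U I : Finset V) : I ⊆ closedNhdIn G U I :=
  fun _ hx ↦ mem_closedNhdIn.2 (.inl hx)

lemma closedNhdIn_subset {U I : Finset V} (hI : I ⊆ U) : closedNhdIn G U I ⊆ U := fun _ hx ↦
  (mem_closedNhdIn.1 hx).elim (hI ·) fun ⟨_, _, hxU, _⟩ ↦ hxU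

lemma closedNhdIn_mono {U I J : Finset V} (hIJ : I ⊆ J) :
    closedNhdIn G U I ⊆ closedNhdIn G U J := fun _ hx ↦
  mem_closedNhdIn.2 ((mem_closedNhdIn.1 hx).imp (hIJ ·) fun ⟨w, hw, h⟩ ↦ ⟨w, hIJ hw, h⟩)

/-- The independence number of the subgraph induced by `U`. -/
noncomputable def indepNumOn (G : SimpleGraph V) (U : Finset V) : ℕ :=
  (G.induce (U : Set V)).indepNum

lemma card_le_indepNumOn {U s : Finset V} (hs : G.IsIndepSet s) (hsU : s ⊆ U) :
    #s ≤ indepNumOn G U := by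
  classical
  have hind : (G.induce (U : Set V)).IsIndepSet (s.subtype (· ∈ U)) := fun x hx y hy hxy ↦
    hs (mem_subtype.1 hx) (mem_subtype.1 hy) (Subtype.coe_ne_coe.2 hxy)
  calc
    #s = #(s.subtype (· ∈ U)) := by rw [card_subtype, filter_true_of_mem hsU]
    _ ≤ indepNumOn G U := hind.card_le_indepNum

lemma exists_isIndepSet_card_eq_indepNumOn (G : SimpleGraph V) (U : Finset V) :
    ∃ s ⊆ U, G.IsIndepSet s ∧ #s = indepNumOn G U := by
  obtain ⟨s, hs, hcard⟩ := (G.induce (U : Set V)).exists_isNIndepSet_indepNum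
  refine ⟨s.map (.subtype _), fun x hx ↦ ?_, ?_, by rw [card_map, hcard]; rfl⟩
  · obtain ⟨y, -, rfl⟩ := mem_map.1 hx
    exact y.2
  · rw [SimpleGraph.IsIndepSet, coe_map]
    rintro _ ⟨x, hx, rfl⟩ _ ⟨y, hy, rfl⟩ hxy
    exact hs hx hy fun h ↦ hxy (congrArg _ h)

lemma indepNumOn_mono {U W : Finset V} (hUW : U ⊆ W) : indepNumOn G U ≤ indepNumOn G W := by
  obtain ⟨s, hsU, hs, hcard⟩ := exists_isIndepSet_card_eq_indepNumOn G U
  exact hcard ▸ card_le_indepNumOn hs (hsU.trans hUW)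

lemma indepNumOn_le {k : ℕ} (hα : G.IndepSetFree (k + 1)) (U : Finset V) : indepNumOn G U ≤ k := by
  obtain ⟨s, -, hs, hcard⟩ := exists_isIndepSet_card_eq_indepNumOn G U
  exact hcard ▸ card_le_of_indepSetFree hα hs

lemma indepNumOn_add_indepNumOn_le {U Y Z : Finset V} (hY : Y ⊆ U) (hZ : Z ⊆ U)
    (hYZ : Disjoint Y Z) (hadj : ∀ y ∈ Y, ∀ z ∈ Z, ¬G.Adj y z) :
    indepNumOn G Y + indepNumOn G Z ≤ indepNumOn G U := by
  classical
  obtain ⟨s, hsY, hs, hs'⟩ := exists_isIndepSet_card_eq_indepNumOn G Y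
  obtain ⟨t, htZ, ht, ht'⟩ := exists_isIndepSet_card_eq_indepNumOn G Z
  rw [← hs', ← ht', ← card_union_of_disjoint (disjoint_of_subset_left hsY
    (disjoint_of_subset_right htZ hYZ))]
  refine card_le_indepNumOn ?_ (union_subset (hsY.trans hY) (htZ.trans hZ))
  rw [SimpleGraph.IsIndepSet, coe_union]
  have : Std.Symm fun u v ↦ ¬G.Adj u v := ⟨fun _ _ h h' ↦ h h'.symm⟩
  exact Set.pairwise_union_of_symm.2
    ⟨hs, ht, fun y hy z hz _ ↦ hadj y (hsY hy) z (htZ hz)⟩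

/-! ### Minimal rich sets -/

/-- A nonempty set `U` is `M`-rich if `M (α(U) - 1/2) ≤ |U|`; the inequality is doubled to stay
in `ℕ`. -/
def IsRich (G : SimpleGraph V) (M : ℕ) (U : Finset V) : Prop :=
  U.Nonempty ∧ 2 * M * indepNumOn G U ≤ 2 * #U + M

/-- An inclusion-minimal `M`-rich set. Such sets expand and are highly connected. -/
def IsMinRich (G : SimpleGraph V) (M : ℕ) (U : Finset V) : Prop :=
  Minimal (IsRich G M) U

lemma isRich_of_mul_le {k M : ℕ} (hα : G.IndepSetFree (k + 1)) {U : Finset V} (hU : U.Nonempty)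
    (hM : 2 * M * k ≤ 2 * #U + M) : IsRich G M U :=
  ⟨hU, (Nat.mul_le_mul_left _ (indepNumOn_le hα U)).trans hM⟩

lemma IsRich.exists_isMinRich_subset {M : ℕ} {U : Finset V} (hU : IsRich G M U) :
    ∃ W ⊆ U, IsMinRich G M W :=
  exists_minimal_le_of_wellFoundedLT _ U hU

namespace IsMinRich

variable {M : ℕ} {U : Finset V}

lemma lt_of_ssubset (hU : IsMinRich G M U) {A : Finset V} (hA : A ⊂ U) (hne : A.Nonempty) :
    2 * #A + M < 2 * M * indepNumOn G A := by
  by_contra! h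
  exact hU.not_prop_of_lt hA ⟨hne, h⟩

lemma mul_card_le_two_mul_card_closedNhdIn (hU : IsMinRich G M U) {I : Finset V}
    (hI : G.IsIndepSet I) (hIU : I ⊆ U) : M * #I ≤ 2 * #(closedNhdIn G U I) := by
  classical
  rcases I.eq_empty_or_nonempty with rfl | hne
  · simp only [card_empty, mul_zero, zero_le]
  have hrich := hU.prop.2
  have hpos : 1 ≤ #I := hne.card_pos
  set N := closedNhdIn G U I
  have hIN : I ⊆ N := subset_closedNhdIn U I
  have hNU : N ⊆ U := closedNhdIn_subset hIU
  rcases hNU.eq_or_ssubset with hNU' | hss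
  · rw [hNU']
    nlinarith [card_le_indepNumOn hI hIU]
  have hlt := hU.lt_of_ssubset (sdiff_ssubset hNU (hne.mono hIN))
    (sdiff_nonempty.2 (not_subset_of_ssubset hss))
  have hadd : indepNumOn G (U \ N) + indepNumOn G I ≤ indepNumOn G U :=
    indepNumOn_add_indepNumOn_le sdiff_subset hIU
      (disjoint_of_subset_right hIN sdiff_disjoint) fun y hy v hv hyv ↦
      (mem_sdiff.1 hy).2 (mem_closedNhdIn.2 (.inr ⟨v, hv, (mem_sdiff.1 hy).1, hyv.symm⟩))
  have hcard : #(U \ N) + #N = #U := card_sdiff_add_card_eq_card hNU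
  nlinarith [card_le_indepNumOn hI Subset.rfl]

lemma le_two_mul_card_neighborsIn (hU : IsMinRich G M U) {v : V} (hv : v ∈ U) :
    M ≤ 2 * #(neighborsIn G U v) + 2 := by
  classical
  have h := hU.mul_card_le_two_mul_card_closedNhdIn (I := {v}) (by simp [SimpleGraph.IsIndepSet])
    (singleton_subset_iff.2 hv)
  have hnhd : closedNhdIn G U {v} = insert v (neighborsIn G U v) := by
    ext x
    simp only [mem_closedNhdIn, mem_insert, mem_singleton, exists_eq_left, mem_neighborsIn]
  have := card_insert_le v (neighborsIn G U v)
  rw [hnhd, card_singleton] at h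
  lia

lemma preconnected_induce_sdiff [DecidableEq V] (hU : IsMinRich G M U) {X : Finset V}
    (hXU : X ⊆ U) (hX : 2 * #X ≤ M) : (G.induce (↑(U \ X) : Set V)).Preconnected := by
  classical
  by_contra hcon
  obtain ⟨a, b, hab⟩ : ∃ a b, ¬(G.induce (↑(U \ X) : Set V)).Reachable a b := by
    simpa only [SimpleGraph.Preconnected, not_forall] using hcon
  let Y : Finset V := {y ∈ U \ X | ∃ hy : y ∈ U \ X,
    (G.induce (↑(U \ X) : Set V)).Reachable a ⟨y, mem_coe.2 hy⟩}
  have hY : ∀ y : ↥(↑(U \ X) : Set V), ↑y ∈ Y ↔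
      (G.induce (↑(U \ X) : Set V)).Reachable a y := fun y ↦ by
    simp only [Y, mem_filter, mem_coe.1 y.2, true_and, exists_true_left]
  have haY : ↑a ∈ Y := (hY a).2 .rfl
  have hbY : ↑b ∉ Y := fun h ↦ hab ((hY b).1 h)
  have hYX : Y ⊆ U \ X := filter_subset _ _
  have hbZ : ↑b ∈ (U \ X) \ Y := mem_sdiff.2 ⟨b.2, hbY⟩
  have hYU : Y ⊂ U := (hYX.trans sdiff_subset).ssubset_of_mem_notMem (mem_sdiff.1 b.2).1 hbY
  have hZU : (U \ X) \ Y ⊂ U := (sdiff_subset.trans sdiff_subset).ssubset_of_mem_notMem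
    (mem_sdiff.1 a.2).1 fun h ↦ (mem_sdiff.1 h).2 haY
  have hsplit : indepNumOn G Y + indepNumOn G ((U \ X) \ Y) ≤ indepNumOn G U := by
    refine indepNumOn_add_indepNumOn_le hYU.1 hZU.1 disjoint_sdiff fun y hy z hz hyz ↦ ?_
    obtain ⟨hzX, hzY⟩ := mem_sdiff.1 hz
    have hz' : (G.induce (↑(U \ X) : Set V)).Adj ⟨y, hYX hy⟩ ⟨z, hzX⟩ := hyz
    exact hzY ((hY ⟨z, hzX⟩).2 (((hY ⟨y, hYX hy⟩).1 hy).trans hz'.reachable))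
  have hYlt := hU.lt_of_ssubset hYU ⟨_, haY⟩
  have hZlt := hU.lt_of_ssubset hZU ⟨_, hbZ⟩
  have hcardY : #((U \ X) \ Y) + #Y = #(U \ X) := card_sdiff_add_card_eq_card hYX
  have hcardX : #(U \ X) + #X = #U := card_sdiff_add_card_eq_card hXU
  have hrich := hU.prop.2
  nlinarith

end IsMinRich

/-! ### Paths as vertex lists -/

/-- `L` lists the vertices of a path from `a` to `b`. Lists are more convenient than
`SimpleGraph.Walk` here because paths get cut, reversed and glued all the time. -/
structure IsPathList (G : SimpleGraph V) (L : List V) (a b : V) : Prop where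
  isChain : L.IsChain G.Adj
  nodup : L.Nodup
  head?_eq : L.head? = some a
  getLast?_eq : L.getLast? = some b

namespace IsPathList

variable {L L' A B : List V} {a b c d x y : V}

lemma single (a : V) : IsPathList G [a] a a :=
  ⟨.singleton a, List.nodup_singleton a, rfl, rfl⟩

lemma head_mem (h : IsPathList G L a b) : a ∈ L :=
  List.mem_of_head? h.head?_eq

lemma getLast_mem (h : IsPathList G L a b) : b ∈ L :=
  List.mem_of_getLast? h.getLast?_eq

lemma append (h : IsPathList G L a b) (h' : IsPathList G L' c d) (hbc : G.Adj b c)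
    (hdisj : L.Disjoint L') : IsPathList G (L ++ L') a d where
  isChain := List.isChain_append.2 ⟨h.isChain, h'.isChain, by
    simpa only [h.getLast?_eq, h'.head?_eq, Option.mem_some_iff, forall_eq'] using hbc⟩
  nodup := h.nodup.append h'.nodup hdisj
  head?_eq := by rw [List.head?_append, h.head?_eq, Option.some_or]
  getLast?_eq := by rw [List.getLast?_append, h'.getLast?_eq, Option.some_or]

lemma reverse (h : IsPathList G L a b) : IsPathList G L.reverse b a where
  isChain := List.isChain_reverse.2 (h.isChain.imp fun _ _ h ↦ h.symm)
  nodup := List.nodup_reverse.2 h.nodup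
  head?_eq := by rw [List.head?_reverse, h.getLast?_eq]
  getLast?_eq := by rw [List.getLast?_reverse, h.head?_eq]

lemma left (h : IsPathList G (A ++ B) a b) (hA : A.getLast? = some x) : IsPathList G A a x where
  isChain := h.isChain.left_of_append
  nodup := h.nodup.of_append_left
  head?_eq := by
    have hA' : A ≠ [] := by rintro rfl; cases hA
    rw [← h.head?_eq, List.head?_append_of_ne_nil _ hA']
  getLast?_eq := hA

lemma right (h : IsPathList G (A ++ B) a b) (hB : B.head? = some y) : IsPathList G B y b where
  isChain := h.isChain.right_of_append
  nodup := h.nodup.of_append_right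
  head?_eq := hB
  getLast?_eq := by
    have hB' : B ≠ [] := by rintro rfl; cases hB
    rw [← h.getLast?_eq, List.getLast?_append_of_ne_nil _ hB']

lemma adj_of_append (h : IsPathList G (A ++ B) a b) (hA : A.getLast? = some x)
    (hB : B.head? = some y) : G.Adj x y :=
  (List.isChain_append.1 h.isChain).2.2 x hA y hB

lemma disjoint (h : IsPathList G (A ++ B) a b) : A.Disjoint B :=
  List.disjoint_of_nodup_append h.nodup

lemma eq_cons_of_two_le_length (h : IsPathList G L a b) (hL : 2 ≤ L.length) :
    ∃ c L', L = a :: L' ∧ IsPathList G L' c b ∧ G.Adj a c ∧ a ∉ L' := by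
  match L, hL, h.head?_eq with
  | _ :: c :: L, _, rfl =>
    exact ⟨c, c :: L, rfl, h.right (A := [a]) rfl, h.adj_of_append (A := [a]) rfl rfl,
      (List.nodup_cons.1 h.nodup).1⟩

lemma ne (h : IsPathList G L a b) (hL : 2 ≤ L.length) : a ≠ b := by
  obtain ⟨c, L', rfl, hL', -, ha⟩ := h.eq_cons_of_two_le_length hL
  exact fun hab ↦ ha (hab ▸ hL'.getLast_mem)

lemma support {p : G.Walk a b} (hp : p.IsPath) : IsPathList G p.support a b where
  isChain := p.isChain_adj_support
  nodup := hp.support_nodup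
  head?_eq := by rw [List.head?_eq_some_head p.support_ne_nil, p.head_support]
  getLast?_eq := by rw [List.getLast?_eq_some_getLast p.support_ne_nil, p.getLast_support]

end IsPathList

lemma IsMinRich.exists_isPathList [DecidableEq V] {M : ℕ} {U X : Finset V}
    (hU : IsMinRich G M U) (hXU : X ⊆ U) (hX : 2 * #X ≤ M) {a b : V}
    (ha : a ∈ U \ X) (hb : b ∈ U \ X) :
    ∃ L, IsPathList G L a b ∧ ∀ x ∈ L, x ∈ U \ X := by
  let f := SimpleGraph.Embedding.induce (G := G) (↑(U \ X) : Set V)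
  obtain ⟨p, hp⟩ := (hU.preconnected_induce_sdiff hXU hX).exists_isPath
    ⟨a, mem_coe.2 ha⟩ ⟨b, mem_coe.2 hb⟩
  refine ⟨(p.map f.toHom).support, .support (hp.map f.injective), fun x hx ↦ ?_⟩
  rw [SimpleGraph.Walk.support_map] at hx
  obtain ⟨y, -, rfl⟩ := List.mem_map.1 hx
  exact mem_coe.1 y.2

/-! ### Cycles -/

/-- `G` contains a cycle of length `ℓ`. -/
def HasCycle (G : SimpleGraph V) (ℓ : ℕ) : Prop :=
  ∃ (u : V) (w : G.Walk u u), w.IsCycle ∧ w.length = ℓ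

lemma IsPathList.hasCycle {L : List V} {a b : V} (h : IsPathList G L a b) (hL : 3 ≤ L.length)
    (hba : G.Adj b a) : HasCycle G L.length := by
  have hne : L ≠ [] := List.ne_nil_of_mem h.head_mem
  have hhead : L.head hne = a := by simpa [List.head?_eq_some_head hne] using h.head?_eq
  have hlast : L.getLast hne = b := by
    simpa [List.getLast?_eq_some_getLast hne] using h.getLast?_eq
  let p := SimpleGraph.Walk.ofSupport L hne h.isChain
  have hp : p.IsPath := by
    rw [SimpleGraph.Walk.isPath_def, SimpleGraph.Walk.support_ofSupport]
    exact h.nodup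
  have hlen : p.length + 1 = L.length := by
    rw [← p.length_support, SimpleGraph.Walk.support_ofSupport]
  have hadj : G.Adj (L.getLast hne) (L.head hne) := by rwa [hhead, hlast]
  refine ⟨_, p.cons hadj, (SimpleGraph.Walk.cons_isCycle_iff p hadj).2 ⟨hp, fun hmem ↦ ?_⟩, hlen⟩
  have := hp.length_eq_one_of_mem_edges (Sym2.eq_swap ▸ hmem)
  lia

lemma exists_isPathList_of_isHamiltonian [Fintype V] [DecidableEq V] (hG : G.IsHamiltonian)
    (hV : Fintype.card V ≠ 1) :
    ∃ P a b, IsPathList G P a b ∧ P.length = Fintype.card V ∧ G.Adj b a := by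
  obtain ⟨a, p, hp⟩ := hG hV
  have ht := hp.isHamiltonian_tail
  exact ⟨p.tail.support, p.snd, a, .support ht.isPath, ht.length_support,
    p.adj_snd hp.isCycle.not_nil⟩

lemma IsPathList.hasCycle_of_inter {L Z : List V} {p y : V} (hL : IsPathList G L p y)
    (hZ : IsPathList G Z y p) (hLlen : 2 ≤ L.length) (hZlen : 2 ≤ Z.length)
    (hlen : 5 ≤ L.length + Z.length) (hdisj : ∀ x ∈ L, x ∈ Z → x = p ∨ x = y) :
    HasCycle G (L.length + Z.length - 2) := by
  obtain ⟨c, L', rfl, hL', hpc, hpL'⟩ := hL.eq_cons_of_two_le_length hLlen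
  obtain ⟨d, Z', rfl, hZ', hyd, hyZ'⟩ := hZ.eq_cons_of_two_le_length hZlen
  have hconcat : IsPathList G (L' ++ Z') c p := hL'.append hZ' hyd fun x hxL hxZ ↦ by
    rcases hdisj x (.tail _ hxL) (.tail _ hxZ) with rfl | rfl
    exacts [hpL' hxL, hyZ' hxZ]
  simp only [List.length_cons] at hlen ⊢
  have hcycle := hconcat.hasCycle (by rw [List.length_append]; lia) hpc
  rw [List.length_append] at hcycle
  convert hcycle using 1
  lia

/-! ### Shortening paths -/

lemma IsPathList.shortcut {A M B : List V} {a b x y : V}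
    (h : IsPathList G (A ++ x :: (M ++ y :: B)) a b) (hxy : G.Adj x y) :
    IsPathList G (A ++ x :: y :: B) a b := by
  have hAx : IsPathList G ((A ++ [x]) ++ (M ++ y :: B)) a b := by simpa using h
  have hyB : IsPathList G ((A ++ x :: M) ++ y :: B) a b := by simpa using h
  have hdisj : (A ++ [x]).Disjoint (y :: B) := fun z hz hz' ↦
    hAx.disjoint hz (List.mem_append_right M hz')
  simpa using (hAx.left (by simp)).append (hyB.right rfl) hxy hdisj

lemma exists_eq_append_cons_of_lt {α : Type*} (L : List α) {i j : ℕ} (hij : i < j)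
    (hj : j < L.length) :
    ∃ A M B, L = A ++ L[i] :: (M ++ L[j] :: B) ∧ M.length + i + 1 = j := by
  refine ⟨L.take i, (L.drop (i + 1)).take (j - (i + 1)), L.drop (j + 1), ?_, by simp; lia⟩
  have hdrop : (L.drop (i + 1)).drop (j - (i + 1)) = L.drop j := by
    rw [List.drop_drop]
    congr 1
    lia
  rw [← List.drop_eq_getElem_cons hj, ← hdrop, List.take_append_drop,
    ← List.drop_eq_getElem_cons, List.take_append_drop]

-- The even positions `0, 2, …, 2k` carry a chord, and a chord between them skips some vertex.
lemma IsPathList.exists_shorter {k : ℕ} (hα : G.IndepSetFree (k + 1)) {Z : List V} {a b : V}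
    (hZ : IsPathList G Z a b) (hlen : 2 * k + 1 ≤ Z.length) :
    ∃ Z', IsPathList G Z' a b ∧ Z' ⊆ Z ∧ Z'.length < Z.length ∧
      Z.length < Z'.length + 2 * k := by
  have hlt (i : Fin (k + 1)) : 2 * (i : ℕ) < Z.length := by lia
  have hinj : Function.Injective fun i : Fin (k + 1) ↦ Z[2 * (i : ℕ)]'(hlt i) := fun i j hij ↦
    Fin.ext (Nat.eq_of_mul_eq_mul_left two_pos (hZ.nodup.getElem_inj_iff.1 hij))
  obtain ⟨i, -, j, -, hij, hadj⟩ := exists_lt_adj_of_lt_card hα hinj.injOn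
    (s := Finset.univ) (by simp)
  obtain ⟨A, M, B, hsplit, hM⟩ :=
    exists_eq_append_cons_of_lt Z (show 2 * (i : ℕ) < 2 * j by lia) (hlt j)
  have hlength := congrArg List.length hsplit
  simp only [List.length_append, List.length_cons] at hlength
  refine ⟨_, (hsplit ▸ hZ : IsPathList G _ a b).shortcut hadj, fun w hw ↦ ?_, ?_, ?_⟩
  · rw [hsplit]
    simp only [List.mem_append, List.mem_cons] at hw ⊢
    tauto
  all_goals simp only [List.length_append, List.length_cons]; lia

lemma IsPathList.exists_length_between {k : ℕ} (hα : G.IndepSetFree (k + 1)) (hk : 0 < k) {m : ℕ}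
    (hm : 2 * k + 1 ≤ m) {Z : List V} {a b : V} (hZ : IsPathList G Z a b) (hmZ : m ≤ Z.length) :
    ∃ Z', IsPathList G Z' a b ∧ Z' ⊆ Z ∧ Z'.length ≤ m ∧ m < Z'.length + 2 * k := by
  induction hn : Z.length using Nat.strong_induction_on generalizing Z with
  | _ n ih =>
    rcases hmZ.eq_or_lt with rfl | hlt
    · exact ⟨Z, hZ, List.Subset.refl Z, le_rfl, by lia⟩
    obtain ⟨Z₁, hZ₁, hsub, hshort, hlong⟩ := hZ.exists_shorter hα (by lia)
    rcases le_or_gt m Z₁.length with hmZ₁ | hmZ₁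
    · obtain ⟨Z', hZ', hsub', hbounds⟩ := ih Z₁.length (hn ▸ hshort) hZ₁ hmZ₁ rfl
      exact ⟨Z', hZ', List.Subset.trans hsub' hsub, hbounds⟩
    · exact ⟨Z₁, hZ₁, hsub, hmZ₁.le, by lia⟩

/-! ### Flexible sets -/

/-- `W` is a set of at most `2 r + 1` vertices which contains `x`-`y` paths of every length
between `r` and `2 r`. Such sets are built as chains of `r` triangles, consecutive ones sharing
a vertex, since each triangle can be crossed along one edge or along two. -/
structure IsFlexible (G : SimpleGraph V) (r : ℕ) (W : Finset V) (x y : V) : Prop where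
  card_le : #W ≤ 2 * r + 1
  exists_isPathList : ∀ s, r ≤ s → s ≤ 2 * r →
    ∃ L, IsPathList G L x y ∧ L.length = s + 1 ∧ ∀ z ∈ L, z ∈ W

namespace IsFlexible

variable {r : ℕ} {W : Finset V} {x y a b : V}

lemma singleton (x : V) : IsFlexible G 0 {x} x x where
  card_le := by rw [card_singleton]
  exists_isPathList s _ hs := ⟨[x], .single x, by simp; lia, by simp⟩

lemma left_mem (h : IsFlexible G r W x y) : x ∈ W := by
  obtain ⟨L, hL, -, hLW⟩ := h.exists_isPathList r le_rfl (by lia)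
  exact hLW x hL.head_mem

lemma right_mem (h : IsFlexible G r W x y) : y ∈ W := by
  obtain ⟨L, hL, -, hLW⟩ := h.exists_isPathList r le_rfl (by lia)
  exact hLW y hL.getLast_mem

lemma ne (h : IsFlexible G r W x y) (hr : 0 < r) : x ≠ y := by
  obtain ⟨L, hL, hlen, -⟩ := h.exists_isPathList r le_rfl (by lia)
  exact hL.ne (by lia)

lemma extend [DecidableEq V] (h : IsFlexible G r W x y) (ha : a ∉ W) (hb : b ∉ W)
    (hya : G.Adj y a) (hyb : G.Adj y b) (hab : G.Adj a b) :
    IsFlexible G (r + 1) (insert a (insert b W)) x b where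
  card_le := by
    have := h.card_le
    have := card_insert_le b W
    have := card_insert_le a (insert b W)
    lia
  exists_isPathList s hrs hsr := by
    rcases le_or_gt s (2 * r + 1) with hs | hs
    · obtain ⟨L, hL, hlen, hLW⟩ := h.exists_isPathList (s - 1) (by lia) (by lia)
      have hbL : b ∉ L := fun hbL ↦ hb (hLW b hbL)
      refine ⟨L ++ [b], hL.append (.single b) hyb (by simpa using hbL), by simp; lia, ?_⟩
      simp only [List.mem_append, List.mem_singleton, mem_insert]
      grind
    · obtain ⟨L, hL, hlen, hLW⟩ := h.exists_isPathList (2 * r) (by lia) le_rfl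
      have haL : a ∉ L := fun haL ↦ ha (hLW a haL)
      have hbL : b ∉ L := fun hbL ↦ hb (hLW b hbL)
      have hpair : IsPathList G [a, b] a b :=
        (IsPathList.single a).append (.single b) hab (by simpa using hab.ne')
      refine ⟨L ++ [a, b], hL.append hpair hya (by simp [haL, hbL]), by simp; lia, ?_⟩
      simp only [List.mem_append, List.mem_cons, mem_insert]
      grind

end IsFlexible

lemma exists_isFlexible {k : ℕ} (hα : G.IndepSetFree (k + 1)) {X : Finset V} {x : V} (hx : x ∈ X)
    (r : ℕ) (hdeg : ∀ v ∈ X, k + 2 * r ≤ #(neighborsIn G X v)) :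
    ∃ W ⊆ X, ∃ y, IsFlexible G r W x y := by
  classical
  induction r with
  | zero => exact ⟨{x}, singleton_subset_iff.2 hx, x, .singleton x⟩
  | succ r ih =>
    obtain ⟨W, hWX, y, hW⟩ := ih fun v hv ↦ by have := hdeg v hv; lia
    have hcard : k < #(neighborsIn G X y \ W) := by
      have := le_card_sdiff W (neighborsIn G X y)
      have := hdeg y (hWX hW.right_mem)
      have := hW.card_le
      lia
    obtain ⟨a, ha, b, hb, hab⟩ := exists_adj_of_lt_card hα hcard
    simp only [mem_sdiff, mem_neighborsIn] at ha hb
    obtain ⟨⟨haX, hya⟩, haW⟩ := ha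
    obtain ⟨⟨hbX, hyb⟩, hbW⟩ := hb
    exact ⟨insert a (insert b W), insert_subset haX (insert_subset hbX hWX), b,
      hW.extend haW hbW hya hyb hab⟩

/-! ### Cycles of intermediate length -/

lemma exists_first_split {α : Type*} {p : α → Prop} {L : List α} (h : ∃ x ∈ L, p x) :
    ∃ A x B, L = A ++ x :: B ∧ p x ∧ ∀ y ∈ A, ¬p y := by
  classical
  obtain ⟨x, hx⟩ := Option.isSome_iff_exists.1
    ((List.find?_isSome (xs := L) (p := (p ·))).2 (by simpa using h))
  obtain ⟨hpx, A, B, hL, hA⟩ := List.find?_eq_some_iff_append.1 hx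
  exact ⟨A, x, B, hL, by simpa using hpx, by simpa using hA⟩

lemma exists_last_split {α : Type*} {p : α → Prop} {L : List α} (h : ∃ x ∈ L, p x) :
    ∃ A x B, L = A ++ x :: B ∧ p x ∧ ∀ y ∈ B, ¬p y := by
  obtain ⟨A, x, B, hL, hx, hA⟩ := exists_first_split (p := p) (L := L.reverse) (by simpa using h)
  exact ⟨B.reverse, x, A.reverse, by simpa using congrArg List.reverse hL, hx, by simpa using hA⟩

-- `p` and `q` are the first and the last vertex of `U` along the cycle, cut open inside `B`.
lemma IsPathList.exists_long_return {A B : List V} {a b : V} (h : IsPathList G (A ++ B) a b)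
    (hba : G.Adj b a) (hB : B ≠ []) {U : Finset V} (hUA : ∀ x ∈ U, x ∈ A) (hU : 1 < #U) :
    ∃ p ∈ U, ∃ q ∈ U, p ≠ q ∧ ∃ c D, IsPathList G D c p ∧ G.Adj q c ∧ B.length < D.length ∧
      ∀ x ∈ D, x ∈ U → x = p := by
  obtain ⟨u, hu⟩ := card_pos.1 (zero_lt_one.trans hU)
  obtain ⟨P₁, p, T, rfl, hp, hP₁⟩ := exists_first_split ⟨u, hUA u hu, hu⟩
  obtain ⟨q', hq', hq'p⟩ := exists_mem_ne hU p
  have hq'T : q' ∈ T := by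
    have hq'A := hUA q' hq'
    simp only [List.mem_append, List.mem_cons] at hq'A
    exact (hq'A.resolve_left fun hq'P₁ ↦ hP₁ q' hq'P₁ hq').resolve_left hq'p
  obtain ⟨P₂, q, P₃, rfl, hq, hP₃⟩ := exists_last_split ⟨q', hq'T, hq'⟩
  have hcut : IsPathList G ((P₁ ++ [p]) ++ ((P₂ ++ [q]) ++ (P₃ ++ B))) a b := by simpa using h
  have hcut' : IsPathList G ((P₁ ++ [p] ++ (P₂ ++ [q])) ++ (P₃ ++ B)) a b := by
    simpa using hcut
  have hBU : ∀ x ∈ B, x ∉ U := fun x hxB hxU ↦ h.disjoint (hUA x hxU) hxB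
  obtain ⟨c, hc⟩ : ∃ c, (P₃ ++ B).head? = some c :=
    ⟨_, List.head?_eq_some_head (List.append_ne_nil_of_right_ne_nil _ hB)⟩
  have hpq : p ≠ q := by
    rintro rfl
    exact hcut.disjoint (List.mem_append_right P₁ (.head [])) (by simp)
  refine ⟨p, hp, q, hq, hpq, c, (P₃ ++ B) ++ (P₁ ++ [p]),
    (hcut'.right hc).append (hcut.left (by simp)) hba fun x hx hx' ↦
      hcut'.disjoint (List.mem_append_left _ hx') hx,
    hcut'.adj_of_append (by rw [← List.append_assoc, List.getLast?_concat]) hc, by simp; lia,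
    fun x hx hxU ↦ ?_⟩
  simp only [List.mem_append, List.mem_singleton] at hx
  rcases hx with (hx | hx) | hx | hx
  exacts [absurd hxU (hP₃ x hx), absurd hxU (hBU x hx), absurd hxU (hP₁ x hx), hx]

lemma IsMinRich.exists_isPathList_append {M : ℕ} {U W : Finset V} (hU : IsMinRich G M U)
    (hWU : W ⊆ U) (hWM : 2 * #W ≤ M) {p q c y : V} {D : List V} (hp : p ∈ W) (hqU : q ∈ U)
    (hqW : q ∉ W) (hy : y ∈ W) (hpy : p ≠ y) (hD : IsPathList G D c p) (hqc : G.Adj q c)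
    (hDU : ∀ x ∈ D, x ∈ U → x = p) :
    ∃ Z, IsPathList G Z y p ∧ D.length ≤ Z.length ∧ ∀ x ∈ Z, x ∈ W → x = p ∨ x = y := by
  classical
  obtain ⟨C, hC, hCU⟩ := hU.exists_isPathList (X := W.erase y) ((erase_subset _ _).trans hWU)
    (by have := card_erase_le (s := W) (a := y); lia) (a := y) (b := q)
    (by simp [hWU hy]) (by simp [hqU, hqW])
  have hCU' : ∀ x ∈ C, x ∈ U ∧ (x ∈ W → x = y) := fun x hx ↦ by
    have := hCU x hx
    simp only [mem_sdiff, mem_erase] at this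
    tauto
  have hdisj : C.Disjoint D := fun x hxC hxD ↦ by
    obtain rfl := hDU x hxD (hCU' x hxC).1
    exact hpy ((hCU' x hxC).2 hp)
  refine ⟨C ++ D, hC.append hD hqc hdisj, by simp, fun x hx hxW ↦ ?_⟩
  rcases List.mem_append.1 hx with hx | hx
  exacts [.inr ((hCU' x hx).2 hxW), .inl (hDU x hx (hWU hxW))]

lemma IsPathList.hasCycle_of_isMinRich {k M : ℕ} (hα : G.IndepSetFree (k + 1)) (hk : 0 < k)
    {A B : List V} {a b : V} (h : IsPathList G (A ++ B) a b) (hba : G.Adj b a) {U : Finset V}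
    (hU : IsMinRich G M U) (hUA : ∀ x ∈ U, x ∈ A) (hM : 20 * k ≤ M) {ℓ : ℕ} (hkℓ : 4 * k ≤ ℓ)
    (hℓB : ℓ < B.length) : HasCycle G ℓ := by
  classical
  have hdeg : ∀ v ∈ U, 9 * k ≤ #(neighborsIn G U v) := fun v hv ↦ by
    have := hU.le_two_mul_card_neighborsIn hv
    lia
  obtain ⟨u, hu⟩ := hU.prop.1
  have hcard : 1 < #U := by
    have := hdeg u hu
    have := card_le_card (neighborsIn_subset (G := G) U u)
    lia
  have hB : B ≠ [] := by rintro rfl; simp at hℓB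
  obtain ⟨p, hp, q, hq, hpq, c, D, hD, hqc, hBD, hDU⟩ := h.exists_long_return hba hB hUA hcard
  obtain ⟨W, hWU, y, hW⟩ := exists_isFlexible hα (mem_erase.2 ⟨hpq, hp⟩) (2 * k) fun v hv ↦ by
    have hsub : (neighborsIn G U v).erase q ⊆ neighborsIn G (U.erase q) v := fun x hx ↦ by
      simp only [mem_erase, mem_neighborsIn] at hx ⊢
      tauto
    have := card_le_card hsub
    have := pred_card_le_card_erase (s := neighborsIn G U v) (a := q)
    have := hdeg v (mem_of_mem_erase hv)
    lia
  have hWcard := hW.card_le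
  obtain ⟨Z, hZ, hDZ, hZW⟩ := hU.exists_isPathList_append (hWU.trans (erase_subset q U))
    (by lia) hW.left_mem hq (fun hqW ↦ notMem_erase q U (hWU hqW)) hW.right_mem
    (hW.ne (by lia)) hD hqc hDU
  obtain ⟨Z', hZ', hsub, hle, hlt⟩ :=
    hZ.exists_length_between hα hk (m := ℓ + 1 - 2 * k) (by lia) (by lia)
  obtain ⟨L, hL, hlen, hLW⟩ := hW.exists_isPathList (ℓ + 1 - Z'.length) (by lia) (by lia)
  have hcycle := hL.hasCycle_of_inter hZ' (by lia) (by lia) (by lia) fun x hxL hxZ ↦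
    hZW x (hsub hxZ) (hLW x hxL)
  convert hcycle using 1
  lia

/-! ### Short cycles -/

/-- The vertices at distance at most `i` from `v` in the subgraph induced by `U`. -/
noncomputable def ball (G : SimpleGraph V) (U : Finset V) (v : V) (i : ℕ) : Finset V :=
  (closedNhdIn G U)^[i] {v}

open Classical in
/-- The vertices at distance exactly `i` from `v` in the subgraph induced by `U`. -/
noncomputable def layer (G : SimpleGraph V) (U : Finset V) (v : V) : ℕ → Finset V
  | 0 => {v}
  | i + 1 => ball G U v (i + 1) \ ball G U v i

section Layers

variable {U : Finset V} {v x y : V}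

@[simp]
lemma ball_zero : ball G U v 0 = {v} := rfl

lemma ball_succ (i : ℕ) : ball G U v (i + 1) = closedNhdIn G U (ball G U v i) :=
  Function.iterate_succ_apply' _ _ _

lemma ball_subset_ball_succ (i : ℕ) : ball G U v i ⊆ ball G U v (i + 1) :=
  ball_succ (G := G) i ▸ subset_closedNhdIn U _

lemma ball_subset (hv : v ∈ U) (i : ℕ) : ball G U v i ⊆ U := by
  induction i with
  | zero => exact singleton_subset_iff.2 hv
  | succ i ih => exact ball_succ (G := G) i ▸ closedNhdIn_subset ih

lemma mem_layer_succ {i : ℕ} :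
    x ∈ layer G U v (i + 1) ↔ x ∈ ball G U v (i + 1) ∧ x ∉ ball G U v i := by
  classical exact mem_sdiff

lemma layer_subset_ball (i : ℕ) : layer G U v i ⊆ ball G U v i := by
  cases i with
  | zero => exact Subset.rfl
  | succ i => exact fun x hx ↦ (mem_layer_succ.1 hx).1

lemma exists_mem_layer_adj {i : ℕ} (hx : x ∈ layer G U v (i + 1)) :
    ∃ w ∈ layer G U v i, G.Adj w x := by
  obtain ⟨hx, hx'⟩ := mem_layer_succ.1 hx
  rw [ball_succ, mem_closedNhdIn] at hx
  obtain ⟨w, hw, hxU, hwx⟩ := hx.resolve_left hx'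
  refine ⟨w, ?_, hwx⟩
  cases i with
  | zero => exact hw
  | succ i =>
    refine mem_layer_succ.2 ⟨hw, fun hw' ↦ hx' ?_⟩
    rw [ball_succ]
    exact mem_closedNhdIn.2 (.inr ⟨w, hw', hxU, hwx⟩)

lemma IsPathList.cons_concat_of_mem_layer {i : ℕ} {w w' : V} {Q : List V}
    (hQ : IsPathList G Q w w') (hQb : ∀ z ∈ Q, z ∈ ball G U v i) (hx : x ∈ layer G U v (i + 1))
    (hy : y ∈ layer G U v (i + 1)) (hxy : x ≠ y) (hwx : G.Adj w x) (hwy : G.Adj w' y) :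
    IsPathList G (x :: (Q ++ [y])) x y := by
  have hxQ : x ∉ Q := fun h ↦ (mem_layer_succ.1 hx).2 (hQb x h)
  have hyQ : y ∉ Q := fun h ↦ (mem_layer_succ.1 hy).2 (hQb y h)
  exact (IsPathList.single x).append (hQ.append (.single y) hwy (by simpa using hyQ)) hwx.symm
    (by simp [hxQ, hxy])

-- The two branches towards `v` are followed only until they meet.
lemma exists_isPathList_subset_ball {i : ℕ} (hx : x ∈ layer G U v i) (hy : y ∈ layer G U v i) :
    ∃ h Q, h ≤ i ∧ IsPathList G Q x y ∧ Q.length = 2 * h + 1 ∧ ∀ z ∈ Q, z ∈ ball G U v i := by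
  induction i generalizing x y with
  | zero =>
    obtain rfl := mem_singleton.1 hx
    obtain rfl := mem_singleton.1 hy
    exact ⟨0, [y], le_rfl, .single y, rfl, by simp⟩
  | succ i ih =>
    rcases eq_or_ne x y with rfl | hxy
    · exact ⟨0, [x], Nat.zero_le _, .single x, rfl, by simpa using layer_subset_ball _ hx⟩
    obtain ⟨w, hw, hwx⟩ := exists_mem_layer_adj hx
    obtain ⟨w', hw', hwy⟩ := exists_mem_layer_adj hy
    obtain ⟨h, Q, hhi, hQ, hlen, hQb⟩ := ih hw hw'
    refine ⟨h + 1, _, by lia, hQ.cons_concat_of_mem_layer hQb hx hy hxy hwx hwy,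
      by simp [hlen]; lia, ?_⟩
    have hsub := ball_subset_ball_succ (G := G) (U := U) (v := v) i
    have hlayer := layer_subset_ball (G := G) (U := U) (v := v) (i + 1)
    simp only [List.mem_cons, List.mem_append, List.not_mem_nil, or_false]
    rintro z (rfl | hz | rfl)
    exacts [hlayer hx, hsub (hQb z hz), hlayer hy]

lemma exists_isPathList_of_mem_layer {i : ℕ} (hx : x ∈ layer G U v (i + 1))
    (hy : y ∈ layer G U v (i + 1)) (hxy : x ≠ y) :
    ∃ h Q, 1 ≤ h ∧ h ≤ i + 1 ∧ IsPathList G Q x y ∧ Q.length = 2 * h + 1 ∧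
      ∀ z ∈ Q, z = x ∨ z = y ∨ z ∈ ball G U v i := by
  obtain ⟨w, hw, hwx⟩ := exists_mem_layer_adj hx
  obtain ⟨w', hw', hwy⟩ := exists_mem_layer_adj hy
  obtain ⟨h, Q, hhi, hQ, hlen, hQb⟩ := exists_isPathList_subset_ball hw hw'
  refine ⟨h + 1, _, by lia, by lia, hQ.cons_concat_of_mem_layer hQb hx hy hxy hwx hwy,
    by simp [hlen]; lia, ?_⟩
  simp only [List.mem_cons, List.mem_append, List.not_mem_nil, or_false]
  rintro z (rfl | hz | rfl)
  exacts [.inl rfl, .inr (.inr (hQb z hz)), .inr (.inl rfl)]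

lemma card_ball_le {R i : ℕ}
    (h : ∀ j < i, #(layer G U v (j + 1)) ≤ R * indepNumOn G (layer G U v (j + 1))) :
    #(ball G U v i) ≤ 1 + i * (R * indepNumOn G (ball G U v i)) := by
  classical
  induction i with
  | zero => simp
  | succ i ih =>
    have hball := ih fun j hj ↦ h j (by lia)
    have hlayer := h i (by lia)
    have hmono : R * indepNumOn G (ball G U v i) ≤ R * indepNumOn G (ball G U v (i + 1)) :=
      Nat.mul_le_mul_left R (indepNumOn_mono (ball_subset_ball_succ i))
    have hmono' : R * indepNumOn G (layer G U v (i + 1)) ≤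
        R * indepNumOn G (ball G U v (i + 1)) :=
      Nat.mul_le_mul_left R (indepNumOn_mono (layer_subset_ball (i + 1)))
    have hcard : #(layer G U v (i + 1)) + #(ball G U v i) = #(ball G U v (i + 1)) := by
      rw [← card_sdiff_add_card_eq_card (ball_subset_ball_succ (G := G) (U := U) i)]
      congr! 2
    nlinarith

lemma one_le_indepNumOn_ball (i : ℕ) : 1 ≤ indepNumOn G (ball G U v i) := by
  induction i with
  | zero => exact card_le_indepNumOn (s := {v}) (by simp [SimpleGraph.IsIndepSet]) Subset.rfl
  | succ i ih => exact ih.trans (indepNumOn_mono (ball_subset_ball_succ i))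

namespace IsMinRich

variable {M : ℕ}

lemma mul_indepNumOn_ball_le (hU : IsMinRich G M U) (hv : v ∈ U) (i : ℕ) :
    M * indepNumOn G (ball G U v i) ≤ 2 * #(ball G U v (i + 1)) := by
  obtain ⟨I, hI, hind, hcard⟩ := exists_isIndepSet_card_eq_indepNumOn G (ball G U v i)
  calc
    M * indepNumOn G (ball G U v i) ≤ 2 * #(closedNhdIn G U I) :=
      hcard ▸ hU.mul_card_le_two_mul_card_closedNhdIn hind (hI.trans (ball_subset hv i))
    _ ≤ 2 * #(ball G U v (i + 1)) := by
      rw [ball_succ]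
      exact Nat.mul_le_mul_left 2 (card_le_card (closedNhdIn_mono hI))

-- Otherwise the independence number of the balls grows by a factor `t` in each of `d` steps.
lemma exists_layer_mul_indepNumOn_lt {d k R t : ℕ} (hα : G.IndepSetFree (k + 1))
    (hU : IsMinRich G M U) (hv : v ∈ U) (hR : 0 < R) (ht : k < t ^ d) (hM : 4 * d * R * t ≤ M) :
    ∃ i < d, R * indepNumOn G (layer G U v (i + 1)) < #(layer G U v (i + 1)) := by
  by_contra! hthin
  set a : ℕ → ℕ := fun i ↦ indepNumOn G (ball G U v i)
  have hgrow : ∀ i < d, t * a i ≤ a (i + 1) := fun i hi ↦ by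
    have hexpand : M * a i ≤ 2 * #(ball G U v (i + 1)) := hU.mul_indepNumOn_ball_le hv i
    have hball : #(ball G U v (i + 1)) ≤ 1 + (i + 1) * (R * a (i + 1)) :=
      card_ball_le fun j hj ↦ hthin j (by lia)
    have hpos : 1 ≤ R * a (i + 1) := Nat.mul_pos hR (one_le_indepNumOn_ball (i + 1))
    have hid : (i + 1) * (R * a (i + 1)) ≤ d * (R * a (i + 1)) := Nat.mul_le_mul_right _ hi
    have : 1 ≤ d * (R * a (i + 1)) := Nat.mul_pos (by lia) hpos
    have hdR : 0 < 4 * d * R := Nat.mul_pos (by lia) hR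
    refine le_of_mul_le_mul_left ?_ hdR
    calc
      4 * d * R * (t * a i) = 4 * d * R * t * a i := by ring
      _ ≤ M * a i := Nat.mul_le_mul_right _ hM
      _ ≤ 4 * (d * (R * a (i + 1))) := by lia
      _ = 4 * d * R * a (i + 1) := by ring
  have hpow : ∀ i ≤ d, t ^ i ≤ a i := fun i ↦ by
    induction i with
    | zero => exact fun _ ↦ one_le_indepNumOn_ball 0
    | succ i ih =>
      intro hi
      calc
        t ^ (i + 1) = t * t ^ i := by ring
        _ ≤ t * a i := Nat.mul_le_mul_left _ (ih (by lia))
        _ ≤ a (i + 1) := hgrow i hi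
  exact (ht.trans_le ((hpow d le_rfl).trans (indepNumOn_le hα _))).false

lemma hasCycle_of_pow {d k t : ℕ} (hα : G.IndepSetFree (k + 1)) (hk : 0 < k)
    (hU : IsMinRich G M U) (ht : k < t ^ d) (hM : 48 * k * d * t ≤ M) {ℓ : ℕ} (hdℓ : 4 * d ≤ ℓ)
    (hℓk : ℓ ≤ 4 * k) : HasCycle G ℓ := by
  obtain ⟨v, hv⟩ := hU.prop.1
  obtain ⟨i, hi, hlayer⟩ := hU.exists_layer_mul_indepNumOn_lt hα hv (R := 12 * k) (by lia) ht
    (by linarith)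
  have hrich : IsRich G (12 * k) (layer G U v (i + 1)) :=
    ⟨card_pos.1 (by lia), by linarith⟩
  obtain ⟨X, hX, hXrich⟩ := hrich.exists_isMinRich_subset
  obtain ⟨x, hx⟩ := hXrich.prop.1
  obtain ⟨W, hWX, y, hW⟩ := exists_isFlexible hα hx (ℓ / 2) fun v hv ↦ by
    have := hXrich.le_two_mul_card_neighborsIn hv
    lia
  obtain ⟨h, Q, hh, hhi, hQ, hQlen, hQb⟩ :=
    exists_isPathList_of_mem_layer (hX hx) (hX (hWX hW.right_mem)) (hW.ne (by lia))
  obtain ⟨L, hL, hLlen, hLW⟩ := hW.exists_isPathList (ℓ - 2 * h) (by lia) (by lia)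
  have hcycle := hL.hasCycle_of_inter hQ.reverse (by lia) (by simp; lia) (by simp; lia)
    fun z hzL hzQ ↦ by
      rcases hQb z (List.mem_reverse.1 hzQ) with hz | hz | hz
      exacts [.inl hz, .inr hz, absurd hz (mem_layer_succ.1 (hX (hWX (hLW z hzL)))).2]
  convert hcycle using 1
  rw [List.length_reverse]
  lia

end IsMinRich

end Layers

lemma exists_isPathList_length_eq {X : Finset V} (m : ℕ) (hX : X.Nonempty)
    (hdeg : ∀ v ∈ X, m ≤ #(neighborsIn G X v)) :
    ∃ L a b, IsPathList G L a b ∧ L.length = m + 1 ∧ ∀ x ∈ L, x ∈ X := by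
  classical
  induction m with
  | zero =>
    obtain ⟨x, hx⟩ := hX
    exact ⟨[x], x, x, .single x, rfl, by simpa using hx⟩
  | succ m ih =>
    obtain ⟨L, a, b, hL, hlen, hLX⟩ := ih fun v hv ↦ (Nat.le_succ m).trans (hdeg v hv)
    have hcard : #(L.toFinset.erase b) < #(neighborsIn G X b) := by
      rw [card_erase_of_mem (List.mem_toFinset.2 hL.getLast_mem),
        List.toFinset_card_of_nodup hL.nodup, hlen]
      exact hdeg b (hLX b hL.getLast_mem)
    obtain ⟨c, hc, hcL⟩ := exists_mem_notMem_of_card_lt_card hcard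
    obtain ⟨hcX, hbc⟩ := mem_neighborsIn.1 hc
    have hcL' : c ∉ L := fun h ↦ hcL (mem_erase.2 ⟨hbc.ne', List.mem_toFinset.2 h⟩)
    refine ⟨L ++ [c], a, c, hL.append (.single c) hbc (by simpa using hcL'), by simp [hlen], ?_⟩
    simpa [or_imp, forall_and] using ⟨hLX, hcX⟩

-- A path inside the neighbourhood of a vertex `v` closes up through `v`.
lemma IsMinRich.hasCycle_of_mul_le {k M : ℕ} (hα : G.IndepSetFree (k + 1)) {U : Finset V}
    (hU : IsMinRich G M U) {ℓ : ℕ} (hℓ : 3 ≤ ℓ) (hk : 0 < k) (hM : 4 * ℓ * k ≤ M) :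
    HasCycle G ℓ := by
  obtain ⟨v, hv⟩ := hU.prop.1
  have hdeg := hU.le_two_mul_card_neighborsIn hv
  have hkℓ : ℓ ≤ ℓ * k := Nat.le_mul_of_pos_right ℓ hk
  have hrich : IsRich G (2 * ℓ) (neighborsIn G U v) :=
    isRich_of_mul_le hα (card_pos.1 (by lia)) (by linarith)
  obtain ⟨X, hX, hXrich⟩ := hrich.exists_isMinRich_subset
  obtain ⟨L, a, b, hL, hlen, hLX⟩ := exists_isPathList_length_eq (G := G) (ℓ - 2) hXrich.prop.1
    fun x hx ↦ by
      have := hXrich.le_two_mul_card_neighborsIn hx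
      lia
  have hadj : ∀ x ∈ L, G.Adj v x := fun x hx ↦ (mem_neighborsIn.1 (hX (hLX x hx))).2
  have hvL : v ∉ L := fun h ↦ G.irrefl (hadj v h)
  have hpath := (IsPathList.single v).append hL (hadj a hL.head_mem) (by simpa using hvL)
  convert hpath.hasCycle (by simp; lia) (hadj b hL.getLast_mem).symm using 1
  simp only [List.length_append, List.length_singleton, hlen]
  lia

/-! ### Rotations and insertions -/

/-- A pivot for `b` on a path `L`: cutting `L` into `A`, `S`, `T` with `S` ending in `z`, the
vertex `b` is adjacent to the last vertices of `A` and `S`, and the first vertices of `S` and `T`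
are adjacent. This is what a Pósa rotation at `b`, or the insertion of `b` into `L`, requires. -/
def IsPivot (G : SimpleGraph V) (L : List V) (b z : V) : Prop :=
  ∃ (A S T : List V) (x s t : V), L = A ++ (S ++ T) ∧ A.getLast? = some x ∧
    S.head? = some s ∧ S.getLast? = some z ∧ T.head? = some t ∧
    G.Adj b x ∧ G.Adj b z ∧ G.Adj s t

open Classical in
/-- The pivots for `b` on `L`. -/
noncomputable def pivots (G : SimpleGraph V) (L : List V) (b : V) : Finset V :=
  {z ∈ L.toFinset | IsPivot G L b z}

lemma mem_pivots {L : List V} {b z : V} : z ∈ pivots G L b ↔ z ∈ L ∧ IsPivot G L b z := by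
  simp only [pivots, mem_filter, List.mem_toFinset]

namespace IsPivot

variable {L B : List V} {a b e v z : V}

lemma adj (h : IsPivot G L b z) : G.Adj b z := by
  obtain ⟨_, _, _, _, _, _, -, -, -, -, -, -, h, -⟩ := h
  exact h

lemma append_right (h : IsPivot G L b z) (B : List V) : IsPivot G (L ++ B) b z := by
  obtain ⟨A, S, T, x, s, t, rfl, hA, hS, hS', hT, hbx, hbz, hst⟩ := h
  exact ⟨A, S, T ++ B, x, s, t, by simp only [List.append_assoc], hA, hS, hS',
    by rw [List.head?_append, hT, Option.some_or], hbx, hbz, hst⟩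

lemma of_lt {i j : ℕ} (hij : i < j) (hj : j + 1 < L.length) (hi' : G.Adj b L[i])
    (hj' : G.Adj b L[j]) (hadj : G.Adj L[i + 1] L[j + 1]) : IsPivot G L b L[j] := by
  have hdrop : L.drop (j + 1) = (L.drop (i + 1)).drop (j - i) := by
    rw [List.drop_drop]
    congr 1
    lia
  refine ⟨L.take (i + 1), (L.drop (i + 1)).take (j - i), L.drop (j + 1), L[i], L[i + 1],
    L[j + 1], ?_, ?_, ?_, ?_, ?_, hi', hj', hadj⟩
  · rw [hdrop, List.take_append_drop, List.take_append_drop]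
  · simp [List.getLast?_take]
  · rw [List.head?_take, if_neg (by lia), List.head?_drop, List.getElem?_eq_getElem]
  · have hj'' : i + 1 + (j - i - 1) = j := by lia
    rw [List.getLast?_take, if_neg (by lia), List.getElem?_drop, hj'',
      List.getElem?_eq_getElem (by lia), Option.some_or]
  · rw [List.head?_drop, List.getElem?_eq_getElem]

lemma exists_isPathList (h : IsPivot G L b z) (hL : IsPathList G L a e) :
    ∃ A S T x s t, L = A ++ (S ++ T) ∧ IsPathList G A a x ∧ IsPathList G S s z ∧
      IsPathList G T t e ∧ G.Adj b x ∧ G.Adj b z ∧ G.Adj s t := by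
  obtain ⟨A, S, T, x, s, t, rfl, hA, hS, hS', hT, hadj⟩ := h
  have hST := hL.right (B := S ++ T) (y := s) (by rw [List.head?_append, hS, Option.some_or])
  exact ⟨A, S, T, x, s, t, rfl, hL.left hA, hST.left hS', hST.right hT, hadj⟩

lemma exists_rotation (h : IsPivot G L b z) (hL : IsPathList G L a b) :
    ∃ L', L'.Perm L ∧ IsPathList G L' a z := by
  obtain ⟨A, S, T, x, s, t, rfl, hA, hS, hT, hbx, -, hst⟩ := h.exists_isPathList hL
  have hperm : (A ++ (T.reverse ++ S)).Perm (A ++ (S ++ T)) :=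
    (((List.reverse_perm T).append_right S).trans List.perm_append_comm).append_left A
  have hnodup := hperm.nodup_iff.2 hL.nodup
  exact ⟨_, hperm, hA.append
    (hT.reverse.append hS hst.symm (List.disjoint_of_nodup_append hnodup.of_append_right))
    hbx.symm (List.disjoint_of_nodup_append hnodup)⟩

lemma exists_insertion (h : IsPivot G L v z) (hL : IsPathList G L a b) (hv : v ∉ L) :
    ∃ L', L'.Perm (v :: L) ∧ IsPathList G L' a b := by
  obtain ⟨A, S, T, x, s, t, rfl, hA, hS, hT, hvx, hvz, hst⟩ := h.exists_isPathList hL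
  have hperm : (A ++ ([v] ++ (S.reverse ++ T))).Perm (v :: (A ++ (S ++ T))) :=
    List.perm_middle.trans ((((List.reverse_perm S).append_right T).append_left A).cons v)
  have hnodup := hperm.nodup_iff.2 (List.nodup_cons.2 ⟨hv, hL.nodup⟩)
  exact ⟨_, hperm, hA.append
    ((IsPathList.single v).append
      (hS.reverse.append hT hst
        (List.disjoint_of_nodup_append hnodup.of_append_right.of_append_right))
      hvz (List.disjoint_of_nodup_append hnodup.of_append_right))
    hvx.symm (List.disjoint_of_nodup_append hnodup)⟩

end IsPivot

-- If `b` has more than `k` neighbours on `L` with a successor on `L`, then two of the successors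
-- are adjacent, which makes the later neighbour a pivot.
lemma card_neighborsIn_le_card_pivots [DecidableEq V] {k : ℕ} (hα : G.IndepSetFree (k + 1))
    {L : List V} (hL : L.Nodup) (b : V) :
    #(neighborsIn G L.toFinset b) ≤ #(pivots G L b) + (k + 1) := by
  by_contra! hcon
  set D := neighborsIn G L.toFinset b \ pivots G L b
  have hDL : ∀ z ∈ D, z ∈ L := fun z hz ↦
    List.mem_toFinset.1 (mem_neighborsIn.1 (mem_sdiff.1 hz).1).1
  set s := (D.image L.idxOf).erase (L.length - 1)
  have hscard : k < #s := by
    have hDcard := le_card_sdiff (pivots G L b) (neighborsIn G L.toFinset b)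
    have himage : #(D.image L.idxOf) = #D :=
      card_image_of_injOn fun x hx y _ hxy ↦ (List.idxOf_inj (hDL x hx)).1 hxy
    have herase := pred_card_le_card_erase (s := D.image L.idxOf) (a := L.length - 1)
    lia
  have hmem : ∀ i ∈ s, ∃ hi : i + 1 < L.length, L[i] ∈ D := fun i hi ↦ by
    obtain ⟨hne, hi⟩ := mem_erase.1 hi
    obtain ⟨z, hz, rfl⟩ := mem_image.1 hi
    have hlt := List.idxOf_lt_length_of_mem (hDL z hz)
    exact ⟨by lia, by rwa [List.getElem_idxOf]⟩
  obtain ⟨i, hi, j, hj, hij, hadj⟩ := exists_lt_adj_of_lt_card hα (s := s)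
    (f := fun i ↦ L.getD (i + 1) b) (fun i hi j hj hij ↦ by
      obtain ⟨hi, -⟩ := hmem i hi
      obtain ⟨hj, -⟩ := hmem j hj
      simp only [List.getD_eq_getElem _ _ hi, List.getD_eq_getElem _ _ hj] at hij
      have := hL.getElem_inj_iff.1 hij
      lia) hscard
  obtain ⟨hi, hiD⟩ := hmem i hi
  obtain ⟨hj, hjD⟩ := hmem j hj
  simp only [List.getD_eq_getElem _ _ hi, List.getD_eq_getElem _ _ hj] at hadj
  obtain ⟨hjb, hjp⟩ := mem_sdiff.1 hjD
  exact hjp (mem_pivots.2 ⟨hDL _ hjD, .of_lt hij hj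
    (mem_neighborsIn.1 (mem_sdiff.1 hiD).1).2 (mem_neighborsIn.1 hjb).2 hadj⟩)

lemma neighborsIn_mono {U W : Finset V} (hUW : U ⊆ W) (v : V) :
    neighborsIn G U v ⊆ neighborsIn G W v := fun _ hx ↦
  mem_neighborsIn.2 ⟨hUW (mem_neighborsIn.1 hx).1, (mem_neighborsIn.1 hx).2⟩

lemma IsPathList.exists_insert_forall [DecidableEq V] {k : ℕ} (hα : G.IndepSetFree (k + 1))
    {L J : List V} {a b : V} (hL : IsPathList G L a b) (hJ : (J ++ L).Nodup)
    (hdeg : ∀ v ∈ J, k + 2 ≤ #(neighborsIn G L.toFinset v)) :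
    ∃ L', L'.Perm (J ++ L) ∧ IsPathList G L' a b := by
  induction J with
  | nil => exact ⟨L, .rfl, hL⟩
  | cons v J ih =>
    obtain ⟨hv, hJ⟩ := List.nodup_cons.1 hJ
    obtain ⟨L', hperm, hL'⟩ := ih hJ fun w hw ↦ hdeg w (.tail v hw)
    have hsub : L.toFinset ⊆ L'.toFinset := fun x hx ↦ List.mem_toFinset.2
      (hperm.mem_iff.2 (List.mem_append_right J (List.mem_toFinset.1 hx)))
    have hcard := card_neighborsIn_le_card_pivots hα hL'.nodup v
    obtain ⟨z, hz⟩ : (pivots G L' v).Nonempty := card_pos.1 (by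
      have := (hdeg v List.mem_cons_self).trans (card_le_card (neighborsIn_mono hsub v))
      lia)
    obtain ⟨L'', hperm', hL''⟩ :=
      (mem_pivots.1 hz).2.exists_insertion hL' fun h ↦ hv (hperm.mem_iff.1 h)
    exact ⟨L'', hperm'.trans (hperm.cons v), hL''⟩

/-! ### Long cycles -/

/-- A decomposition `pre, left, mid, right, post` of a path around a short stretch `mid`. -/
structure Gap (V : Type*) where
  /-- The vertices before `left`. -/
  pre : List V
  /-- The vertex just before the stretch. -/
  left : V
  /-- The stretch of vertices to be skipped. -/
  mid : List V
  /-- The vertex just after the stretch. -/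
  right : V
  /-- The vertices after `right`. -/
  post : List V

namespace Gap

/-- The path decomposed by a gap. -/
def toList (g : Gap V) : List V :=
  g.pre ++ g.left :: (g.mid ++ g.right :: g.post)

/-- The same decomposition, with the path read backwards. -/
def reverse (g : Gap V) : Gap V :=
  ⟨g.post.reverse, g.right, g.mid.reverse, g.left, g.pre.reverse⟩

/-- For gaps of the same path: `g'` starts after the end of `g`. -/
def Precedes (g g' : Gap V) : Prop :=
  g.pre.length + g.mid.length + 1 < g'.pre.length

lemma toList_reverse (g : Gap V) : g.reverse.toList = g.toList.reverse := by
  simp only [toList, reverse, List.reverse_append, List.reverse_cons, List.append_assoc,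
    List.cons_append, List.nil_append]

lemma length_toList (g : Gap V) :
    g.toList.length = g.pre.length + g.mid.length + g.post.length + 2 := by
  simp only [toList, List.length_append, List.length_cons]
  lia

lemma Precedes.reverse {g g' : Gap V} (h : g.Precedes g') (hlist : g.toList = g'.toList) :
    g'.reverse.Precedes g.reverse := by
  have hlen := congrArg List.length hlist
  rw [length_toList, length_toList] at hlen
  simp only [Precedes, Gap.reverse, List.length_reverse] at h ⊢
  lia

lemma Precedes.exists_pre_eq {g g' : Gap V} (h : g.Precedes g') (hlist : g.toList = g'.toList) :
    ∃ E, g'.pre = g.pre ++ g.left :: (g.mid ++ g.right :: E) := by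
  have hpre : g.pre ++ g.left :: (g.mid ++ [g.right]) <+: g'.toList :=
    ⟨g.post, by rw [← hlist]; simp [toList]⟩
  obtain ⟨E, hE⟩ := List.prefix_of_prefix_length_le hpre (List.prefix_append g'.pre _) (by
    simp only [Precedes, List.length_append, List.length_cons, List.length_nil] at h ⊢
    lia)
  exact ⟨E, by simp [← hE]⟩

end Gap

/-- A rerouting of the part of a path before a gap `g`: a path starting at `a` and ending at `w`,
through the same vertices, such that `w` is adjacent to `g.left` and a rotation at `g.right` can
move its end to `w'`. -/
def IsReroute (G : SimpleGraph V) (g : Gap V) (a w w' : V) : Prop :=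
  ∃ Y : List V, Y.Perm (g.pre ++ [g.left]) ∧ IsPathList G Y a w ∧ G.Adj g.left w ∧
    IsPivot G Y g.right w'

lemma IsPathList.exists_skip {A I B I' C Y : List V} {a b w w' l r r' : V}
    (hP : IsPathList G (A ++ (I ++ (B ++ (I' ++ C)))) a b) (hYA : Y.Perm A)
    (hY : IsPathList G Y a w) (hBr : B.head? = some r) (hBl : B.getLast? = some l)
    (hC : C.head? = some r') (hlw : G.Adj l w) (hpivot : IsPivot G Y r w') (hrw : G.Adj r' w') :
    ∃ K, (I ++ I' ++ K).Perm (A ++ (I ++ (B ++ (I' ++ C)))) ∧ IsPathList G K a b := by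
  have hPB : IsPathList G ((A ++ I) ++ (B ++ (I' ++ C))) a b := by
    simpa only [List.append_assoc] using hP
  have hPC : IsPathList G ((A ++ (I ++ (B ++ I'))) ++ C) a b := by
    simpa only [List.append_assoc] using hP
  have hBpath : IsPathList G B r l :=
    (hPB.right (by rw [List.head?_append, hBr, Option.some_or])).left hBl
  have hYB : Y.Disjoint B.reverse := fun x hx hx' ↦ hP.disjoint (hYA.mem_iff.1 hx)
    (List.mem_append_right I (List.mem_append_left _ (List.mem_reverse.1 hx')))
  obtain ⟨Z, hZperm, hZ⟩ := (hpivot.append_right B.reverse).exists_rotation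
    (hY.append hBpath.reverse hlw.symm hYB)
  have hZperm' : Z.Perm (A ++ B) := hZperm.trans (hYA.append (List.reverse_perm B))
  have hZC : Z.Disjoint C := fun x hx hx' ↦ hPC.disjoint (by
    rcases List.mem_append.1 (hZperm'.mem_iff.1 hx) with h | h
    · exact List.mem_append_left _ h
    · exact List.mem_append_right A (List.mem_append_right I (List.mem_append_left I' h))) hx'
  refine ⟨Z ++ C, ?_, hZ.append (hPC.right hC) hrw.symm hZC⟩
  classical
  rw [List.perm_iff_count]
  intro x
  have := hZperm'.count_eq x
  simp only [List.count_append] at this ⊢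
  lia

section Gaps

variable [DecidableEq V]

lemma IsPathList.exists_of_perm_append {k : ℕ} (hα : G.IndepSetFree (k + 1)) {K J P : List V}
    {a b : V} (hK : IsPathList G K a b) (hperm : (J ++ K).Perm P) (hP : P.Nodup) (hJ : J ≠ [])
    (hdeg : ∀ v ∈ J, k + 2 + J.length ≤ #(neighborsIn G P.toFinset v)) :
    ∃ P', IsPathList G P' a b ∧ P'.length + 1 = P.length := by
  have hnodup := hperm.nodup_iff.2 hP
  have hdegK : ∀ v ∈ J, k + 2 ≤ #(neighborsIn G K.toFinset v) := fun v hv ↦ by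
    have hsub : neighborsIn G P.toFinset v ⊆ J.toFinset ∪ neighborsIn G K.toFinset v := by
      intro x hx
      obtain ⟨hxP, hvx⟩ := mem_neighborsIn.1 hx
      rw [mem_union, mem_neighborsIn, List.mem_toFinset, List.mem_toFinset]
      rw [List.mem_toFinset, ← hperm.mem_iff, List.mem_append] at hxP
      exact hxP.imp_right (⟨·, hvx⟩)
    have hcard := (hdeg v hv).trans ((card_le_card hsub).trans (card_union_le _ _))
    have hJcard := J.toFinset_card_le
    lia
  obtain ⟨v, J, rfl⟩ := List.exists_cons_of_ne_nil hJ
  obtain ⟨P', hperm', hP'⟩ := hK.exists_insert_forall hα (List.nodup_cons.1 hnodup).2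
    fun w hw ↦ hdegK w (.tail v hw)
  exact ⟨P', hP', by rw [hperm'.length_eq, ← hperm.length_eq, List.cons_append, List.length_cons]⟩

/-- A gap of the path `P` with nonempty `mid` of at most three vertices, all of degree at least
`D` in `P`, and such that `left` and `right` have at least `m` neighbours before the gap. -/
structure IsGap (G : SimpleGraph V) (P : List V) (m D : ℕ) (g : Gap V) : Prop where
  toList_eq : g.toList = P
  mid_ne_nil : g.mid ≠ []
  length_mid_le : g.mid.length ≤ 3
  le_card_left : m ≤ #(neighborsIn G g.pre.toFinset g.left)
  le_card_right : m ≤ #(neighborsIn G g.pre.toFinset g.right)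
  le_card_of_mem_mid : ∀ v ∈ g.mid, D ≤ #(neighborsIn G P.toFinset v)

namespace IsGap

variable {P : List V} {a b : V} {m D k : ℕ} {g g' : Gap V}

lemma exists_rotation (hα : G.IndepSetFree (k + 1)) (hP : IsPathList G P a b)
    (hg : IsGap G P m D g) {w : V} (hw : w ∈ pivots G g.pre g.left) :
    ∃ Y, Y.Perm (g.pre ++ [g.left]) ∧ IsPathList G Y a w ∧
      m ≤ #(pivots G Y g.right) + (k + 1) := by
  obtain ⟨rfl, -, -, -, hright, -⟩ := hg
  have hP' : IsPathList G ((g.pre ++ [g.left]) ++ (g.mid ++ g.right :: g.post)) a b := by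
    simpa only [Gap.toList, List.append_assoc, List.singleton_append] using hP
  obtain ⟨Y, hperm, hY⟩ :=
    ((mem_pivots.1 hw).2.append_right [g.left]).exists_rotation (hP'.left List.getLast?_concat)
  have hsub : g.pre.toFinset ⊆ Y.toFinset := fun x hx ↦ List.mem_toFinset.2
    (hperm.mem_iff.2 (List.mem_append_left _ (List.mem_toFinset.1 hx)))
  exact ⟨Y, hperm, hY, hright.trans ((card_le_card (neighborsIn_mono hsub g.right)).trans
    (card_neighborsIn_le_card_pivots hα hY.nodup g.right))⟩

lemma exists_reroutes (hα : G.IndepSetFree (k + 1)) (hP : IsPathList G P a b)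
    (hg : IsGap G P m D g) {q : ℕ} (hm : q + (k + 1) ≤ m) :
    ∃ R ⊆ P.toFinset ×ˢ P.toFinset, q ^ 2 ≤ #R ∧ ∀ p ∈ R, IsReroute G g a p.1 p.2 := by
  have hstart : ∀ x ∈ g.pre ++ [g.left], x ∈ P := fun x hx ↦ by
    rw [← hg.toList_eq]
    simp only [Gap.toList, List.mem_append, List.mem_cons, List.not_mem_nil] at hx ⊢
    tauto
  choose! Y hperm hY hcard using fun w hw ↦ hg.exists_rotation hα hP (w := w) hw
  have hpre : g.pre.Nodup := by
    have hnodup := hP.nodup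
    rw [← hg.toList_eq] at hnodup
    exact hnodup.of_append_left
  have hcard' := hg.le_card_left.trans (card_neighborsIn_le_card_pivots hα hpre g.left)
  let R : Finset (V × V) := ((pivots G g.pre g.left).sigma fun w ↦ pivots G (Y w) g.right).map
    (Equiv.sigmaEquivProd V V).toEmbedding
  have hR : ∀ p ∈ R, p.1 ∈ pivots G g.pre g.left ∧ p.2 ∈ pivots G (Y p.1) g.right := fun p hp ↦ by
    obtain ⟨_, hp', rfl⟩ := mem_map.1 hp
    exact mem_sigma.1 hp'
  refine ⟨R, fun p hp ↦ ?_, ?_, fun p hp ↦ ?_⟩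
  · obtain ⟨hw, hw'⟩ := hR p hp
    exact mem_product.2
      ⟨List.mem_toFinset.2 (hstart _ (List.mem_append_left _ (mem_pivots.1 hw).1)),
        List.mem_toFinset.2 (hstart _ ((hperm _ hw).mem_iff.1 (mem_pivots.1 hw').1))⟩
  · rw [card_map, card_sigma]
    calc
      q ^ 2 ≤ #(pivots G g.pre g.left) * q := by
        rw [sq]
        exact Nat.mul_le_mul_right q (by lia)
      _ ≤ ∑ w ∈ pivots G g.pre g.left, #(pivots G (Y w) g.right) :=
        card_nsmul_le_sum _ _ _ fun w hw ↦ by linarith [hcard w hw]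
  · obtain ⟨hw, hw'⟩ := hR p hp
    exact ⟨_, hperm _ hw, hY _ hw, (mem_pivots.1 hw).2.adj, (mem_pivots.1 hw').2⟩

lemma exists_shorter (hα : G.IndepSetFree (k + 1)) (hP : IsPathList G P a b)
    (hg : IsGap G P m D g) (hg' : IsGap G P m D g') (hD : k + 8 ≤ D) (hgg' : g.Precedes g')
    {w w' : V} (hw : IsReroute G g a w w') (hw' : IsReroute G g' a w w') :
    ∃ P', IsPathList G P' a b ∧ P'.length + 1 = P.length := by
  obtain ⟨Y, hYperm, hY, -, hpivot⟩ := hw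
  obtain ⟨_, -, -, hleft, hpivot'⟩ := hw'
  obtain ⟨E, hE⟩ := hgg'.exists_pre_eq (hg.toList_eq.trans hg'.toList_eq.symm)
  have hP' : P = (g.pre ++ [g.left]) ++ (g.mid ++ ((g.right :: (E ++ [g'.left])) ++
      (g'.mid ++ g'.right :: g'.post))) := by
    simp [← hg'.toList_eq, Gap.toList, hE]
  obtain ⟨K, hperm, hK⟩ := (hP' ▸ hP).exists_skip hYperm hY rfl (List.getLast?_concat (l := _ :: E))
    rfl hleft hpivot hpivot'.adj
  rw [← hP'] at hperm
  refine hK.exists_of_perm_append hα hperm hP.nodup (by simp [hg.mid_ne_nil]) fun v hv ↦ ?_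
  have hlen := hg.length_mid_le
  have hlen' := hg'.length_mid_le
  rw [List.length_append]
  rcases List.mem_append.1 hv with hv | hv
  · exact le_trans (by lia) (hg.le_card_of_mem_mid v hv)
  · exact le_trans (by lia) (hg'.le_card_of_mem_mid v hv)

end IsGap

-- Two of the gaps share a rerouting pair, since there are fewer than `|T| q²` pairs in total.
lemma IsPathList.exists_shorter_of_isGap {k m q D : ℕ} (hα : G.IndepSetFree (k + 1))
    {P : List V} {a b : V} (hP : IsPathList G P a b) {ι : Type*} (T : Finset ι) (g : ι → Gap V)
    (hg : ∀ t ∈ T, IsGap G P m D (g t))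
    (hsep : (T : Set ι).Pairwise fun s t ↦ (g s).Precedes (g t) ∨ (g t).Precedes (g s))
    (hD : k + 8 ≤ D) (hm : q + (k + 1) ≤ m) (hT : P.length ^ 2 < #T * q ^ 2) :
    ∃ P', IsPathList G P' a b ∧ P'.length + 1 = P.length := by
  classical
  choose! R hRP hRcard hR using fun t ht ↦ (hg t ht).exists_reroutes hα hP hm
  obtain ⟨s, hs, t, ht, hst, hdisj⟩ : ∃ s ∈ T, ∃ t ∈ T, s ≠ t ∧ ¬Disjoint (R s) (R t) := by
    by_contra! hdisj
    refine hT.not_ge ?_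
    calc
      #T * q ^ 2 ≤ ∑ t ∈ T, #(R t) := card_nsmul_le_sum _ _ _ hRcard
      _ = #(T.biUnion R) := (card_biUnion hdisj).symm
      _ ≤ #(P.toFinset ×ˢ P.toFinset) := card_le_card (biUnion_subset.2 hRP)
      _ = P.length ^ 2 := by
        rw [card_product, List.toFinset_card_of_nodup hP.nodup, sq]
  obtain ⟨p, hps, hpt⟩ := not_disjoint_iff.1 hdisj
  rcases hsep hs ht hst with h | h
  · exact (hg s hs).exists_shorter hα hP (hg t ht) hD h (hR s hs p hps) (hR t ht p hpt)
  · exact (hg t ht).exists_shorter hα hP (hg s hs) hD h (hR t ht p hpt) (hR s hs p hps)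

lemma IsPathList.exists_shorter_of_isGap_reverse {k m q D : ℕ} (hα : G.IndepSetFree (k + 1))
    {P : List V} {a b : V} (hP : IsPathList G P a b) {ι : Type*} (T : Finset ι) (g : ι → Gap V)
    (hg : ∀ t ∈ T, IsGap G P.reverse m D (g t).reverse)
    (hsep : (T : Set ι).Pairwise fun s t ↦ (g s).Precedes (g t) ∨ (g t).Precedes (g s))
    (hD : k + 8 ≤ D) (hm : q + (k + 1) ≤ m) (hT : P.length ^ 2 < #T * q ^ 2) :
    ∃ P', IsPathList G P' a b ∧ P'.length + 1 = P.length := by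
  have hlist : ∀ s ∈ T, ∀ t ∈ T, (g s).toList = (g t).toList := fun s hs t ht ↦ by
    rw [← List.reverse_inj, ← Gap.toList_reverse, ← Gap.toList_reverse, (hg s hs).toList_eq,
      (hg t ht).toList_eq]
  obtain ⟨P', hP', hlen⟩ := hP.reverse.exists_shorter_of_isGap hα T (fun t ↦ (g t).reverse) hg
    (fun s hs t ht hst ↦ (hsep hs ht hst).symm.imp
      (·.reverse (hlist t ht s hs)) (·.reverse (hlist s hs t ht)))
    hD hm (by rwa [List.length_reverse])
  exact ⟨P'.reverse, hP'.reverse, by simpa only [List.length_reverse] using hlen⟩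

end Gaps

lemma card_filter_card_neighborsIn_lt_le {k : ℕ} (hα : G.IndepSetFree (k + 1)) (S : Finset V)
    (D : ℕ) : #{v ∈ S | #(neighborsIn G S v) < D} ≤ (2 * D + 2) * k := by
  by_contra! hcon
  have hrich : IsRich G (2 * D + 2) {v ∈ S | #(neighborsIn G S v) < D} :=
    isRich_of_mul_le hα (card_pos.1 (by lia)) (by linarith)
  obtain ⟨U, hUS, hU⟩ := hrich.exists_isMinRich_subset
  obtain ⟨v, hv⟩ := hU.prop.1
  have hdegU := hU.le_two_mul_card_neighborsIn hv
  have hdegS := (mem_filter.1 (hUS hv)).2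
  have hmono := card_le_card (neighborsIn_mono (G := G) (hUS.trans (filter_subset _ S)) v)
  lia

lemma exists_blocks_disjoint {L : List V} (hL : L.Nodup) (s : ℕ) (bad : Finset V) :
    ∃ R : Finset ℕ, L.length / s ≤ #R + #bad ∧ ∀ r ∈ R, ∃ A W C, L = A ++ (W ++ C) ∧
      A.length = s * r ∧ W.length = s ∧ ∀ v ∈ W, v ∉ bad := by
  classical
  refine ⟨range (L.length / s) \ bad.image (L.idxOf · / s), ?_, fun r hr ↦ ?_⟩
  · have hsdiff := le_card_sdiff (bad.image (L.idxOf · / s)) (range (L.length / s))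
    have himage : #(bad.image (L.idxOf · / s)) ≤ #bad := card_image_le
    rw [card_range] at hsdiff
    lia
  obtain ⟨hr, hbad⟩ := mem_sdiff.1 hr
  have hrs : s * r + s ≤ L.length := calc
    s * r + s = s * (r + 1) := by ring
    _ ≤ s * (L.length / s) := Nat.mul_le_mul_left s (mem_range.1 hr)
    _ ≤ L.length := Nat.mul_div_le _ _
  refine ⟨L.take (s * r), (L.drop (s * r)).take s, (L.drop (s * r)).drop s, ?_, ?_, ?_, ?_⟩
  · rw [List.take_append_drop, List.take_append_drop]
  · rw [List.length_take, min_eq_left (by lia)]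
  · rw [List.length_take, List.length_drop, min_eq_left (by lia)]
  intro v hv hvbad
  obtain ⟨i, hi, rfl⟩ := List.mem_iff_getElem.1 hv
  rw [List.length_take, List.length_drop] at hi
  rw [List.getElem_take, List.getElem_drop] at hvbad
  refine hbad (mem_image.2 ⟨_, hvbad, ?_⟩)
  rw [hL.idxOf_getElem, Nat.mul_add_div (by lia), Nat.div_eq_of_lt (by lia), add_zero]

section FindGaps

variable [DecidableEq V] {P : List V} {m D : ℕ}

lemma le_card_neighborsIn_or {A W C : List V} {v : V}
    (h : 2 * m + W.length ≤ #(neighborsIn G (A ++ (W ++ C)).toFinset v)) :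
    m ≤ #(neighborsIn G A.toFinset v) ∨ m ≤ #(neighborsIn G C.toFinset v) := by
  have hsub : neighborsIn G (A ++ (W ++ C)).toFinset v ⊆
      neighborsIn G A.toFinset v ∪ (W.toFinset ∪ neighborsIn G C.toFinset v) := fun x hx ↦ by
    simp only [mem_neighborsIn, List.mem_toFinset, List.mem_append, mem_union] at hx ⊢
    tauto
  have hcard := (card_le_card hsub).trans (card_union_le _ _)
  have hcard' := card_union_le W.toFinset (neighborsIn G C.toFinset v)
  have hW := W.toFinset_card_le
  lia

lemma exists_isGap_of_split {A X W Y C : List V} {l r : V}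
    (hP : P = A ++ ((X ++ l :: (W ++ r :: Y)) ++ C)) (hW : W ≠ []) (hWlen : W.length ≤ 3)
    (hdeg : ∀ v ∈ W, D ≤ #(neighborsIn G P.toFinset v))
    (h : (m ≤ #(neighborsIn G A.toFinset l) ∧ m ≤ #(neighborsIn G A.toFinset r)) ∨
      (m ≤ #(neighborsIn G C.toFinset l) ∧ m ≤ #(neighborsIn G C.toFinset r))) :
    ∃ g : Gap V, A.length ≤ g.pre.length ∧
      g.pre.length + g.mid.length + 2 ≤ A.length + (X ++ l :: (W ++ r :: Y)).length ∧
      (IsGap G P m D g ∨ IsGap G P.reverse m D g.reverse) := by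
  have htoList : (⟨A ++ X, l, W, r, Y ++ C⟩ : Gap V).toList = P := by simp [hP, Gap.toList]
  refine ⟨⟨A ++ X, l, W, r, Y ++ C⟩, by simp, by simp; lia, ?_⟩
  rcases h with ⟨hl, hr⟩ | ⟨hl, hr⟩
  · have hsub : A.toFinset ⊆ (A ++ X).toFinset := by
      rw [List.toFinset_append]
      exact subset_union_left
    exact .inl ⟨htoList, hW, hWlen, hl.trans (card_le_card (neighborsIn_mono hsub l)),
      hr.trans (card_le_card (neighborsIn_mono hsub r)), hdeg⟩
  · have hsub : C.toFinset ⊆ (Y ++ C).reverse.toFinset := by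
      rw [List.toFinset_reverse, List.toFinset_append]
      exact subset_union_right
    refine .inr ⟨by rw [Gap.toList_reverse, htoList], List.reverse_ne_nil_iff.2 hW,
      List.length_reverse.trans_le hWlen, hr.trans (card_le_card (neighborsIn_mono hsub r)),
      hl.trans (card_le_card (neighborsIn_mono hsub l)), fun v hv ↦ ?_⟩
    rw [List.toFinset_reverse]
    exact hdeg v (List.mem_reverse.1 hv)

-- Two of the first, third and fifth vertex of the block have many neighbours on the same side.
lemma exists_isGap_of_block {A W C : List V} (hP : P = A ++ (W ++ C)) (hW : W.length = 5)
    (hD : 2 * m + 5 ≤ D) (hdeg : ∀ v ∈ W, D ≤ #(neighborsIn G P.toFinset v)) :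
    ∃ g : Gap V, A.length ≤ g.pre.length ∧ g.pre.length + g.mid.length + 2 ≤ A.length + 5 ∧
      (IsGap G P m D g ∨ IsGap G P.reverse m D g.reverse) := by
  have hside : ∀ v ∈ W, m ≤ #(neighborsIn G A.toFinset v) ∨ m ≤ #(neighborsIn G C.toFinset v) :=
    fun v hv ↦ le_card_neighborsIn_or (hW ▸ hD.trans (hP ▸ hdeg v hv))
  obtain ⟨v₀, v₁, v₂, v₃, v₄, rfl⟩ : ∃ v₀ v₁ v₂ v₃ v₄, W = [v₀, v₁, v₂, v₃, v₄] := by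
    match W, hW with
    | [v₀, v₁, v₂, v₃, v₄], _ => exact ⟨v₀, v₁, v₂, v₃, v₄, rfl⟩
  simp only [List.forall_mem_cons, List.not_mem_nil, false_implies, implies_true, and_true]
    at hside hdeg
  obtain ⟨-, h₁, h₂, h₃, -⟩ := hdeg
  let SameSide (v w : V) : Prop :=
    (m ≤ #(neighborsIn G A.toFinset v) ∧ m ≤ #(neighborsIn G A.toFinset w)) ∨
      (m ≤ #(neighborsIn G C.toFinset v) ∧ m ≤ #(neighborsIn G C.toFinset w))
  have hsame : SameSide v₀ v₂ ∨ SameSide v₀ v₄ ∨ SameSide v₂ v₄ := by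
    simp only [SameSide]
    tauto
  rcases hsame with h | h | h
  · exact exists_isGap_of_split (X := []) (W := [v₁]) (Y := [v₃, v₄]) hP (by simp) (by simp)
      (by simpa using h₁) h
  · exact exists_isGap_of_split (X := []) (W := [v₁, v₂, v₃]) (Y := []) hP (by simp) (by simp)
      (by simpa using ⟨h₁, h₂, h₃⟩) h
  · exact exists_isGap_of_split (X := [v₀, v₁]) (W := [v₃]) (Y := []) hP (by simp) (by simp)
      (by simpa using h₃) h

lemma exists_gaps [Nonempty V] {k : ℕ} (hα : G.IndepSetFree (k + 1)) (hP : P.Nodup)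
    (hD : 2 * m + 5 ≤ D) :
    ∃ (R : Finset ℕ) (g : ℕ → Gap V), P.length / 5 ≤ #R + (2 * D + 2) * k ∧
      ((R : Set ℕ).Pairwise fun r s ↦ (g r).Precedes (g s) ∨ (g s).Precedes (g r)) ∧
      ∀ r ∈ R, IsGap G P m D (g r) ∨ IsGap G P.reverse m D (g r).reverse := by
  obtain ⟨R, hR, hblock⟩ := exists_blocks_disjoint hP 5
    {v ∈ P.toFinset | #(neighborsIn G P.toFinset v) < D}
  have hgap : ∀ r ∈ R, ∃ g : Gap V, 5 * r ≤ g.pre.length ∧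
      g.pre.length + g.mid.length + 2 ≤ 5 * r + 5 ∧
      (IsGap G P m D g ∨ IsGap G P.reverse m D g.reverse) := fun r hr ↦ by
    obtain ⟨A, W, C, hPeq, hA, hW, hbad⟩ := hblock r hr
    rw [← hA]
    refine exists_isGap_of_block hPeq hW hD fun v hv ↦ not_lt.1 fun h ↦ hbad v hv ?_
    refine mem_filter.2 ⟨List.mem_toFinset.2 ?_, h⟩
    rw [hPeq]
    exact List.mem_append_right A (List.mem_append_left C hv)
  have : Nonempty (Gap V) := ⟨⟨[], Classical.arbitrary V, [], Classical.arbitrary V, []⟩⟩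
  choose! g hpre hmid hg using hgap
  refine ⟨R, g, ?_, fun r hr s hs hrs ↦ ?_, hg⟩
  · have := card_filter_card_neighborsIn_lt_le hα P.toFinset D
    lia
  · have := hpre r hr
    have := hpre s hs
    have := hmid r hr
    have := hmid s hs
    simp only [Gap.Precedes]
    lia

end FindGaps

lemma sq_lt_mul_sq_of_le {k n D q T : ℕ} (hk : 0 < k) (hn : 10 ^ 6 * k ^ 2 ≤ n)
    (hDn : 40 * k * D ≤ n) (hnD : n < 40 * k * (D + 1)) (hDq : 2 * D ≤ 5 * q) (hT : n ≤ 20 * T) :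
    n ^ 2 < T * q ^ 2 := by
  have hkD : 25000 * k < D + 1 :=
    Nat.lt_of_mul_lt_mul_left (a := 40 * k) (by nlinarith)
  have hnkD : n ≤ 41 * (k * D) := by nlinarith
  have hnD' : 500 * n < 4 * D ^ 2 := by nlinarith [hnkD]
  have hDq' : 4 * D ^ 2 ≤ 25 * q ^ 2 := by nlinarith
  have hn0 : 0 < n := by nlinarith
  refine Nat.lt_of_mul_lt_mul_left (a := 500) ?_
  calc
    500 * n ^ 2 = n * (500 * n) := by ring
    _ < n * (4 * D ^ 2) := Nat.mul_lt_mul_of_pos_left hnD' hn0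
    _ ≤ (20 * T) * (25 * q ^ 2) := Nat.mul_le_mul hT hDq'
    _ = 500 * (T * q ^ 2) := by ring

lemma IsPathList.exists_length_add_one_eq {k : ℕ} (hα : G.IndepSetFree (k + 1)) (hk : 0 < k)
    {P : List V} {a b : V} (hP : IsPathList G P a b) (hkP : 10 ^ 6 * k ^ 2 ≤ P.length) :
    ∃ P', IsPathList G P' a b ∧ P'.length + 1 = P.length := by
  classical
  have : Nonempty V := ⟨a⟩
  let D := P.length / (40 * k)
  have hDP : 40 * k * D ≤ P.length := Nat.mul_div_le _ _
  have hPD : P.length < 40 * k * (D + 1) := Nat.lt_mul_div_succ _ (by lia)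
  have hkD : 25000 * k ≤ D := (Nat.le_div_iff_mul_le (by lia)).2 (by linarith)
  obtain ⟨m, hm, hm'⟩ : ∃ m, 2 * m + 5 ≤ D ∧ D ≤ 2 * m + 6 := ⟨(D - 5) / 2, by lia, by lia⟩
  obtain ⟨q, rfl⟩ : ∃ q, m = q + (k + 1) := ⟨m - (k + 1), by lia⟩
  obtain ⟨R, g, hR, hsep, hg⟩ := exists_gaps hα hP.nodup hm
  have hcount : P.length ≤ 10 * #R := by
    have : k ≤ k ^ 2 := Nat.le_self_pow two_ne_zero k
    have : (2 * D + 2) * k = 2 * (k * D) + 2 * k := by ring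
    have : 40 * (k * D) ≤ P.length := by linarith
    lia
  have hlt : ∀ T, P.length ≤ 20 * T → P.length ^ 2 < T * q ^ 2 := fun T hT ↦
    sq_lt_mul_sq_of_le hk hkP hDP hPD (by lia) hT
  let T := {r ∈ R | IsGap G P (q + (k + 1)) D (g r)}
  let T' := {r ∈ R | ¬IsGap G P (q + (k + 1)) D (g r)}
  have hg' : ∀ r ∈ T', IsGap G P.reverse (q + (k + 1)) D (g r).reverse := fun r hr ↦
    (hg r (mem_filter.1 hr).1).resolve_left (mem_filter.1 hr).2
  have hcard : #T + #T' = #R := card_filter_add_card_filter_not _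
  rcases le_or_gt P.length (20 * #T) with hT | hT
  · exact hP.exists_shorter_of_isGap hα T g (fun r hr ↦ (mem_filter.1 hr).2)
      (hsep.mono (filter_subset _ R)) (by lia) le_rfl (hlt _ hT)
  · exact hP.exists_shorter_of_isGap_reverse hα T' g hg'
      (hsep.mono (filter_subset _ R)) (by lia) le_rfl (hlt _ (by lia))

lemma IsPathList.exists_length_eq {k : ℕ} (hα : G.IndepSetFree (k + 1)) (hk : 0 < k)
    {P : List V} {a b : V} (hP : IsPathList G P a b) {ℓ : ℕ} (hkℓ : 10 ^ 6 * k ^ 2 ≤ ℓ)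
    (hℓP : ℓ ≤ P.length) : ∃ P', IsPathList G P' a b ∧ P'.length = ℓ := by
  induction hℓP using Nat.decreasingInduction with
  | self => exact ⟨P, hP, rfl⟩
  | of_succ ℓ _ ih =>
    obtain ⟨P', hP', hlen⟩ := ih (by lia)
    obtain ⟨P'', hP'', hlen'⟩ := hP'.exists_length_add_one_eq hα hk (by lia)
    exact ⟨P'', hP'', by lia⟩

/-! ### All cycle lengths -/

lemma IsPathList.hasCycle_of_le_length {k d t : ℕ} (hα : G.IndepSetFree (k + 1)) (hk : 0 < k)
    (ht : k < t ^ d) {P : List V} {a b : V} (hP : IsPathList G P a b)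
    (hba : G.Adj b a) (hn : 10 ^ 6 * (d * k ^ 2 * t) ≤ P.length) {ℓ : ℕ} (hℓ : 3 ≤ ℓ)
    (hℓP : ℓ ≤ P.length) : HasCycle G ℓ := by
  classical
  have hd : 1 ≤ d := Nat.one_le_iff_ne_zero.2 fun hd ↦ by
    rw [hd, pow_zero] at ht
    lia
  have ht2 : 2 ≤ t := by
    by_contra! h
    have := Nat.pow_le_pow_left (Nat.le_of_lt_succ h) d
    rw [one_pow] at this
    lia
  have hkn : 2 * (10 ^ 6 * k ^ 2) ≤ P.length := calc
    2 * (10 ^ 6 * k ^ 2) = 10 ^ 6 * (1 * k ^ 2 * 2) := by ring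
    _ ≤ 10 ^ 6 * (d * k ^ 2 * t) := by gcongr
    _ ≤ P.length := hn
  rcases le_or_gt (10 ^ 6 * k ^ 2) ℓ with hlarge | hlarge
  · obtain ⟨P', hP', rfl⟩ := hP.exists_length_eq hα hk hlarge hℓP
    exact hP'.hasCycle hℓ hba
  obtain ⟨A, B, rfl, hA, hB⟩ : ∃ A B, P = A ++ B ∧ P.length ≤ 2 * A.length + 1 ∧
      P.length ≤ 2 * B.length := by
    refine ⟨P.take (P.length / 2), P.drop (P.length / 2), (List.take_append_drop _ P).symm, ?_, ?_⟩
    · rw [List.length_take]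
      lia
    · rw [List.length_drop]
      lia
  have hA' : #A.toFinset = A.length := List.toFinset_card_of_nodup hP.nodup.of_append_left
  have hrich : IsRich G (48 * k * d * t) A.toFinset := by
    refine isRich_of_mul_le hα (card_pos.1 (by lia)) ?_
    have : 2 * (48 * k * d * t) * k = 96 * (d * k ^ 2 * t) := by ring
    lia
  obtain ⟨U, hUA, hU⟩ := hrich.exists_isMinRich_subset
  have hdt : d * 2 ≤ d * t := Nat.mul_le_mul_left d ht2
  rcases le_or_gt (4 * k) ℓ with hmid | hsmall
  · exact hP.hasCycle_of_isMinRich hα hk hba hU (fun x hx ↦ List.mem_toFinset.1 (hUA hx))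
      (by nlinarith) hmid (by lia)
  rcases le_or_gt (4 * d) ℓ with hdℓ | htiny
  · exact hU.hasCycle_of_pow hα hk ht le_rfl hdℓ hsmall.le
  · exact hU.hasCycle_of_mul_le hα hℓ hk (by nlinarith)

lemma exists_nat_lt_pow_le_two_mul_rpow {x : ℝ} (hx : 1 ≤ x) {d : ℕ} (hd : d ≠ 0) :
    ∃ t : ℕ, x < (t : ℝ) ^ d ∧ (t : ℝ) ≤ 2 * x ^ (1 / (d : ℝ)) := by
  have hx0 : 0 ≤ x := zero_le_one.trans hx
  have hroot : 1 ≤ x ^ (1 / (d : ℝ)) := Real.one_le_rpow hx (by positivity)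
  refine ⟨⌊x ^ (1 / (d : ℝ))⌋₊ + 1, ?_, ?_⟩
  · calc
      x = (x ^ (1 / (d : ℝ))) ^ d := by rw [one_div, Real.rpow_inv_natCast_pow hx0 hd]
      _ < _ := by
        push_cast
        exact pow_lt_pow_left₀ (Nat.lt_floor_add_one _) (by positivity) hd
  · push_cast
    linarith [Nat.floor_le (zero_le_one.trans hroot)]

end Pancyclicity

open Pancyclicity in
theorem statement0_general :
    ∃ c : ℝ, 0 < c ∧
      ∀ (d k : ℕ), 0 < d → 0 < k →
        ∀ (V : Type*) [Fintype V] [DecidableEq V] (G : SimpleGraph V),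
          G.IsHamiltonian → G.IndepSetFree (k + 1) →
          c * d * (k : ℝ) ^ (2 + 1 / (d : ℝ)) ≤ (Fintype.card V : ℝ) →
          ∀ ℓ : ℕ, 3 ≤ ℓ → ℓ ≤ Fintype.card V → HasCycle G ℓ := by
  refine ⟨2 * 10 ^ 6, by norm_num, fun d k hd hk V _ _ G hG hα hn ℓ hℓ hℓV ↦ ?_⟩
  obtain ⟨P, a, b, hP, hlen, hba⟩ := exists_isPathList_of_isHamiltonian hG (by lia)
  obtain ⟨t, ht, htk⟩ :=
    exists_nat_lt_pow_le_two_mul_rpow (Nat.one_le_cast.2 hk) hd.ne'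
  have hbound : (10 : ℝ) ^ 6 * (d * k ^ 2 * t) ≤ P.length := calc
    (10 : ℝ) ^ 6 * (d * k ^ 2 * t) ≤ 10 ^ 6 * (d * k ^ 2 * (2 * (k : ℝ) ^ (1 / (d : ℝ)))) := by
      gcongr
    _ = 2 * 10 ^ 6 * d * (k : ℝ) ^ (2 + 1 / (d : ℝ)) := by
      rw [Real.rpow_add (by exact_mod_cast hk), Real.rpow_two]
      ring
    _ ≤ P.length := hlen ▸ hn
  exact hP.hasCycle_of_le_length hα hk (by exact_mod_cast ht) hba (by exact_mod_cast hbound) hℓ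
    (hlen ▸ hℓV)

/-- There exists a constant `c > 0` such that for every positive integer `k`,
every Hamiltonian graph `G` on `n` vertices with `n ≥ c·k^(11/5)` and independence number at
most `k` is pancyclic, i.e. `G` contains a cycle of every length `ℓ` with `3 ≤ ℓ ≤ n`. -/
theorem statement0 :
    ∃ c : ℝ, 0 < c ∧
      ∀ (k : ℕ), 0 < k →
        ∀ (V : Type) [Fintype V] [DecidableEq V] (G : SimpleGraph V),
          G.IsHamiltonian →
          (∀ s : Finset V, (∀ u ∈ s, ∀ v ∈ s, u ≠ v → ¬ G.Adj u v) → s.card ≤ k) →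
          c * (k : ℝ) ^ ((11 : ℝ) / 5) ≤ (Fintype.card V : ℝ) →
          ∀ ℓ : ℕ, 3 ≤ ℓ → ℓ ≤ Fintype.card V →
            ∃ (u : V) (w : G.Walk u u), w.IsCycle ∧ w.length = ℓ := by
  obtain ⟨c, hc, h⟩ := statement0_general
  refine ⟨c * 5, by positivity, fun k hk V _ _ G hG hα hn ↦ ?_⟩
  exact h 5 k (by norm_num) hk V G hG (Pancyclicity.indepSetFree_of_forall_card_le hα)
    (by norm_num at hn ⊢; exact hn)
end

section
/- There exists a constant c > 0 such that for every positive integer k the following holds: if G is a Hamiltonian graph on n vertices with n ≥ c·k^{11/5} and independence number at most k, and W is a set of at most 20k² vertices of G, then G contains a cycle of length n−1 passing through all vertices of W. -/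
/-!
Suppose that a cycle misses between one and `M` vertices, each of degree more than `α(G) + M` and
none in `W`. A missed vertex has more than `α(G)` neighbours on the cycle, so the successors of two
of them are adjacent and the vertex can be inserted. Inserting all missed vertices but one yields
the required cycle of length `n - 1`.

To find such a cycle, cut the Hamilton cycle into blocks of about `2ℓ` consecutive vertices, where
`ℓ` is about `k ^ (1 / 5)`. At least `300 k²` blocks avoid `W` and the few vertices of small degree.
Suppose that no rerouting of the Hamilton cycle through the gaps inside these blocks works. Each
half of a block is almost independent, and the rerouting patterns restrict the edges between
blocks. If the left halves of two blocks are joined, then no edge joins the right halves of two of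
the common neighbours of these blocks in the graph of joined right halves; hence there are at most
`2α(G) / ℓ` such neighbours, and the same holds with left and right exchanged. Moreover, up to a
small error there are at most four edges between two halves. Turán's theorem, applied to all halves
and to the halves in the neighbourhood of each block, then forces many paths of length two between
joined blocks. Counting these paths bounds the number of blocks by a smaller multiple of `k²`.
-/

open Finset

/-! ### Independent sets and numbers of edges -/

section Turan

theorem card_sq_le_mul_sum_degree_add {α : Type*} [Fintype α] {H : SimpleGraph α}
    [DecidableRel H.Adj] {k : ℕ} (hH : H.IndepSetFree (k + 1)) :
    Fintype.card α ^ 2 ≤ k * (∑ v, H.degree v + Fintype.card α) := by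
  classical
  set n := Fintype.card α
  have turan : 2 * k * #Hᶜ.edgeFinset ≤ (k - 1) * n ^ 2 := by
    have edges_le : #Hᶜ.edgeFinset ≤ #(SimpleGraph.turanGraph n k).edgeFinset := by
      rw [SimpleGraph.card_edgeFinset_turanGraph]
      exact ((SimpleGraph.cliqueFree_compl _).2 hH).card_edgeFinset_le
    exact (Nat.mul_le_mul_left _ edges_le).trans SimpleGraph.mul_card_edgeFinset_turanGraph_le
  have degrees : ∑ v, H.degree v + ∑ v, Hᶜ.degree v + n = n ^ 2 := by
    have degree_add (v) : H.degree v + Hᶜ.degree v + 1 = n := by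
      have := H.degree_lt_card_verts v
      rw [H.degree_compl]
      omega
    calc _ = ∑ v, (H.degree v + Hᶜ.degree v + 1) := by simp [sum_add_distrib, n]
      _ = n ^ 2 := by simp [degree_add, n, sq]
  rw [Hᶜ.sum_degrees_eq_twice_card_edges] at degrees
  obtain rfl | hk := k.eq_zero_or_pos
  · have : IsEmpty α := by
      rwa [← SimpleGraph.cliqueFree_compl, zero_add, SimpleGraph.cliqueFree_one] at hH
    simp [n]
  · obtain ⟨k, rfl⟩ := Nat.exists_eq_add_of_le' hk
    simp only [Nat.add_sub_cancel] at turan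
    nlinarith

theorem card_interedges_eq_sum {α : Type*} (H : SimpleGraph α) [DecidableRel H.Adj]
    (S T : Finset α) : #(H.interedges S T) = ∑ a ∈ S, #{b ∈ T | H.Adj a b} := by
  simp only [SimpleGraph.interedges_def, card_filter, sum_product]

theorem card_sq_le_mul_card_interedges_add {α : Type*} (H : SimpleGraph α) [DecidableRel H.Adj]
    {T : Finset α} {k : ℕ} (hT : ∀ S ⊆ T, H.IsIndepSet S → #S ≤ k) :
    #T ^ 2 ≤ k * (#(H.interedges T T) + #T) := by
  classical
  have indepSetFree : (H.induce (T : Set α)).IndepSetFree (k + 1) := by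
    intro S hS
    have indep : H.IsIndepSet (S.map (Function.Embedding.subtype _)) := by
      have := hS.isIndepSet
      simp only [SimpleGraph.IsIndepSet, Set.Pairwise] at this ⊢
      aesop
    have card_le := hT _ (by intro; simp +contextual [mem_map]) indep
    simp [hS.card_eq] at card_le
  have degree_eq (v : (T : Set α)) : (H.induce (T : Set α)).degree v = #{b ∈ T | H.Adj v b} := by
    rw [← SimpleGraph.card_neighborFinset_eq_degree, ← card_map (Function.Embedding.subtype _)]
    congr 1
    ext b
    simp [and_comm]
  have turan := card_sq_le_mul_sum_degree_add indepSetFree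
  rw [card_interedges_eq_sum, ← sum_coe_sort]
  simpa [degree_eq] using turan

theorem card_filter_degree_le {V : Type*} [Fintype V] (G : SimpleGraph V) [DecidableRel G.Adj]
    (D : ℕ) : #{v | G.degree v ≤ D} ≤ G.indepNum * (D + 1) := by
  classical
  set T : Finset V := {v | G.degree v ≤ D}
  have edges_le : #(G.interedges T T) ≤ #T * D := by
    rw [card_interedges_eq_sum]
    refine sum_le_card_nsmul _ _ _ fun v hv ↦ le_trans (card_le_card ?_) (mem_filter.1 hv).2
    intro b
    simp +contextual
  have turan := card_sq_le_mul_card_interedges_add G (T := T) fun S _ hS ↦ hS.card_le_indepNum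
  obtain hT | hT := (#T).eq_zero_or_pos
  · simp [hT]
  · refine Nat.le_of_mul_le_mul_left ?_ hT
    calc #T * #T = #T ^ 2 := (sq _).symm
      _ ≤ G.indepNum * (#T * D + #T) := turan.trans (by gcongr)
      _ = #T * (G.indepNum * (D + 1)) := by ring

theorem one_le_indepNum {V : Type*} [Finite V] [Nonempty V] {G : SimpleGraph V} :
    1 ≤ G.indepNum := by
  have indep : G.IsIndepSet (({Classical.arbitrary V} : Finset V) : Set V) := by simp
  simpa using indep.card_le_indepNum

end Turan

/-! ### Cycles as lists and as periodic sequences -/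

section Cycles

variable {V : Type*} {G : SimpleGraph V}

theorem exists_lt_adj_of_indepNum_lt_card [Finite V] {ι : Type*} [LinearOrder ι] {T : Finset ι}
    {g : ι → V} (hg : Set.InjOn g T) (hT : G.indepNum < #T) :
    ∃ a ∈ T, ∃ b ∈ T, a < b ∧ G.Adj (g a) (g b) := by
  classical
  by_contra! not_adj
  refine hT.not_ge ?_
  rw [← card_image_of_injOn hg]
  refine SimpleGraph.IsIndepSet.card_le_indepNum ?_
  simp only [SimpleGraph.IsIndepSet, Set.Pairwise, coe_image, Set.forall_mem_image, mem_coe]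
  intro a ha b hb hab
  obtain h | rfl | h := lt_trichotomy a b
  · exact not_adj a ha b hb h
  · exact absurd rfl hab
  · exact fun hadj ↦ not_adj b hb a ha h hadj.symm

/-- The vertices of `l`, in this order, form a cycle of `G`. -/
structure IsCycleList (G : SimpleGraph V) (l : List V) : Prop where
  three_le_length : 3 ≤ l.length
  nodup : l.Nodup
  isChain : l.IsChain G.Adj
  adj_getLast_head : ∀ x ∈ l.getLast?, ∀ y ∈ l.head?, G.Adj x y

namespace IsCycleList

theorem exists_isCycle {l : List V} (hl : IsCycleList G l) :
    ∃ (u : V) (w : G.Walk u u), w.IsCycle ∧ w.length = l.length ∧ ∀ x ∈ l, x ∈ w.support := by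
  have ne_nil : l ≠ [] := List.ne_nil_of_length_pos (by have := hl.three_le_length; omega)
  have closing : G.Adj (l.getLast ne_nil) (l.head ne_nil) :=
    hl.adj_getLast_head _ (List.getLast?_eq_some_getLast _) _ (List.head?_eq_some_head _)
  let p := SimpleGraph.Walk.ofSupport l ne_nil hl.isChain
  have support_p : p.support = l := SimpleGraph.Walk.support_ofSupport _ _
  have length_p : p.length = l.length - 1 := SimpleGraph.Walk.length_ofSupport _ _
  have isPath_p : p.IsPath := by rw [SimpleGraph.Walk.isPath_def, support_p]; exact hl.nodup
  have := hl.three_le_length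
  refine ⟨_, .cons closing p, (p.cons_isCycle_iff closing).2 ⟨isPath_p, fun mem ↦ ?_⟩, ?_, ?_⟩
  · have := isPath_p.length_eq_one_of_mem_edges (Sym2.eq_swap ▸ mem)
    omega
  · rw [SimpleGraph.Walk.length_cons]
    omega
  · simp +contextual [support_p]

theorem of_isCycle {v : V} {p : G.Walk v v} (hp : p.IsCycle) : IsCycleList G p.support.tail := by
  cases p with
  | nil => exact absurd rfl hp.ne_nil
  | cons h q =>
    have := hp.three_le_length
    refine ⟨by simpa using this, hp.support_nodup, q.isChain_adj_support, fun x hx y hy ↦ ?_⟩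
    simp only [SimpleGraph.Walk.support_cons, List.tail_cons] at hx hy
    rw [List.getLast?_eq_some_getLast q.support_ne_nil, Option.mem_some_iff,
      SimpleGraph.Walk.getLast_support] at hx
    rw [List.head?_eq_some_head q.support_ne_nil, Option.mem_some_iff,
      SimpleGraph.Walk.head_support] at hy
    rwa [← hx, ← hy]

theorem map {ι : Type*} {f : ι → V} {I : List ι} (hI : IsCycleList (G.comap f) I)
    (hf : Set.InjOn f {i | i ∈ I}) : IsCycleList G (I.map f) where
  three_le_length := by simpa using hI.three_le_length
  nodup := hI.nodup.map_on fun _ hi _ hj ↦ hf hi hj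
  isChain := (List.isChain_map f).2 hI.isChain
  adj_getLast_head := by simpa using hI.adj_getLast_head

theorem cons {l : List V} {v : V} (nodup : l.Nodup) (isChain : l.IsChain G.Adj)
    (two_le_length : 2 ≤ l.length) (hv : v ∉ l) (head : ∀ x ∈ l.head?, G.Adj v x)
    (last : ∀ x ∈ l.getLast?, G.Adj x v) : IsCycleList G (v :: l) where
  three_le_length := by simpa using two_le_length
  nodup := List.nodup_cons.2 ⟨hv, nodup⟩
  isChain := List.isChain_cons.2 ⟨head, isChain⟩
  adj_getLast_head := by
    obtain ⟨a, l, rfl⟩ := List.exists_cons_of_ne_nil (l := l) (by rintro rfl; simp at two_le_length)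
    simpa [List.getLast?_cons_cons] using last

end IsCycleList

/-- The `n`-periodic sequence `f` runs around a cycle of length `n` of `G`. -/
structure IsCycleParam (G : SimpleGraph V) (n : ℕ) (f : ℕ → V) : Prop where
  three_le : 3 ≤ n
  adj_succ : ∀ i, G.Adj (f i) (f (i + 1))
  periodic : Function.Periodic f n
  injOn_Iio : Set.InjOn f (Set.Iio n)

theorem IsCycleList.exists_isCycleParam {l : List V} (hl : IsCycleList G l) :
    ∃ f, IsCycleParam G l.length f ∧ ∀ v, v ∈ l ↔ ∃ i, f i = v := by
  have three_le := hl.three_le_length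
  have length_pos : 0 < l.length := by omega
  refine ⟨fun i ↦ l[i % l.length]'(Nat.mod_lt _ length_pos), ⟨three_le, fun i ↦ ?_, ?_, ?_⟩, ?_⟩
  · have mod_lt := Nat.mod_lt i length_pos
    obtain h | h := (show i % l.length + 1 ≤ l.length from mod_lt).lt_or_eq
    · have succ_mod : (i + 1) % l.length = i % l.length + 1 := by
        rw [Nat.add_mod, Nat.mod_eq_of_lt (a := 1) (by omega), Nat.mod_eq_of_lt h]
      simp only [succ_mod]
      exact List.isChain_iff_getElem.1 hl.isChain _ h
    · have succ_mod : (i + 1) % l.length = 0 := by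
        rw [Nat.add_mod, Nat.mod_eq_of_lt (a := 1) (by omega), h, Nat.mod_self]
      have mod_eq : i % l.length = l.length - 1 := by omega
      simp only [succ_mod, mod_eq]
      refine hl.adj_getLast_head _ ?_ _ ?_
      · simp [List.getLast?_eq_getElem?]
      · simp [List.head?_eq_getElem?]
  · intro i
    simp
  · intro i hi j hj hij
    simpa [Nat.mod_eq_of_lt hi.out, Nat.mod_eq_of_lt hj.out] using hl.nodup.getElem_inj_iff.1 hij
  · intro v
    rw [List.mem_iff_getElem]
    constructor
    · rintro ⟨i, hi, rfl⟩
      exact ⟨i, by simp [Nat.mod_eq_of_lt hi]⟩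
    · rintro ⟨i, rfl⟩
      exact ⟨_, _, rfl⟩

theorem head?_Ico {a b : ℕ} (h : a < b) : (List.Ico a b).head? = some a := by
  rw [List.Ico.eq_cons h, List.head?_cons]

theorem getLast?_Ico_succ {a b : ℕ} (h : a ≤ b) : (List.Ico a (b + 1)).getLast? = some b := by
  rw [List.Ico.succ_top h, List.getLast?_concat]

namespace IsCycleParam

variable {n : ℕ} {f : ℕ → V}

theorem injOn_Ico (hf : IsCycleParam G n f) (x : ℕ) : Set.InjOn f (Set.Ico x (x + n)) := by
  intro i hi j hj hij
  have n_pos : 0 < n := by have := hf.three_le; omega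
  rw [← hf.periodic.map_mod_nat i, ← hf.periodic.map_mod_nat j] at hij
  exact Nat.mod_injOn_Ico x n (by simpa using hi) (by simpa using hj)
    (hf.injOn_Iio (Nat.mod_lt _ n_pos) (Nat.mod_lt _ n_pos) hij)

theorem exists_mem_Ico (hf : IsCycleParam G n f) (x i : ℕ) :
    ∃ j ∈ Set.Ico x (x + n), f j = f i := by
  have n_pos : 0 < n := by have := hf.three_le; omega
  have mem : i % n ∈ (Ico x (x + n)).image (· % n) := by
    rw [Nat.image_Ico_mod]
    exact mem_range.2 (Nat.mod_lt _ n_pos)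
  obtain ⟨j, hj, hji⟩ := mem_image.1 mem
  exact ⟨j, by simpa using hj, by rw [← hf.periodic.map_mod_nat, hji, hf.periodic.map_mod_nat]⟩

theorem surjective [Fintype V] (hf : IsCycleParam G (Fintype.card V) f) :
    Function.Surjective f := by
  classical
  have card_image : #((range (Fintype.card V)).image f) = Fintype.card V := by
    rw [card_image_of_injOn (by simpa using hf.injOn_Iio), card_range]
  intro v
  have := (eq_univ_of_card _ card_image).symm ▸ mem_univ v
  exact (mem_image.1 this).imp fun _ h ↦ h.2

theorem isChain_Ico (hf : IsCycleParam G n f) (a b : ℕ) :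
    (List.Ico a b).IsChain (G.comap f).Adj :=
  (List.Ico.isChain_succ a b).imp fun i j hij ↦ by simpa [hij] using hf.adj_succ i

theorem isChain_reverse_Ico (hf : IsCycleParam G n f) (a b : ℕ) :
    (List.Ico a b).reverse.IsChain (G.comap f).Adj :=
  List.isChain_reverse.2 ((hf.isChain_Ico a b).imp fun _ _ h ↦ h.symm)

end IsCycleParam

theorem exists_isCycleParam_of_isHamiltonian [Fintype V] [DecidableEq V] (hG : G.IsHamiltonian)
    (card_ne_one : Fintype.card V ≠ 1) : ∃ f, IsCycleParam G (Fintype.card V) f := by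
  obtain ⟨v, p, hp⟩ := hG card_ne_one
  obtain ⟨f, hf, -⟩ := (IsCycleList.of_isCycle hp.isCycle).exists_isCycleParam
  have length_eq : p.support.tail.length = Fintype.card V := by simp [hp.length_eq]
  exact ⟨f, length_eq ▸ hf⟩

end Cycles

/-! ### Absorbing missed vertices -/

section Absorption

variable {V : Type*} {G : SimpleGraph V}

theorem IsCycleParam.exists_crossing_path {n : ℕ} {f : ℕ → V} (hf : IsCycleParam G n f) {i j : ℕ}
    (hij : i < j) (hjn : j < i + n) (hadj : G.Adj (f (i + 1)) (f (j + 1))) :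
    ∃ l : List V, l.Nodup ∧ l.IsChain G.Adj ∧ (∀ v, v ∈ l ↔ ∃ p, f p = v) ∧
      l.head? = some (f j) ∧ l.getLast? = some (f i) := by
  set I := (List.Ico (i + 1) (j + 1)).reverse ++ List.Ico (j + 1) (i + n + 1)
  have mem_I (p : ℕ) : p ∈ I ↔ p ∈ Set.Ico (i + 1) (i + 1 + n) := by
    simp only [I, List.mem_append, List.mem_reverse, List.Ico.mem, Set.mem_Ico]
    omega
  have nodup_I : I.Nodup := by
    refine List.nodup_append'.2 ⟨List.nodup_reverse.2 (List.Ico.nodup _ _), List.Ico.nodup _ _, ?_⟩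
    intro p
    simp only [List.mem_reverse, List.Ico.mem]
    omega
  have chain_I : I.IsChain (G.comap f).Adj := by
    refine List.isChain_append.2 ⟨hf.isChain_reverse_Ico _ _, hf.isChain_Ico _ _, ?_⟩
    simpa [head?_Ico (show i + 1 < j + 1 by omega), head?_Ico (show j + 1 < i + n + 1 by omega)]
      using hadj
  refine ⟨I.map f, nodup_I.map_on fun p hp q hq ↦ hf.injOn_Ico _ ((mem_I p).1 hp) ((mem_I q).1 hq),
    (List.isChain_map f).2 chain_I, fun v ↦ ⟨?_, ?_⟩, ?_, ?_⟩
  · rw [List.mem_map]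
    exact fun ⟨p, _, hp⟩ ↦ ⟨p, hp⟩
  · rintro ⟨p, rfl⟩
    obtain ⟨q, hq, hqp⟩ := hf.exists_mem_Ico (i + 1) p
    exact List.mem_map.2 ⟨q, (mem_I q).2 hq, hqp⟩
  · simp [I, getLast?_Ico_succ (show i + 1 ≤ j by omega)]
  · simp [I, getLast?_Ico_succ (show j + 1 ≤ i + n by omega), hf.periodic i]

namespace IsCycleList

variable [DecidableEq V] [DecidableRel G.Adj]

/- Two neighbours of `v` whose successors on the cycle are adjacent exist because these successors
are too many to be independent. -/
theorem exists_insert [Finite V] {l : List V} (hl : IsCycleList G l) {v : V} (hv : v ∉ l)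
    (hd : G.indepNum < #{u ∈ l.toFinset | G.Adj v u}) :
    ∃ l', IsCycleList G l' ∧ l'.toFinset = insert v l.toFinset := by
  obtain ⟨f, hf, mem_l⟩ := hl.exists_isCycleParam
  set T : Finset ℕ := {i ∈ range l.length | G.Adj v (f i)}
  have card_T : G.indepNum < #T := by
    refine hd.trans_le ((card_le_card fun u hu ↦ ?_).trans (card_image_le (f := f)))
    obtain ⟨i, rfl⟩ := (mem_l u).1 (List.mem_toFinset.1 (mem_filter.1 hu).1)
    refine mem_image.2 ⟨i % l.length, ?_, hf.periodic.map_mod_nat i⟩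
    have length_pos : 0 < l.length := by have := hf.three_le; omega
    simpa [T, hf.periodic.map_mod_nat i, Nat.mod_lt i length_pos] using (mem_filter.1 hu).2
  have injOn_succ : Set.InjOn (fun i ↦ f (i + 1)) T := by
    intro i hi j hj hij
    simp only [T, coe_filter, mem_range, Set.mem_ofPred_eq] at hi hj
    simpa using hf.injOn_Ico 1 (by simp; omega) (by simp; omega) hij
  obtain ⟨i, hi, j, hj, hij, hadj⟩ := exists_lt_adj_of_indepNum_lt_card injOn_succ card_T
  simp only [T, mem_filter, mem_range] at hi hj
  obtain ⟨l', nodup, isChain, mem_l', head, last⟩ :=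
    hf.exists_crossing_path hij (by omega) hadj
  have toFinset_eq : l'.toFinset = l.toFinset := by
    ext u
    rw [List.mem_toFinset, List.mem_toFinset, mem_l, mem_l']
  have length_eq : l'.length = l.length := by
    rw [← List.toFinset_card_of_nodup nodup, toFinset_eq, List.toFinset_card_of_nodup hl.nodup]
  refine ⟨v :: l', .cons nodup isChain (by have := hf.three_le; omega) ?_ ?_ ?_, ?_⟩
  · rwa [← List.mem_toFinset, toFinset_eq, List.mem_toFinset]
  · simpa [head] using hj.2
  · simpa [last] using hi.2.symm
  · rw [List.toFinset_cons, toFinset_eq]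

theorem exists_union [Fintype V] {l : List V} (hl : IsCycleList G l) {M : ℕ}
    (hM : #l.toFinsetᶜ ≤ M) (S : Finset V) (hS : Disjoint S l.toFinset)
    (hdeg : ∀ v ∈ S, G.indepNum + M < G.degree v) :
    ∃ l', IsCycleList G l' ∧ l'.toFinset = S ∪ l.toFinset := by
  induction S using Finset.induction_on with
  | empty => exact ⟨l, hl, by simp⟩
  | insert v S hv ih =>
    rw [disjoint_insert_left] at hS
    obtain ⟨l', hl', toFinset_l'⟩ := ih hS.2 fun u hu ↦ hdeg u (mem_insert_of_mem hu)
    have neighbors_subset : G.neighborFinset v ⊆ {u ∈ l'.toFinset | G.Adj v u} ∪ l.toFinsetᶜ := by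
      intro u
      simp only [SimpleGraph.mem_neighborFinset, toFinset_l', mem_union, mem_filter, mem_compl]
      tauto
    have degree_le := (card_le_card neighbors_subset).trans (card_union_le _ _)
    rw [SimpleGraph.card_neighborFinset_eq_degree] at degree_le
    have lt_degree := hdeg v (mem_insert_self v S)
    have v_notMem : v ∉ l' := by
      rw [← List.mem_toFinset, toFinset_l', mem_union]
      tauto
    obtain ⟨l'', hl'', toFinset_l''⟩ := hl'.exists_insert v_notMem (by omega)
    exact ⟨l'', hl'', by rw [toFinset_l'', toFinset_l', insert_union]⟩

end IsCycleList

/-- `G` has a cycle that misses at least one and at most `M` vertices, all of them satisfying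
`P`. -/
def HasNearSpanningCycle [Fintype V] (G : SimpleGraph V) (P : V → Prop) (M : ℕ) : Prop :=
  ∃ l : List V, IsCycleList G l ∧ (∃ v, v ∉ l) ∧ (∀ v, v ∉ l → P v) ∧ Fintype.card V ≤ l.length + M

theorem HasNearSpanningCycle.exists_isCycle [Fintype V] [DecidableRel G.Adj]
    {W : Finset V} {M : ℕ}
    (hG : HasNearSpanningCycle G (fun v ↦ v ∉ W ∧ G.indepNum + M < G.degree v) M) :
    ∃ (u : V) (w : G.Walk u u), w.IsCycle ∧ w.length = Fintype.card V - 1 ∧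
      ∀ x ∈ W, x ∈ w.support := by
  classical
  obtain ⟨l, hl, ⟨v, hv⟩, hP, hM⟩ := hG
  have card_compl_le : #l.toFinsetᶜ ≤ M := by
    rw [card_compl, List.toFinset_card_of_nodup hl.nodup]
    omega
  obtain ⟨l', hl', toFinset_l'⟩ := hl.exists_union card_compl_le (l.toFinsetᶜ.erase v)
    (disjoint_compl_left.mono_left (erase_subset _ _))
    fun u hu ↦ (hP u (by simpa using mem_of_mem_erase hu)).2
  have toFinset_eq : l'.toFinset = univ.erase v := by
    rw [toFinset_l']
    ext u
    simp only [mem_union, mem_erase, mem_compl, List.mem_toFinset, mem_univ, and_true]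
    exact ⟨fun h ↦ by rintro rfl; tauto, by tauto⟩
  obtain ⟨u, w, hw, length_w, support_w⟩ := hl'.exists_isCycle
  refine ⟨u, w, hw, ?_, fun x hx ↦ support_w x ?_⟩
  · rw [length_w, ← List.toFinset_card_of_nodup hl'.nodup, toFinset_eq,
      card_erase_of_mem (mem_univ v), card_univ]
  · rw [← List.mem_toFinset, toFinset_eq, mem_erase]
    exact ⟨fun h ↦ (hP v hv).1 (h ▸ hx), mem_univ x⟩

end Absorption

/-! ### Rerouting a Hamilton cycle -/

section Rerouting

variable {V : Type*} [Fintype V] {G : SimpleGraph V} {P : V → Prop} {f : ℕ → V} {s : ℕ}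

theorem IsCycleParam.hasNearSpanningCycle {M : ℕ} (hf : IsCycleParam G (Fintype.card V) f) {x : ℕ}
    {I : List ℕ} (hI : IsCycleList (G.comap f) I)
    (window : ∀ i ∈ I, i ∈ Set.Ico x (x + Fintype.card V))
    (missing : ∃ i ∈ Set.Ico x (x + Fintype.card V), i ∉ I)
    (hP : ∀ i ∈ Set.Ico x (x + Fintype.card V), i ∉ I → P (f i))
    (hM : Fintype.card V ≤ I.length + M) : HasNearSpanningCycle G P M := by
  refine ⟨I.map f, hI.map fun i hi j hj ↦ hf.injOn_Ico x (window i hi) (window j hj), ?_, ?_,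
    by simpa using hM⟩
  · obtain ⟨i, hi, i_notMem⟩ := missing
    refine ⟨f i, fun mem ↦ ?_⟩
    obtain ⟨j, hj, hji⟩ := List.mem_map.1 mem
    exact i_notMem (hf.injOn_Ico x (window j hj) hi hji ▸ hj)
  · intro v hv
    obtain ⟨i, rfl⟩ := hf.surjective v
    obtain ⟨j, hj, hji⟩ := hf.exists_mem_Ico x i
    exact hji ▸ hP j hj fun mem ↦ hv (List.mem_map.2 ⟨j, mem, hji⟩)

/-- Fewer than `s` indices lie strictly between `a` and `b`, and their vertices satisfy `P`, so that
a near spanning cycle may jump over them. -/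
structure IsGap (P : V → Prop) (f : ℕ → V) (s a b : ℕ) : Prop where
  lt : a < b
  le_add : b ≤ a + s
  prop : ∀ i, a < i → i < b → P (f i)

omit [Fintype V] in
theorem IsGap.of_succ (hs : 1 ≤ s) (a : ℕ) : IsGap P f s a (a + 1) :=
  ⟨by omega, by omega, fun _ _ _ ↦ by omega⟩

theorem hasNearSpanningCycle_of_chord (hf : IsCycleParam G (Fintype.card V) f)
    (hs : 4 * s + 3 ≤ Fintype.card V) {a b : ℕ} (gap : IsGap P f s a b) (hab : a + 2 ≤ b)
    (chord : G.Adj (f a) (f b)) : HasNearSpanningCycle G P (4 * s) := by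
  have := gap.le_add
  have cycle : IsCycleList (G.comap f) (List.Ico b (a + Fintype.card V + 1)) := by
    refine ⟨by rw [List.Ico.length]; omega, List.Ico.nodup _ _, hf.isChain_Ico _ _, ?_⟩
    rw [getLast?_Ico_succ (by omega), head?_Ico (by omega)]
    simpa [hf.periodic a] using chord
  refine hf.hasNearSpanningCycle (x := a + 1) cycle ?_ ⟨a + 1, ?_, ?_⟩ ?_ ?_
  all_goals simp only [List.Ico.mem, Set.mem_Ico, List.Ico.length]
  · omega
  · omega
  · omega
  · exact fun i hi hib ↦ gap.prop i (by omega) (by omega)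
  · omega

theorem hasNearSpanningCycle_of_three_gaps (hf : IsCycleParam G (Fintype.card V) f)
    (hs : 4 * s + 3 ≤ Fintype.card V) {a₁ b₁ a₂ b₂ a₃ b₃ : ℕ} (gap₁ : IsGap P f s a₁ b₁)
    (gap₂ : IsGap P f s a₂ b₂) (gap₃ : IsGap P f s a₃ b₃) (h₁ : a₁ + 2 ≤ b₁) (h₁₂ : b₁ ≤ a₂)
    (h₂₃ : b₂ ≤ a₃) (h₃₁ : b₃ ≤ a₁ + Fintype.card V) (adj₂₁ : G.Adj (f a₂) (f a₁))
    (adj₂₃ : G.Adj (f b₂) (f b₃)) (adj₃₁ : G.Adj (f a₃) (f b₁)) :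
    HasNearSpanningCycle G P (4 * s) := by
  obtain ⟨_, _, hP₁⟩ := gap₁
  obtain ⟨_, _, hP₂⟩ := gap₂
  obtain ⟨_, _, hP₃⟩ := gap₃
  set I := List.Ico b₁ (a₂ + 1) ++
    ((List.Ico b₃ (a₁ + Fintype.card V + 1)).reverse ++ List.Ico b₂ (a₃ + 1)) with hI
  have mem_I (i : ℕ) : i ∈ I ↔ i ∈ Set.Icc b₁ a₂ ∨ i ∈ Set.Icc b₃ (a₁ + Fintype.card V) ∨
      i ∈ Set.Icc b₂ a₃ := by
    simp [hI, List.Ico.mem]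
  have length_I : I.length = (a₂ + 1 - b₁) + ((a₁ + Fintype.card V + 1 - b₃) + (a₃ + 1 - b₂)) := by
    simp [hI]
  have nodup_I : I.Nodup := by
    simp only [hI, List.nodup_append', List.nodup_reverse, List.Ico.nodup, List.disjoint_left,
      List.mem_append, List.mem_reverse, List.Ico.mem, true_and]
    exact ⟨fun i ↦ by omega, fun i ↦ by omega⟩
  have chain_I : I.IsChain (G.comap f).Adj := by
    refine List.isChain_append.2 ⟨hf.isChain_Ico _ _, List.isChain_append.2
      ⟨hf.isChain_reverse_Ico _ _, hf.isChain_Ico _ _, ?_⟩, ?_⟩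
    · simpa [head?_Ico (show b₃ < a₁ + Fintype.card V + 1 by omega),
        head?_Ico (show b₂ < a₃ + 1 by omega)] using adj₂₃.symm
    · simpa [getLast?_Ico_succ h₁₂, getLast?_Ico_succ h₃₁, hf.periodic a₁] using adj₂₁
  have cycle : IsCycleList (G.comap f) I := by
    refine ⟨by omega, nodup_I, chain_I, ?_⟩
    simpa [hI, getLast?_Ico_succ h₂₃, head?_Ico (show b₁ < a₂ + 1 by omega)] using adj₃₁
  refine hf.hasNearSpanningCycle (x := a₁ + 1) cycle ?_ ⟨a₁ + 1, ?_, ?_⟩ ?_ (by omega)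
  all_goals simp only [mem_I, Set.mem_Ico, Set.mem_Icc]
  · omega
  · omega
  · omega
  · intro i hi hiI
    obtain h | h | h : i < b₁ ∨ (a₂ < i ∧ i < b₂) ∨ (a₃ < i ∧ i < b₃) := by omega
    exacts [hP₁ i (by omega) h, hP₂ i h.1 h.2, hP₃ i h.1 h.2]

/-- The gaps `(aᵢ, bᵢ)` follow each other on a cycle of length `n`, and the first one is
nonempty. -/
structure FourGaps (P : V → Prop) (f : ℕ → V) (s n a₁ b₁ a₂ b₂ a₃ b₃ a₄ b₄ : ℕ) : Prop where
  gap₁ : IsGap P f s a₁ b₁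
  gap₂ : IsGap P f s a₂ b₂
  gap₃ : IsGap P f s a₃ b₃
  gap₄ : IsGap P f s a₄ b₄
  le₁₂ : b₁ ≤ a₂
  le₂₃ : b₂ ≤ a₃
  le₃₄ : b₃ ≤ a₄
  le₄₁ : b₄ ≤ a₁ + n
  nonempty : a₁ + 2 ≤ b₁

/-- The list of indices `x, …, x', y', …, y, z, …, z', t', …, t`. -/
def zigzag (x x' y y' z z' t t' : ℕ) : List ℕ :=
  List.Ico x (x' + 1) ++ ((List.Ico y (y' + 1)).reverse ++
    (List.Ico z (z' + 1) ++ (List.Ico t (t' + 1)).reverse))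

omit [Fintype V] in
theorem IsCycleParam.isCycleList_zigzag {n : ℕ} (hf : IsCycleParam G n f)
    {x x' y y' z z' t t' : ℕ} (three_le : 3 ≤ (zigzag x x' y y' z z' t t').length)
    (nodup : (zigzag x x' y y' z z' t t').Nodup)
    (hx : x ≤ x') (hy : y ≤ y') (hz : z ≤ z') (ht : t ≤ t') (adj_xy : G.Adj (f x') (f y'))
    (adj_yz : G.Adj (f y) (f z)) (adj_zt : G.Adj (f z') (f t')) (adj_tx : G.Adj (f t) (f x)) :
    IsCycleList (G.comap f) (zigzag x x' y y' z z' t t') where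
  three_le_length := three_le
  nodup := nodup
  isChain := by
    refine List.isChain_append.2 ⟨hf.isChain_Ico _ _, List.isChain_append.2
      ⟨hf.isChain_reverse_Ico _ _, List.isChain_append.2
        ⟨hf.isChain_Ico _ _, hf.isChain_reverse_Ico _ _, ?_⟩, ?_⟩, ?_⟩
    · simpa [getLast?_Ico_succ hz, getLast?_Ico_succ ht] using adj_zt
    · simpa [head?_Ico (Nat.lt_succ_of_le hz), head?_Ico (Nat.lt_succ_of_le hy)] using adj_yz
    · simpa [getLast?_Ico_succ hx, getLast?_Ico_succ hy] using adj_xy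
  adj_getLast_head := by
    simpa [zigzag, head?_Ico (Nat.lt_succ_of_le hx), head?_Ico (Nat.lt_succ_of_le ht)] using adj_tx

namespace FourGaps

variable {a₁ b₁ a₂ b₂ a₃ b₃ a₄ b₄ : ℕ}

theorem hasNearSpanningCycle_of_perm_zigzag (hf : IsCycleParam G (Fintype.card V) f)
    (hs : 4 * s + 3 ≤ Fintype.card V)
    (gaps : FourGaps P f s (Fintype.card V) a₁ b₁ a₂ b₂ a₃ b₃ a₄ b₄)
    {x x' y y' z z' t t' : ℕ}
    (perm : (List.Ico b₁ (a₂ + 1) ++ (List.Ico b₂ (a₃ + 1) ++ (List.Ico b₃ (a₄ + 1) ++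
      List.Ico b₄ (a₁ + Fintype.card V + 1)))).Perm (zigzag x x' y y' z z' t t'))
    (hx : x ≤ x') (hy : y ≤ y') (hz : z ≤ z') (ht : t ≤ t') (adj_xy : G.Adj (f x') (f y'))
    (adj_yz : G.Adj (f y) (f z)) (adj_zt : G.Adj (f z') (f t')) (adj_tx : G.Adj (f t) (f x)) :
    HasNearSpanningCycle G P (4 * s) := by
  obtain ⟨⟨_, _, hP₁⟩, ⟨_, _, hP₂⟩, ⟨_, _, hP₃⟩, ⟨_, _, hP₄⟩, _, _, _, _, _⟩ := gaps
  have length_eq := perm.length_eq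
  simp only [List.length_append, List.Ico.length] at length_eq
  have nodup : (zigzag x x' y y' z z' t t').Nodup := by
    rw [← perm.nodup_iff]
    simp only [List.nodup_append', List.Ico.nodup, List.disjoint_left, List.mem_append,
      List.Ico.mem, true_and]
    exact ⟨⟨fun i ↦ by omega, fun i ↦ by omega⟩, fun i ↦ by omega⟩
  have cycle := hf.isCycleList_zigzag (by omega) nodup hx hy hz ht adj_xy adj_yz adj_zt adj_tx
  refine hf.hasNearSpanningCycle (x := a₁ + 1) cycle ?_ ⟨a₁ + 1, ?_, ?_⟩ ?_ (by omega)
  all_goals simp only [← perm.mem_iff, List.mem_append, List.Ico.mem, Set.mem_Ico]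
  · omega
  · omega
  · omega
  · intro i hi hiI
    obtain h | h | h | h :
        i < b₁ ∨ (a₂ < i ∧ i < b₂) ∨ (a₃ < i ∧ i < b₃) ∨ (a₄ < i ∧ i < b₄) := by omega
    exacts [hP₁ i (by omega) h, hP₂ i h.1 h.2, hP₃ i h.1 h.2, hP₄ i h.1 h.2]

theorem hasNearSpanningCycle_of_left_crossing (hf : IsCycleParam G (Fintype.card V) f)
    (hs : 4 * s + 3 ≤ Fintype.card V)
    (gaps : FourGaps P f s (Fintype.card V) a₁ b₁ a₂ b₂ a₃ b₃ a₄ b₄)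
    (h₁₃ : G.Adj (f a₁) (f a₃)) (h₂₄ : G.Adj (f a₂) (f a₄))
    (h : (G.Adj (f b₁) (f b₂) ∧ G.Adj (f b₃) (f b₄)) ∨
      (G.Adj (f b₁) (f b₄) ∧ G.Adj (f b₂) (f b₃))) : HasNearSpanningCycle G P (4 * s) := by
  obtain ⟨h₁₂, h₃₄⟩ | ⟨h₁₄, h₂₃⟩ := h
  · refine gaps.hasNearSpanningCycle_of_perm_zigzag hf hs (List.perm_iff_count.2 fun i ↦ ?_)
      gaps.le₁₂ gaps.le₃₄ gaps.le₄₁ gaps.le₂₃ h₂₄ h₃₄ ((hf.periodic a₁).symm ▸ h₁₃) h₁₂.symm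
    simp only [zigzag, List.count_append, List.count_reverse]
    omega
  · refine gaps.hasNearSpanningCycle_of_perm_zigzag hf hs (List.perm_iff_count.2 fun i ↦ ?_)
      gaps.le₁₂ gaps.le₃₄ gaps.le₂₃ gaps.le₄₁ h₂₄ h₂₃.symm ((hf.periodic a₁).symm ▸ h₁₃.symm)
      h₁₄.symm
    simp only [zigzag, List.count_append, List.count_reverse]
    omega

theorem hasNearSpanningCycle_of_right_crossing (hf : IsCycleParam G (Fintype.card V) f)
    (hs : 4 * s + 3 ≤ Fintype.card V)
    (gaps : FourGaps P f s (Fintype.card V) a₁ b₁ a₂ b₂ a₃ b₃ a₄ b₄)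
    (h₁₃ : G.Adj (f b₁) (f b₃)) (h₂₄ : G.Adj (f b₂) (f b₄))
    (h : (G.Adj (f a₁) (f a₂) ∧ G.Adj (f a₃) (f a₄)) ∨
      (G.Adj (f a₁) (f a₄) ∧ G.Adj (f a₂) (f a₃))) : HasNearSpanningCycle G P (4 * s) := by
  obtain ⟨h₁₂, h₃₄⟩ | ⟨h₁₄, h₂₃⟩ := h
  · refine gaps.hasNearSpanningCycle_of_perm_zigzag hf hs (List.perm_iff_count.2 fun i ↦ ?_)
      gaps.le₁₂ gaps.le₄₁ gaps.le₂₃ gaps.le₃₄ ((hf.periodic a₁).symm ▸ h₁₂.symm) h₂₄.symm h₃₄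
      h₁₃.symm
    simp only [zigzag, List.count_append, List.count_reverse]
    omega
  · refine gaps.hasNearSpanningCycle_of_perm_zigzag hf hs (List.perm_iff_count.2 fun i ↦ ?_)
      gaps.le₁₂ gaps.le₂₃ gaps.le₄₁ gaps.le₃₄ h₂₃ h₂₄ ((hf.periodic a₁).symm ▸ h₁₄) h₁₃.symm
    simp only [zigzag, List.count_append, List.count_reverse]
    omega

end FourGaps

end Rerouting

/-! ### Blocks -/

section Blocks

variable {V : Type*} {G : SimpleGraph V} {P : V → Prop} {f : ℕ → V} {ℓ : ℕ} {J : Finset ℕ}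
  {σ : Bool} {c c' j j' j₁ j₂ j₃ j₄ i i' : ℕ}

/-- The first index of the `j`-th block; the blocks are consecutive intervals of length
`2 * ℓ + 2`. -/
def blockStart (ℓ j : ℕ) : ℕ := j * (2 * ℓ + 2)

/-- The left half (`σ = false`) or the right half (`σ = true`) of the `j`-th block. One index is
left out after each half, so that distinct indices of opposite halves are never consecutive. -/
def halfBlock (ℓ : ℕ) : Bool → ℕ → Finset ℕ
  | false, j => Ico (blockStart ℓ j) (blockStart ℓ j + ℓ)
  | true, j => Ico (blockStart ℓ j + (ℓ + 1)) (blockStart ℓ j + (2 * ℓ + 1))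

/-- Two blocks are adjacent if an edge of `G` joins their left halves (`σ = false`) or their right
halves (`σ = true`). -/
def blockGraph (G : SimpleGraph V) (f : ℕ → V) (ℓ : ℕ) (σ : Bool) : SimpleGraph ℕ where
  Adj j j' := j ≠ j' ∧ ∃ i ∈ halfBlock ℓ σ j, ∃ i' ∈ halfBlock ℓ σ j', G.Adj (f i) (f i')
  symm := ⟨fun _ _ ⟨ne, i, hi, i', hi', adj⟩ ↦ ⟨ne.symm, i', hi', i, hi, adj.symm⟩⟩
  loopless := ⟨fun _ h ↦ h.1 rfl⟩

theorem blockStart_add_le (h : j < j') : blockStart ℓ j + (2 * ℓ + 2) ≤ blockStart ℓ j' := by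
  simpa only [blockStart, Nat.succ_mul] using Nat.mul_le_mul_right (2 * ℓ + 2) (Nat.succ_le_of_lt h)

theorem card_halfBlock (ℓ : ℕ) (σ : Bool) (j : ℕ) : #(halfBlock ℓ σ j) = ℓ := by
  cases σ <;> simp [halfBlock, two_mul, add_tsub_add_eq_tsub_left]

theorem le_of_mem_halfBlock (hi : i ∈ halfBlock ℓ σ j) : blockStart ℓ j ≤ i := by
  cases σ <;> simp only [halfBlock, mem_Ico] at hi <;> omega

theorem succ_lt_of_mem_halfBlock (hi : i ∈ halfBlock ℓ σ j) :
    i + 1 < blockStart ℓ j + (2 * ℓ + 2) := by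
  cases σ <;> simp only [halfBlock, mem_Ico] at hi <;> omega

theorem add_two_le_of_mem_halfBlock (hi : i ∈ halfBlock ℓ false j) (hi' : i' ∈ halfBlock ℓ true j) :
    i + 2 ≤ i' := by
  simp only [halfBlock, mem_Ico] at hi hi'
  omega

theorem lt_of_mem_halfBlock {τ : Bool} (h : j < j') (hi : i ∈ halfBlock ℓ σ j)
    (hi' : i' ∈ halfBlock ℓ τ j') : i + 1 < i' :=
  (succ_lt_of_mem_halfBlock hi).trans_le ((blockStart_add_le h).trans (le_of_mem_halfBlock hi'))

theorem disjoint_halfBlock (h : j ≠ j') : Disjoint (halfBlock ℓ σ j) (halfBlock ℓ σ j') := by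
  rw [Finset.disjoint_left]
  intro i hi hi'
  rcases h.lt_or_gt with h | h
  · exact absurd (lt_of_mem_halfBlock h hi hi') (by omega)
  · exact absurd (lt_of_mem_halfBlock h hi' hi) (by omega)

/-- A parametrized Hamilton cycle such that the vertices of the blocks in `J` satisfy `P`, in a
graph without a near spanning cycle for `P`. -/
structure IsObstructed [Fintype V] (G : SimpleGraph V) (P : V → Prop) (f : ℕ → V) (ℓ : ℕ)
    (J : Finset ℕ) : Prop where
  param : IsCycleParam G (Fintype.card V) f
  le_card : 4 * (2 * ℓ + 2) + 3 ≤ Fintype.card V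
  fit : ∀ j ∈ J, blockStart ℓ j + (2 * ℓ + 2) ≤ Fintype.card V
  prop : ∀ j ∈ J, ∀ i, blockStart ℓ j ≤ i → i < blockStart ℓ j + (2 * ℓ + 2) → P (f i)
  not_hasNearSpanningCycle : ¬ HasNearSpanningCycle G P (4 * (2 * ℓ + 2))

namespace IsObstructed

variable [Fintype V]

theorem isGap (h : IsObstructed G P f ℓ J) (hj : j ∈ J) (hi : blockStart ℓ j ≤ i) (hii' : i < i')
    (hi' : i' < blockStart ℓ j + (2 * ℓ + 2)) : IsGap P f (2 * ℓ + 2) i i' where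
  lt := hii'
  le_add := by omega
  prop a ha ha' := h.prop j hj a (by omega) (by omega)

theorem isGap_halfBlock (h : IsObstructed G P f ℓ J) (hj : j ∈ J) (hi : i ∈ halfBlock ℓ false j)
    (hi' : i' ∈ halfBlock ℓ true j) : IsGap P f (2 * ℓ + 2) i i' :=
  h.isGap hj (le_of_mem_halfBlock hi) (by have := add_two_le_of_mem_halfBlock hi hi'; omega)
    (by have := succ_lt_of_mem_halfBlock hi'; omega)

theorem not_adj_halfBlock (h : IsObstructed G P f ℓ J) (hj : j ∈ J) (hi : i ∈ halfBlock ℓ σ j)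
    (hi' : i' ∈ halfBlock ℓ σ j) (hii' : i + 2 ≤ i') : ¬ G.Adj (f i) (f i') := fun adj ↦
  h.not_hasNearSpanningCycle <| hasNearSpanningCycle_of_chord h.param h.le_card
    (h.isGap hj (le_of_mem_halfBlock hi) (by omega)
      (by have := succ_lt_of_mem_halfBlock hi'; omega)) hii' adj

theorem injOn_halfBlock (h : IsObstructed G P f ℓ J) (σ : Bool) :
    Set.InjOn f (J.biUnion (halfBlock ℓ σ)) := by
  refine h.param.injOn_Iio.mono fun i hi ↦ ?_
  obtain ⟨j, hj, hi⟩ := mem_biUnion.1 (mem_coe.1 hi)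
  have := h.fit j hj
  have := succ_lt_of_mem_halfBlock hi
  exact Set.mem_Iio.2 (by omega)

theorem fourGaps (h : IsObstructed G P f ℓ J) (hj₁ : j₁ ∈ J) (hj₂ : j₂ ∈ J) (hj₃ : j₃ ∈ J)
    (hj₄ : j₄ ∈ J) (h₁₂ : j₁ < j₂) (h₂₃ : j₂ < j₃) (h₃₄ : j₃ < j₄) {a₁ b₁ a₂ b₂ a₃ b₃ a₄ b₄ : ℕ}
    (ha₁ : a₁ ∈ halfBlock ℓ false j₁) (hb₁ : b₁ ∈ halfBlock ℓ true j₁)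
    (ha₂ : a₂ ∈ halfBlock ℓ false j₂) (hb₂ : b₂ ∈ halfBlock ℓ true j₂)
    (ha₃ : a₃ ∈ halfBlock ℓ false j₃) (hb₃ : b₃ ∈ halfBlock ℓ true j₃)
    (ha₄ : a₄ ∈ halfBlock ℓ false j₄) (hb₄ : b₄ ∈ halfBlock ℓ true j₄) :
    FourGaps P f (2 * ℓ + 2) (Fintype.card V) a₁ b₁ a₂ b₂ a₃ b₃ a₄ b₄ where
  gap₁ := h.isGap_halfBlock hj₁ ha₁ hb₁
  gap₂ := h.isGap_halfBlock hj₂ ha₂ hb₂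
  gap₃ := h.isGap_halfBlock hj₃ ha₃ hb₃
  gap₄ := h.isGap_halfBlock hj₄ ha₄ hb₄
  le₁₂ := by have := lt_of_mem_halfBlock h₁₂ hb₁ ha₂; omega
  le₂₃ := by have := lt_of_mem_halfBlock h₂₃ hb₂ ha₃; omega
  le₃₄ := by have := lt_of_mem_halfBlock h₃₄ hb₃ ha₄; omega
  le₄₁ := by
    have := h.fit j₄ hj₄
    have := succ_lt_of_mem_halfBlock hb₄
    omega
  nonempty := add_two_le_of_mem_halfBlock ha₁ hb₁

theorem not_crossing (h : IsObstructed G P f ℓ J) (hj₁ : j₁ ∈ J) (hj₂ : j₂ ∈ J) (hj₃ : j₃ ∈ J)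
    (hj₄ : j₄ ∈ J) (h₁₂ : j₁ < j₂) (h₂₃ : j₂ < j₃) (h₃₄ : j₃ < j₄)
    (adj₁₃ : (blockGraph G f ℓ σ).Adj j₁ j₃) (adj₂₄ : (blockGraph G f ℓ σ).Adj j₂ j₄) :
    ¬ (((blockGraph G f ℓ !σ).Adj j₁ j₂ ∧ (blockGraph G f ℓ !σ).Adj j₃ j₄) ∨
      ((blockGraph G f ℓ !σ).Adj j₁ j₄ ∧ (blockGraph G f ℓ !σ).Adj j₂ j₃)) := by
  obtain ⟨-, x₁, hx₁, x₃, hx₃, adj_x₁₃⟩ := adj₁₃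
  obtain ⟨-, x₂, hx₂, x₄, hx₄, adj_x₂₄⟩ := adj₂₄
  rintro (⟨⟨-, y₁, hy₁, y₂, hy₂, adj_y₁₂⟩, -, y₃, hy₃, y₄, hy₄, adj_y₃₄⟩ |
    ⟨⟨-, y₁, hy₁, y₄, hy₄, adj_y₁₄⟩, -, y₂, hy₂, y₃, hy₃, adj_y₂₃⟩) <;>
  refine h.not_hasNearSpanningCycle ?_ <;>
  cases σ
  · exact (h.fourGaps hj₁ hj₂ hj₃ hj₄ h₁₂ h₂₃ h₃₄ hx₁ hy₁ hx₂ hy₂ hx₃ hy₃ hx₄ hy₄)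
      |>.hasNearSpanningCycle_of_left_crossing h.param h.le_card adj_x₁₃ adj_x₂₄
      (.inl ⟨adj_y₁₂, adj_y₃₄⟩)
  · exact (h.fourGaps hj₁ hj₂ hj₃ hj₄ h₁₂ h₂₃ h₃₄ hy₁ hx₁ hy₂ hx₂ hy₃ hx₃ hy₄ hx₄)
      |>.hasNearSpanningCycle_of_right_crossing h.param h.le_card adj_x₁₃ adj_x₂₄
      (.inl ⟨adj_y₁₂, adj_y₃₄⟩)
  · exact (h.fourGaps hj₁ hj₂ hj₃ hj₄ h₁₂ h₂₃ h₃₄ hx₁ hy₁ hx₂ hy₂ hx₃ hy₃ hx₄ hy₄)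
      |>.hasNearSpanningCycle_of_left_crossing h.param h.le_card adj_x₁₃ adj_x₂₄
      (.inr ⟨adj_y₁₄, adj_y₂₃⟩)
  · exact (h.fourGaps hj₁ hj₂ hj₃ hj₄ h₁₂ h₂₃ h₃₄ hy₁ hx₁ hy₂ hx₂ hy₃ hx₃ hy₄ hx₄)
      |>.hasNearSpanningCycle_of_right_crossing h.param h.le_card adj_x₁₃ adj_x₂₄
      (.inr ⟨adj_y₁₄, adj_y₂₃⟩)

theorem not_adj_of_common_neighbors (h : IsObstructed G P f ℓ J) {b b' : ℕ} (hc : c ∈ J)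
    (hc' : c' ∈ J) (hb : b ∈ J) (hb' : b' ∈ J) (adj_cc' : (blockGraph G f ℓ !σ).Adj c c')
    (adj_bc : (blockGraph G f ℓ σ).Adj b c) (adj_bc' : (blockGraph G f ℓ σ).Adj b c')
    (adj_b'c : (blockGraph G f ℓ σ).Adj b' c) (adj_b'c' : (blockGraph G f ℓ σ).Adj b' c') :
    ¬ (blockGraph G f ℓ !σ).Adj b b' := by
  intro adj_bb'
  wlog hcc' : c < c' generalizing c c'
  · exact this hc' hc adj_cc'.symm adj_bc' adj_bc adj_b'c' adj_b'c
      (adj_cc'.ne.lt_or_gt.resolve_left hcc')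
  wlog hbb' : b < b' generalizing b b'
  · exact this hb' hb adj_bb'.symm adj_b'c adj_b'c' adj_bc adj_bc'
      (adj_bb'.ne.lt_or_gt.resolve_left hbb')
  wlog hcb : c < b generalizing b b' c c'
  · exact this hb hb' adj_bb' hbb' hc hc' adj_cc' adj_bc.symm adj_b'c.symm adj_bc'.symm
      adj_b'c'.symm hcc' (adj_bc.ne.lt_or_gt.resolve_right hcb)
  rcases adj_bc'.ne.lt_or_gt with hbc' | hc'b
  · rcases adj_b'c'.ne.lt_or_gt with hb'c' | hc'b'
    · exact h.not_crossing hc hb hb' hc' hcb hbb' hb'c' adj_b'c.symm adj_bc'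
        (.inr ⟨adj_cc', adj_bb'⟩)
    · exact h.not_crossing (σ := !σ) hc hb hc' hb' hcb hbc' hc'b' adj_cc' adj_bb'
        (by simpa only [Bool.not_not] using .inl ⟨adj_bc.symm, adj_b'c'.symm⟩)
  · exact h.not_crossing hc hc' hb hb' hcc' hc'b hbb' adj_bc.symm adj_b'c'.symm
      (.inl ⟨adj_cc', adj_bb'⟩)

end IsObstructed

end Blocks

/-! ### Common neighbours of blocks and detours -/

section Detours

open scoped Classical

variable {V : Type*} [Fintype V] {G : SimpleGraph V} {P : V → Prop} {f : ℕ → V} {ℓ : ℕ}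
  {J : Finset ℕ}

theorem IsObstructed.card_le_indepNum_of_mod_two {σ : Bool} {c c' : ℕ} (h : IsObstructed G P f ℓ J)
    (hc : c ∈ J) (hc' : c' ∈ J) (adj_cc' : (blockGraph G f ℓ !σ).Adj c c') {U : Finset ℕ}
    (hU : ∀ i ∈ U, ∃ b ∈ J, (blockGraph G f ℓ σ).Adj b c ∧ (blockGraph G f ℓ σ).Adj b c' ∧
      i ∈ halfBlock ℓ (!σ) b)
    (parity : ∀ i ∈ U, ∀ i' ∈ U, i % 2 = i' % 2) : #U ≤ G.indepNum := by
  by_contra! card_lt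
  have injOn : Set.InjOn f U := (h.injOn_halfBlock !σ).mono fun i hi ↦
    let ⟨b, hb, _, _, hib⟩ := hU i hi
    mem_coe.2 (mem_biUnion.2 ⟨b, hb, hib⟩)
  obtain ⟨i, hi, i', hi', hii', adj⟩ := exists_lt_adj_of_indepNum_lt_card injOn card_lt
  obtain ⟨b, hb, adj_bc, adj_bc', hib⟩ := hU i hi
  obtain ⟨b', hb', adj_b'c, adj_b'c', hib'⟩ := hU i' hi'
  obtain rfl | hbb' := eq_or_ne b b'
  · have := parity i hi i' hi'
    exact h.not_adj_halfBlock hb hib hib' (by omega) adj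
  · exact h.not_adj_of_common_neighbors hc hc' hb hb' adj_cc' adj_bc adj_bc' adj_b'c adj_b'c'
      ⟨hbb', i, hib, i', hib', adj⟩

theorem IsObstructed.mul_card_common_neighbors_le {σ : Bool} {c c' : ℕ}
    (h : IsObstructed G P f ℓ J) (hc : c ∈ J) (hc' : c' ∈ J)
    (adj_cc' : (blockGraph G f ℓ !σ).Adj c c') :
    ℓ * #{b ∈ J | (blockGraph G f ℓ σ).Adj b c ∧ (blockGraph G f ℓ σ).Adj b c'} ≤
      2 * G.indepNum := by
  set Q : Finset ℕ := {b ∈ J | (blockGraph G f ℓ σ).Adj b c ∧ (blockGraph G f ℓ σ).Adj b c'}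
  set T := Q.biUnion (halfBlock ℓ !σ)
  have mem_T {i : ℕ} (hi : i ∈ T) : ∃ b ∈ J, (blockGraph G f ℓ σ).Adj b c ∧
      (blockGraph G f ℓ σ).Adj b c' ∧ i ∈ halfBlock ℓ (!σ) b := by
    simpa only [T, Q, mem_biUnion, mem_filter, and_assoc] using hi
  have even_le : #{i ∈ T | i % 2 = 0} ≤ G.indepNum :=
    h.card_le_indepNum_of_mod_two hc hc' adj_cc' (fun i hi ↦ mem_T (mem_filter.1 hi).1)
      fun i hi i' hi' ↦ (mem_filter.1 hi).2.trans (mem_filter.1 hi').2.symm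
  have odd_le : #{i ∈ T | ¬ i % 2 = 0} ≤ G.indepNum :=
    h.card_le_indepNum_of_mod_two hc hc' adj_cc' (fun i hi ↦ mem_T (mem_filter.1 hi).1)
      fun i hi i' hi' ↦ by
        have := (mem_filter.1 hi).2
        have := (mem_filter.1 hi').2
        omega
  calc ℓ * #Q = #T := by
        rw [card_biUnion fun _ _ _ _ ↦ disjoint_halfBlock]
        simp [card_halfBlock, mul_comm]
    _ ≤ 2 * G.indepNum := by
        rw [← card_filter_add_card_filter_not (s := T) (fun i ↦ i % 2 = 0)]
        omega

/-- The edge between `v` and `y`, together with an edge from `w` to some `y'` between `y + 2` and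
`z`, allows a near spanning cycle to leave the gap `(y, y')` through `v` or `w`; the index `u` is
where the cycle is to be entered again. -/
structure IsDetour (G : SimpleGraph V) (P : V → Prop) (f : ℕ → V) (s y z v w u : ℕ) : Prop where
  gap_left : IsGap P f s v u
  gap_right : IsGap P f s w u
  adj_left : G.Adj (f v) (f y)
  exists_adj_right : ∃ y', IsGap P f s y y' ∧ y + 2 ≤ y' ∧ y' ≤ z ∧ G.Adj (f w) (f y')

omit [Fintype V] in
theorem IsDetour.add_period {n s y z v w u : ℕ} (h : IsDetour G P f s y z v w u)
    (hf : Function.Periodic f n) : IsDetour G P f s y z (v + n) (w + n) (u + n) := by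
  have gap_add {a b : ℕ} (gap : IsGap P f s a b) : IsGap P f s (a + n) (b + n) := by
    obtain ⟨_, _, hP⟩ := gap
    refine ⟨by omega, by omega, fun i hi hi' ↦ ?_⟩
    rw [← Nat.sub_add_cancel (show n ≤ i by omega), hf]
    exact hP _ (by omega) (by omega)
  exact ⟨gap_add h.gap_left, gap_add h.gap_right, hf v ▸ h.adj_left, hf w ▸ h.exists_adj_right⟩

/-- Some detour for the gaps `(y, y')` with `y' ≤ z` takes place between `t` and `t + r`. -/
def HasDetour (G : SimpleGraph V) (P : V → Prop) (f : ℕ → V) (s y z r t : ℕ) : Prop :=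
  ∃ v w u, t ≤ v ∧ t ≤ w ∧ u ≤ t + r ∧ IsDetour G P f s y z v w u

theorem card_le_indepNum_of_hasDetour_of_le {s y z r : ℕ}
    (hf : IsCycleParam G (Fintype.card V) f) (hs : 4 * s + 3 ≤ Fintype.card V)
    (not_near : ¬ HasNearSpanningCycle G P (4 * s)) {T : Finset ℕ}
    (separated : ∀ t ∈ T, ∀ t' ∈ T, t < t' → t + r ≤ t')
    (le : ∀ t ∈ T, y < t ∧ z ≤ t ∧ t + r ≤ y + Fintype.card V)
    (detour : ∀ t ∈ T, HasDetour G P f s y z r t) : #T ≤ G.indepNum := by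
  by_contra! card_lt
  choose! v w u htv htw hur hvwu using detour
  have mono {t t' : ℕ} (ht : t ∈ T) (ht' : t' ∈ T) (htt' : t < t') : u t ≤ w t' :=
    (hur t ht).trans ((separated t ht t' ht' htt').trans (htw t' ht'))
  have strictMono : StrictMonoOn u T := fun t ht t' ht' htt' ↦
    (mono ht ht' htt').trans_lt (hvwu t' ht').gap_right.lt
  have injOn : Set.InjOn (f ∘ u) T := by
    refine (hf.injOn_Ico (y + 1)).comp strictMono.injOn fun t ht ↦ ?_
    have := le t ht
    have := htw t ht
    have := (hvwu t ht).gap_right.lt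
    have := hur t ht
    exact Set.mem_Ico.2 (by omega)
  obtain ⟨t, ht, t', ht', htt', adj⟩ := exists_lt_adj_of_indepNum_lt_card injOn card_lt
  obtain ⟨y', gap, hyy', hy'z, adj_right⟩ := (hvwu t' ht').exists_adj_right
  have := le t ht
  have := le t' ht'
  have := htv t ht
  have := hur t' ht'
  exact not_near <| hasNearSpanningCycle_of_three_gaps hf hs gap (hvwu t ht).gap_left
    (hvwu t' ht').gap_right hyy' (by omega) (mono ht ht' htt') (by omega) (hvwu t ht).adj_left adj
    adj_right

theorem card_le_indepNum_of_hasDetour {s y z r : ℕ}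
    (hf : IsCycleParam G (Fintype.card V) f) (hs : 4 * s + 3 ≤ Fintype.card V)
    (not_near : ¬ HasNearSpanningCycle G P (4 * s)) (hyz : y < z) (hz : z ≤ Fintype.card V)
    {S : Finset ℕ} (separated : ∀ t ∈ S, ∀ t' ∈ S, t < t' → t + r ≤ t')
    (fit : ∀ t ∈ S, t + r ≤ Fintype.card V) (outside : ∀ t ∈ S, t + r ≤ y ∨ z ≤ t)
    (detour : ∀ t ∈ S, HasDetour G P f s y z r t) : #S ≤ G.indepNum := by
  -- Unrolling the cycle from `z` on: what lies before `y` is shifted by one period.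
  set lift : ℕ → ℕ := fun t ↦ if t < z then t + Fintype.card V else t with lift_def
  have r_pos {t : ℕ} (ht : t ∈ S) : 0 < r := by
    obtain ⟨v, w, u, htv, -, hur, hvwu⟩ := detour t ht
    have := hvwu.gap_left.lt
    omega
  have lift_injOn : Set.InjOn lift S := by
    intro t ht t' ht' htt'
    have := r_pos ht
    have := fit t ht
    have := fit t' ht'
    simp only [lift_def] at htt'
    split_ifs at htt' <;> omega
  rw [← card_image_of_injOn lift_injOn]
  refine card_le_indepNum_of_hasDetour_of_le (y := y) (z := z) (r := r) hf hs not_near ?_ ?_ ?_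
  · simp only [forall_mem_image, lift_def]
    intro t ht t' ht' htt'
    have := separated t ht t' ht'
    have := fit t ht
    have := fit t' ht'
    split_ifs at htt' ⊢ <;> omega
  · simp only [forall_mem_image, lift_def]
    intro t ht
    have := fit t ht
    have := outside t ht
    split_ifs <;> omega
  · simp only [forall_mem_image, lift_def]
    intro t ht
    obtain ⟨v, w, u, htv, htw, hur, hvwu⟩ := detour t ht
    split_ifs
    · exact ⟨_, _, _, by omega, by omega, by omega, hvwu.add_period hf.periodic⟩
    · exact ⟨v, w, u, htv, htw, hur, hvwu⟩

/-- Some two elements of `S` differ by at least two. -/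
def IsSpread (S : Finset ℕ) : Prop := ∃ a ∈ S, ∃ b ∈ S, a + 2 ≤ b

/-- The indices in a half of block `j` whose neighbours in the half of block `c` are spread. -/
noncomputable def spreadVertices (G : SimpleGraph V) (f : ℕ → V) (ℓ : ℕ) (σ : Bool) (j c : ℕ) :
    Finset ℕ :=
  {p ∈ halfBlock ℓ σ j | IsSpread {q ∈ halfBlock ℓ σ c | G.Adj (f p) (f q)}}

/-- The neighbours of a half of block `j` in the half of block `c` are spread. -/
def SpreadTo (G : SimpleGraph V) (f : ℕ → V) (ℓ : ℕ) (σ : Bool) (j c : ℕ) : Prop :=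
  IsSpread {q ∈ halfBlock ℓ σ c | ∃ p ∈ halfBlock ℓ σ j, G.Adj (f p) (f q)}

namespace IsObstructed

variable {σ : Bool} {c : ℕ}

theorem card_filter_hasDetour_le (h : IsObstructed G P f ℓ J) (hc : c ∈ J) {S : Finset ℕ} {r : ℕ}
    (separated : ∀ t ∈ S, ∀ t' ∈ S, t < t' → t + r ≤ t')
    (blocks : ∀ t ∈ S, ∃ j ∈ J.erase c,
      blockStart ℓ j ≤ t ∧ t + r ≤ blockStart ℓ j + (2 * ℓ + 2)) :
    #{t ∈ S | ∃ y ∈ halfBlock ℓ σ c,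
      HasDetour G P f (2 * ℓ + 2) y (blockStart ℓ c + (2 * ℓ + 2)) r t} ≤ ℓ * G.indepNum := by
  set z := blockStart ℓ c + (2 * ℓ + 2)
  have subset : {t ∈ S | ∃ y ∈ halfBlock ℓ σ c, HasDetour G P f (2 * ℓ + 2) y z r t} ⊆
      (halfBlock ℓ σ c).biUnion fun y ↦ {t ∈ S | HasDetour G P f (2 * ℓ + 2) y z r t} := by
    intro t
    simp only [mem_filter, mem_biUnion]
    tauto
  refine (card_le_card subset).trans
    ((card_biUnion_le_card_mul _ _ _ fun y hy ↦ ?_).trans_eq (by rw [card_halfBlock]))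
  have := succ_lt_of_mem_halfBlock hy
  refine card_le_indepNum_of_hasDetour h.param h.le_card h.not_hasNearSpanningCycle (by omega)
    (h.fit c hc) (fun t ht t' ht' ↦ separated t (mem_filter.1 ht).1 t' (mem_filter.1 ht').1)
    (fun t ht ↦ ?_) (fun t ht ↦ ?_) fun t ht ↦ (mem_filter.1 ht).2
  all_goals obtain ⟨j, hj, hjt, htj⟩ := blocks t (mem_filter.1 ht).1
  · exact htj.trans (h.fit j (mem_of_mem_erase hj))
  · have := le_of_mem_halfBlock hy
    rcases (ne_of_mem_erase hj).lt_or_gt with hjc | hcj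
    · have := blockStart_add_le (ℓ := ℓ) hjc
      exact .inl (by omega)
    · exact .inr ((blockStart_add_le hcj).trans hjt)

theorem exists_gap_of_mem_halfBlock (h : IsObstructed G P f ℓ J) (hc : c ∈ J) {w y y' : ℕ}
    (hy : y ∈ halfBlock ℓ σ c) (hy' : y' ∈ halfBlock ℓ σ c) (hyy' : y + 2 ≤ y')
    (adj : G.Adj (f w) (f y')) : ∃ y', IsGap P f (2 * ℓ + 2) y y' ∧ y + 2 ≤ y' ∧
      y' ≤ blockStart ℓ c + (2 * ℓ + 2) ∧ G.Adj (f w) (f y') := by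
  have := succ_lt_of_mem_halfBlock hy'
  exact ⟨y', h.isGap hc (le_of_mem_halfBlock hy) (by omega) (by omega), hyy', by omega, adj⟩

theorem sum_card_spreadVertices_le (h : IsObstructed G P f ℓ J) (hc : c ∈ J) :
    ∑ j ∈ J.erase c, #(spreadVertices G f ℓ σ j c) ≤ ℓ * G.indepNum := by
  simp only [spreadVertices]
  rw [← card_biUnion fun j _ j' _ hjj' ↦ disjoint_filter_filter (disjoint_halfBlock hjj')]
  set S := (J.erase c).biUnion (halfBlock ℓ σ)
  refine (card_le_card fun p hp ↦ ?_).trans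
    (h.card_filter_hasDetour_le (σ := σ) (S := S) (r := 1) hc (fun _ _ _ _ ↦ id) fun p hp ↦ ?_)
  · obtain ⟨j, hj, hp⟩ := mem_biUnion.1 hp
    obtain ⟨hp, y, hy, y', hy', hyy'⟩ := mem_filter.1 hp
    obtain ⟨hy, adj⟩ := mem_filter.1 hy
    obtain ⟨hy', adj'⟩ := mem_filter.1 hy'
    have gap : IsGap P f (2 * ℓ + 2) p (p + 1) := .of_succ (by omega) p
    exact mem_filter.2 ⟨mem_biUnion.2 ⟨j, hj, hp⟩, y, hy, p, p, p + 1, le_rfl, le_rfl, le_rfl, gap,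
      gap, adj, h.exists_gap_of_mem_halfBlock hc hy hy' hyy' adj'⟩
  · obtain ⟨j, hj, hp⟩ := mem_biUnion.1 hp
    exact ⟨j, hj, le_of_mem_halfBlock hp, (succ_lt_of_mem_halfBlock hp).le⟩

theorem card_filter_spreadTo_le (h : IsObstructed G P f ℓ J) (hc : c ∈ J) :
    #{j ∈ J.erase c | SpreadTo G f ℓ σ j c} ≤ ℓ * G.indepNum := by
  have strictMono : StrictMono (blockStart ℓ) := fun j j' hjj' ↦ by
    have := blockStart_add_le (ℓ := ℓ) hjj'
    omega
  rw [← card_image_of_injective _ strictMono.injective]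
  refine (card_le_card (image_subset_iff.2 fun j hj ↦ ?_)).trans
    (h.card_filter_hasDetour_le (σ := σ) (S := (J.erase c).image (blockStart ℓ)) (r := 2 * ℓ + 2)
      hc ?_ ?_)
  · obtain ⟨hj, y, hy, y', hy', hyy'⟩ := mem_filter.1 hj
    obtain ⟨hy, v, hv, adj⟩ := mem_filter.1 hy
    obtain ⟨hy', w, hw, adj'⟩ := mem_filter.1 hy'
    have := succ_lt_of_mem_halfBlock hv
    have := succ_lt_of_mem_halfBlock hw
    have gap {i : ℕ} (hi : i ∈ halfBlock ℓ σ j) (hi' : i ≤ max v w) :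
        IsGap P f (2 * ℓ + 2) i (max v w + 1) :=
      h.isGap (mem_of_mem_erase hj) (le_of_mem_halfBlock hi) (by omega) (by omega)
    exact mem_filter.2 ⟨mem_image_of_mem _ hj, y, hy, v, w, max v w + 1, le_of_mem_halfBlock hv,
      le_of_mem_halfBlock hw, by omega, gap hv (le_max_left _ _), gap hw (le_max_right _ _), adj,
      h.exists_gap_of_mem_halfBlock hc hy hy' hyy' adj'⟩
  · simp only [forall_mem_image]
    exact fun j _ j' _ hjj' ↦ blockStart_add_le (strictMono.lt_iff_lt.1 hjj')
  · simp only [forall_mem_image]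
    exact fun j hj ↦ ⟨j, hj, le_rfl, le_rfl⟩

end IsObstructed

end Detours

/-! ### Counting edges between blocks -/

section EdgeCounting

open scoped Classical

theorem card_le_two_of_not_isSpread {S : Finset ℕ} (hS : ¬ IsSpread S) : #S ≤ 2 := by
  obtain rfl | nonempty := S.eq_empty_or_nonempty
  · simp
  have subset : S ⊆ {S.min' nonempty, S.min' nonempty + 1} := by
    intro a ha
    have := S.min'_le a ha
    have : ¬ S.min' nonempty + 2 ≤ a := fun h ↦ hS ⟨_, S.min'_mem nonempty, a, ha, h⟩
    simp only [mem_insert, mem_singleton]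
    omega
  exact (card_le_card subset).trans card_le_two

theorem card_interedges_le_card_mul_add (H : SimpleGraph ℕ) (A B : Finset ℕ) :
    #(H.interedges A B) ≤ #B * #{p ∈ A | IsSpread {q ∈ B | H.Adj p q}} + 2 * #A := by
  have card_neighbors_le (p : ℕ) : #{q ∈ B | H.Adj p q} ≤
      #B * (if IsSpread {q ∈ B | H.Adj p q} then 1 else 0) + 2 := by
    split_ifs with spread
    · have : #{q ∈ B | H.Adj p q} ≤ #B := card_filter_le _ _
      omega
    · simpa using card_le_two_of_not_isSpread spread
  calc #(H.interedges A B) = ∑ p ∈ A, #{q ∈ B | H.Adj p q} := card_interedges_eq_sum H A B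
    _ ≤ ∑ p ∈ A, (#B * (if IsSpread {q ∈ B | H.Adj p q} then 1 else 0) + 2) :=
        sum_le_sum fun p _ ↦ card_neighbors_le p
    _ = #B * #{p ∈ A | IsSpread {q ∈ B | H.Adj p q}} + 2 * #A := by
        rw [sum_add_distrib, ← mul_sum, ← card_filter, sum_const, smul_eq_mul, mul_comm #A]

theorem card_interedges_le_four (H : SimpleGraph ℕ) {A B : Finset ℕ}
    (hA : ¬ IsSpread {p ∈ A | ∃ q ∈ B, H.Adj q p}) (hB : ¬ IsSpread {q ∈ B | ∃ p ∈ A, H.Adj p q}) :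
    #(H.interedges A B) ≤ 4 := by
  have subset : H.interedges A B ⊆
      {p ∈ A | ∃ q ∈ B, H.Adj q p} ×ˢ {q ∈ B | ∃ p ∈ A, H.Adj p q} := by
    rintro ⟨p, q⟩ hpq
    obtain ⟨hp, hq, adj⟩ := (SimpleGraph.mem_interedges_iff H).1 hpq
    exact mem_product.2 ⟨mem_filter.2 ⟨hp, q, hq, adj.symm⟩, mem_filter.2 ⟨hq, p, hp, adj⟩⟩
  calc #(H.interedges A B) ≤ _ := card_le_card subset
    _ ≤ 2 * 2 := by
        rw [card_product]
        exact Nat.mul_le_mul (card_le_two_of_not_isSpread hA) (card_le_two_of_not_isSpread hB)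

variable {V : Type*} {G : SimpleGraph V} {P : V → Prop} {f : ℕ → V} {ℓ : ℕ} {J : Finset ℕ}
  {σ : Bool} {c j : ℕ}

/-- The number of edges between the halves of the blocks `j` and `c`. -/
noncomputable def halfEdges (G : SimpleGraph V) (f : ℕ → V) (ℓ : ℕ) (σ : Bool) (j c : ℕ) : ℕ :=
  #((G.comap f).interedges (halfBlock ℓ σ j) (halfBlock ℓ σ c))

theorem halfEdges_le_sq : halfEdges G f ℓ σ j c ≤ ℓ ^ 2 := by
  simpa only [halfEdges, card_halfBlock, sq] using
    (G.comap f).card_interedges_le_mul (halfBlock ℓ σ j) (halfBlock ℓ σ c)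

theorem adj_blockGraph_of_halfEdges_ne_zero (hjc : j ≠ c) (h : halfEdges G f ℓ σ j c ≠ 0) :
    (blockGraph G f ℓ σ).Adj j c := by
  obtain ⟨⟨p, q⟩, hpq⟩ := card_ne_zero.1 h
  obtain ⟨hp, hq, adj⟩ := (SimpleGraph.mem_interedges_iff _).1 hpq
  exact ⟨hjc, p, hp, q, hq, adj⟩

theorem halfEdges_le (hjc : j ≠ c) :
    halfEdges G f ℓ σ j c ≤ ℓ * #(spreadVertices G f ℓ σ j c) +
      2 * ℓ * ((if SpreadTo G f ℓ σ j c then 1 else 0) + (if SpreadTo G f ℓ σ c j then 1 else 0)) +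
      4 * (if (blockGraph G f ℓ σ).Adj j c then 1 else 0) := by
  obtain zero | ne_zero := eq_or_ne (halfEdges G f ℓ σ j c) 0
  · omega
  by_cases spread : SpreadTo G f ℓ σ j c ∨ SpreadTo G f ℓ σ c j
  · have indicator : 2 * ℓ * 1 ≤ 2 * ℓ * ((if SpreadTo G f ℓ σ j c then 1 else 0) +
        (if SpreadTo G f ℓ σ c j then 1 else 0)) :=
      Nat.mul_le_mul_left _ (by rcases spread with h | h <;> simp [h])
    have := card_interedges_le_card_mul_add (G.comap f) (halfBlock ℓ σ j) (halfBlock ℓ σ c)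
    simp only [card_halfBlock] at this
    have : halfEdges G f ℓ σ j c ≤ ℓ * #(spreadVertices G f ℓ σ j c) + 2 * ℓ := this
    omega
  · obtain ⟨hB, hA⟩ := not_or.1 spread
    have : halfEdges G f ℓ σ j c ≤ 4 := card_interedges_le_four (G.comap f) hA hB
    rw [if_pos (adj_blockGraph_of_halfEdges_ne_zero hjc ne_zero)]
    omega

theorem card_interedges_biUnion_halfBlock (K : Finset ℕ) :
    #((G.comap f).interedges (K.biUnion (halfBlock ℓ σ)) (K.biUnion (halfBlock ℓ σ))) =
      ∑ j ∈ K, ∑ c ∈ K, halfEdges G f ℓ σ j c := by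
  have pairwise : (K : Set ℕ).PairwiseDisjoint (halfBlock ℓ σ) :=
    fun _ _ _ _ ↦ disjoint_halfBlock
  rw [card_interedges_eq_sum, sum_biUnion pairwise]
  refine sum_congr rfl fun j _ ↦ ?_
  simp only [halfEdges, card_interedges_eq_sum]
  rw [sum_comm]
  refine sum_congr rfl fun p _ ↦ ?_
  rw [filter_biUnion, card_biUnion fun c _ c' _ hcc' ↦
    disjoint_filter_filter (disjoint_halfBlock hcc')]

variable [Fintype V]

theorem IsObstructed.sq_le_mul_sum_halfEdges_add (h : IsObstructed G P f ℓ J) {K : Finset ℕ}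
    (hK : K ⊆ J) : (ℓ * #K) ^ 2 ≤
      G.indepNum * (∑ j ∈ K, ∑ c ∈ K, halfEdges G f ℓ σ j c + ℓ * #K) := by
  have card_eq : #(K.biUnion (halfBlock ℓ σ)) = ℓ * #K := by
    rw [card_biUnion fun _ _ _ _ ↦ disjoint_halfBlock]
    simp [card_halfBlock, mul_comm]
  rw [← card_eq, ← card_interedges_biUnion_halfBlock]
  refine card_sq_le_mul_card_interedges_add _ fun S hS indep ↦ ?_
  have injOn : Set.InjOn f S := (h.injOn_halfBlock σ).mono
    (coe_subset.2 (hS.trans (biUnion_subset_biUnion_of_subset_left _ hK)))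
  by_contra! card_lt
  obtain ⟨i, hi, i', hi', hii', adj⟩ := exists_lt_adj_of_indepNum_lt_card injOn card_lt
  exact indep hi hi' hii'.ne adj

theorem IsObstructed.sum_erase_halfEdges_le (h : IsObstructed G P f ℓ J) (hc : c ∈ J) :
    ∑ j ∈ J.erase c, halfEdges G f ℓ σ j c ≤ 3 * G.indepNum * ℓ ^ 2 +
      2 * ℓ * #{j ∈ J.erase c | SpreadTo G f ℓ σ c j} +
      4 * #{j ∈ J | (blockGraph G f ℓ σ).Adj j c} := by
  have sum_le := sum_le_sum fun j hj ↦
    halfEdges_le (G := G) (f := f) (ℓ := ℓ) (σ := σ) (ne_of_mem_erase (s := J) (a := c) hj)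
  simp only [sum_add_distrib, ← mul_sum, ← card_filter] at sum_le
  have spreadVertices_le :=
    Nat.mul_le_mul_left ℓ (h.sum_card_spreadVertices_le (σ := σ) hc)
  have spreadTo_le := Nat.mul_le_mul_left (2 * ℓ) (h.card_filter_spreadTo_le (σ := σ) hc)
  have adj_le : #{j ∈ J.erase c | (blockGraph G f ℓ σ).Adj j c} ≤
      #{j ∈ J | (blockGraph G f ℓ σ).Adj j c} :=
    card_le_card (filter_subset_filter _ (erase_subset c J))
  linarith

theorem IsObstructed.sum_halfEdges_le (h : IsObstructed G P f ℓ J) (hα : 1 ≤ G.indepNum) :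
    ∑ c ∈ J, ∑ j ∈ J, halfEdges G f ℓ σ j c ≤
      6 * #J * G.indepNum * ℓ ^ 2 + 4 * #((blockGraph G f ℓ σ).interedges J J) := by
  have sum_spreadTo_le :
      ∑ c ∈ J, #{j ∈ J.erase c | SpreadTo G f ℓ σ c j} ≤ #J * (ℓ * G.indepNum) := by
    simp only [card_filter]
    rw [sum_comm' (t' := J) (s' := J.erase)
      fun c j ↦ by simp only [mem_erase]; tauto]
    simp only [← card_filter]
    simpa only [sum_const, smul_eq_mul] using sum_le_sum fun j hj ↦ h.card_filter_spreadTo_le hj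
  have sum_le (c) (hc : c ∈ J) : ∑ j ∈ J, halfEdges G f ℓ σ j c ≤ 4 * G.indepNum * ℓ ^ 2 +
      2 * ℓ * #{j ∈ J.erase c | SpreadTo G f ℓ σ c j} +
      4 * #{j ∈ J | (blockGraph G f ℓ σ).Adj c j} := by
    have diagonal : halfEdges G f ℓ σ c c ≤ G.indepNum * ℓ ^ 2 :=
      halfEdges_le_sq.trans (Nat.le_mul_of_pos_left _ hα)
    have offDiagonal := h.sum_erase_halfEdges_le (σ := σ) hc
    simp only [(blockGraph G f ℓ σ).adj_comm _ c] at offDiagonal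
    rw [← add_sum_erase _ _ hc]
    linarith
  refine (sum_le_sum sum_le).trans ?_
  rw [card_interedges_eq_sum]
  simp only [sum_add_distrib, ← mul_sum, sum_const, smul_eq_mul]
  linarith [Nat.mul_le_mul_left (2 * ℓ) sum_spreadTo_le]

end EdgeCounting

/-! ### The number of blocks -/

section DoubleCounting

theorem sum_sum_sum_filter_adj {ι : Type*} (A : SimpleGraph ι) [DecidableRel A.Adj] (J : Finset ι)
    (e : ι → ι → ℕ) :
    ∑ b ∈ J, ∑ c ∈ J with A.Adj b c, ∑ c' ∈ J with A.Adj b c', e c c' =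
      ∑ c ∈ J, ∑ c' ∈ J, #{b ∈ J | A.Adj b c ∧ A.Adj b c'} * e c c' := by
  simp only [sum_filter, card_filter, sum_mul, ite_and, ite_mul, one_mul, zero_mul]
  rw [sum_comm]
  refine sum_congr rfl fun c _ ↦ ?_
  rw [sum_comm]
  refine sum_congr rfl fun b _ ↦ ?_
  split_ifs <;> simp

theorem mul_sum_sum_sum_filter_adj_le {ι : Type*} {A : SimpleGraph ι} [DecidableRel A.Adj]
    {J : Finset ι} {e : ι → ι → ℕ} {ℓ m κ : ℕ} (diagonal : ∀ c ∈ J, e c c ≤ m)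
    (codegree : ∀ c ∈ J, ∀ c' ∈ J, c ≠ c' → e c c' ≠ 0 →
      ℓ * #{b ∈ J | A.Adj b c ∧ A.Adj b c'} ≤ κ) :
    ℓ * ∑ b ∈ J, ∑ c ∈ J with A.Adj b c, ∑ c' ∈ J with A.Adj b c', e c c' ≤
      κ * ∑ c ∈ J, ∑ c' ∈ J, e c c' + ℓ * m * #(A.interedges J J) := by
  classical
  have term_le (c) (hc : c ∈ J) (c') (hc' : c' ∈ J) :
      ℓ * (#{b ∈ J | A.Adj b c ∧ A.Adj b c'} * e c c') ≤
        κ * e c c' + if c = c' then ℓ * m * #{b ∈ J | A.Adj c b} else 0 := by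
    split_ifs with hcc'
    · subst hcc'
      simp only [and_self, A.adj_comm _ c]
      calc ℓ * (#{b ∈ J | A.Adj c b} * e c c) ≤ ℓ * (#{b ∈ J | A.Adj c b} * m) := by
            gcongr
            exact diagonal c hc
        _ = ℓ * m * #{b ∈ J | A.Adj c b} := by ring
        _ ≤ _ := Nat.le_add_left _ _
    · obtain zero | ne_zero := eq_or_ne (e c c') 0
      · simp [zero]
      · rw [← mul_assoc]
        exact Nat.mul_le_mul_right _ (codegree c hc c' hc' hcc' ne_zero)
  rw [sum_sum_sum_filter_adj, card_interedges_eq_sum]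
  simp only [mul_sum]
  refine (sum_le_sum fun c hc ↦ sum_le_sum fun c' hc' ↦ term_le c hc c' hc').trans_eq ?_
  simp only [sum_add_distrib, sum_ite_eq, sum_ite_mem, inter_self]

open scoped Classical

variable {V : Type*} [Fintype V] {G : SimpleGraph V} {P : V → Prop} {f : ℕ → V} {ℓ : ℕ}
  {J : Finset ℕ} {σ : Bool}

theorem IsObstructed.pow_mul_sq_card_interedges_le (h : IsObstructed G P f ℓ J) :
    ℓ ^ 3 * #((blockGraph G f ℓ σ).interedges J J) ^ 2 ≤
      #J * (2 * G.indepNum * ℓ ^ 3 * #((blockGraph G f ℓ σ).interedges J J) +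
        2 * G.indepNum ^ 2 * ∑ j ∈ J, ∑ c ∈ J, halfEdges G f ℓ (!σ) j c) := by
  set A := blockGraph G f ℓ σ
  set d : ℕ → ℕ := fun b ↦ #{c ∈ J | A.Adj b c}
  set E := ∑ j ∈ J, ∑ c ∈ J, halfEdges G f ℓ (!σ) j c
  set S := ∑ b ∈ J, ∑ c ∈ J with A.Adj b c, ∑ c' ∈ J with A.Adj b c', halfEdges G f ℓ (!σ) c c'
  have card_eq : #(A.interedges J J) = ∑ b ∈ J, d b := card_interedges_eq_sum A J J
  have cauchySchwarz : (∑ b ∈ J, d b) ^ 2 ≤ #J * ∑ b ∈ J, d b ^ 2 := sq_sum_le_card_mul_sum_sq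
  have turan : ℓ ^ 2 * ∑ b ∈ J, d b ^ 2 ≤ G.indepNum * (S + ℓ * ∑ b ∈ J, d b) := by
    rw [mul_sum J d ℓ, ← sum_add_distrib, mul_sum, mul_sum]
    simp only [← mul_pow]
    exact sum_le_sum fun b _ ↦ h.sq_le_mul_sum_halfEdges_add (filter_subset _ _)
  have codegree : ℓ * S ≤ 2 * G.indepNum * E + ℓ * ℓ ^ 2 * ∑ b ∈ J, d b := by
    rw [← card_eq]
    exact mul_sum_sum_sum_filter_adj_le (fun c _ ↦ halfEdges_le_sq) fun c hc c' hc' hcc' ne_zero ↦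
      h.mul_card_common_neighbors_le hc hc' (adj_blockGraph_of_halfEdges_ne_zero hcc' ne_zero)
  rw [card_eq]
  generalize ∑ b ∈ J, d b = Γ at *
  calc ℓ ^ 3 * Γ ^ 2 ≤ ℓ ^ 3 * (#J * ∑ b ∈ J, d b ^ 2) := by gcongr
    _ = #J * ℓ * (ℓ ^ 2 * ∑ b ∈ J, d b ^ 2) := by ring
    _ ≤ #J * ℓ * (G.indepNum * (S + ℓ * Γ)) := by gcongr
    _ = #J * G.indepNum * (ℓ * S + ℓ * ℓ * Γ) := by ring
    _ ≤ #J * G.indepNum * (2 * G.indepNum * E + ℓ * ℓ ^ 2 * Γ + ℓ * ℓ ^ 2 * Γ) := by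
        gcongr
        exact Nat.le_self_pow two_ne_zero ℓ
    _ = #J * (2 * G.indepNum * ℓ ^ 3 * Γ + 2 * G.indepNum ^ 2 * E) := by ring

section Arithmetic

variable {N k ℓ Γ E E' : ℕ}

theorem sq_mul_le_of_turan (hN : 300 * k ^ 2 ≤ N) (turan : (ℓ * N) ^ 2 ≤ k * (E + ℓ * N))
    (sparse : E ≤ 6 * N * k * ℓ ^ 2 + 4 * Γ) : (ℓ * N) ^ 2 ≤ 8 * k * Γ := by
  have main_le : 300 * k ^ 2 * (N * ℓ ^ 2) ≤ N * (N * ℓ ^ 2) := Nat.mul_le_mul_right _ hN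
  have error_le : k * ℓ * N ≤ k ^ 2 * ℓ ^ 2 * N := by
    gcongr <;> exact Nat.le_self_pow two_ne_zero _
  have edges_le := Nat.mul_le_mul_left k sparse
  linarith [Nat.zero_le (k * Γ)]

theorem edges_le_of_turan (hk : 1 ≤ k) (hN : 300 * k ^ 2 ≤ N)
    (turan : (ℓ * N) ^ 2 ≤ k * (E + ℓ * N)) (sparse : E ≤ 6 * N * k * ℓ ^ 2 + 4 * Γ) :
    E ≤ 8 * Γ := by
  have main_le : 300 * k ^ 2 * (N * ℓ ^ 2) ≤ N * (N * ℓ ^ 2) := Nat.mul_le_mul_right _ hN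
  have sq_mul_le := sq_mul_le_of_turan hN turan sparse
  have : 6 * N * k * ℓ ^ 2 ≤ 4 * Γ := le_of_mul_le_mul_left (by linarith [Nat.zero_le (k * Γ)]) hk
  omega

theorem lt_of_double_counting (hk : 1 ≤ k) (hkℓ : k ≤ ℓ ^ 5)
    (turan : (ℓ * N) ^ 2 ≤ k * (E + ℓ * N)) (sparse : E ≤ 6 * N * k * ℓ ^ 2 + 4 * Γ)
    (hE' : E' ≤ E)
    (count : ℓ ^ 3 * Γ ^ 2 ≤ N * (2 * k * ℓ ^ 3 * Γ + 2 * k ^ 2 * E')) : N < 300 * k ^ 2 := by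
  by_contra! hN
  have ℓ_pos : 0 < ℓ := Nat.pos_of_ne_zero fun h ↦ by simp [h] at hkℓ; omega
  have N_pos : 0 < N := lt_of_lt_of_le (by positivity) hN
  have sq_mul_le := sq_mul_le_of_turan hN turan sparse
  have edges_le := hE'.trans (edges_le_of_turan hk hN turan sparse)
  have Γ_pos : 0 < Γ := Nat.pos_of_mul_pos_left (lt_of_lt_of_le (by positivity) sq_mul_le)
  have pow_mul_le : ℓ ^ 3 * Γ ≤ N * (2 * k * ℓ ^ 3 + 16 * k ^ 2) := by
    refine le_of_mul_le_mul_right ?_ Γ_pos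
    calc ℓ ^ 3 * Γ * Γ = ℓ ^ 3 * Γ ^ 2 := by ring
      _ ≤ N * (2 * k * ℓ ^ 3 * Γ + 2 * k ^ 2 * (8 * Γ)) := count.trans (by gcongr)
      _ = N * (2 * k * ℓ ^ 3 + 16 * k ^ 2) * Γ := by ring
  have : N * ℓ ^ 5 * N ≤ 144 * k ^ 2 * ℓ ^ 5 * N := by
    calc N * ℓ ^ 5 * N = ℓ ^ 3 * (ℓ * N) ^ 2 := by ring
      _ ≤ ℓ ^ 3 * (8 * k * Γ) := by gcongr
      _ = 8 * k * (ℓ ^ 3 * Γ) := by ring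
      _ ≤ 8 * k * (N * (2 * k * ℓ ^ 3 + 16 * k ^ 2)) := by gcongr
      _ = (16 * k ^ 2 * ℓ ^ 3 + 128 * k ^ 2 * k) * N := by ring
      _ ≤ (16 * k ^ 2 * ℓ ^ 5 + 128 * k ^ 2 * ℓ ^ 5) * N := by gcongr; omega
      _ = 144 * k ^ 2 * ℓ ^ 5 * N := by ring
  have : N ≤ 144 * k ^ 2 :=
    le_of_mul_le_mul_right (le_of_mul_le_mul_right this N_pos) (by positivity)
  have : 0 < k ^ 2 := by positivity
  omega

end Arithmetic

theorem IsObstructed.card_lt (h : IsObstructed G P f ℓ J) (hα : 1 ≤ G.indepNum)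
    (hαℓ : G.indepNum ≤ ℓ ^ 5) : #J < 300 * G.indepNum ^ 2 := by
  obtain ⟨σ, hσ⟩ : ∃ σ, ∑ j ∈ J, ∑ c ∈ J, halfEdges G f ℓ (!σ) j c ≤
      ∑ j ∈ J, ∑ c ∈ J, halfEdges G f ℓ σ j c :=
    (le_total _ _).elim (fun le ↦ ⟨true, le⟩) fun le ↦ ⟨false, le⟩
  exact lt_of_double_counting hα hαℓ (h.sq_le_mul_sum_halfEdges_add Subset.rfl)
    (sum_comm.trans_le (h.sum_halfEdges_le hα)) hσ h.pow_mul_sq_card_interedges_le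

end DoubleCounting

/-! ### Choosing the blocks -/

section Main

variable {V : Type*} [Fintype V] {G : SimpleGraph V} {ℓ : ℕ}

theorem exists_isObstructed {P : V → Prop} [DecidablePred P] {f : ℕ → V} {m : ℕ}
    (hf : IsCycleParam G (Fintype.card V) f) (le_card : 4 * (2 * ℓ + 2) + 3 ≤ Fintype.card V)
    (hm : m * (2 * ℓ + 2) ≤ Fintype.card V)
    (not_near : ¬ HasNearSpanningCycle G P (4 * (2 * ℓ + 2))) :
    ∃ J, IsObstructed G P f ℓ J ∧ m ≤ #J + #{v | ¬ P v} := by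
  classical
  set good : ℕ → Prop :=
    fun j ↦ ∀ i, blockStart ℓ j ≤ i → i < blockStart ℓ j + (2 * ℓ + 2) → P (f i) with good_def
  have fit (j) (hj : j ∈ range m) : blockStart ℓ j + (2 * ℓ + 2) ≤ Fintype.card V :=
    (blockStart_add_le (mem_range.1 hj)).trans hm
  refine ⟨{j ∈ range m | good j}, ⟨hf, le_card, fun j hj ↦ fit j (mem_filter.1 hj).1,
    fun j hj ↦ (mem_filter.1 hj).2, not_near⟩, ?_⟩
  have exists_bad (j) (hj : j ∈ {j ∈ range m | ¬ good j}) :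
      ∃ i, blockStart ℓ j ≤ i ∧ i < blockStart ℓ j + (2 * ℓ + 2) ∧ ¬ P (f i) := by
    simpa only [good_def, not_forall, exists_prop] using (mem_filter.1 hj).2
  choose! i le_i i_lt not_P using exists_bad
  have injOn : Set.InjOn (f ∘ i) ({j ∈ range m | ¬ good j} : Finset ℕ) := by
    refine hf.injOn_Iio.comp (StrictMonoOn.injOn fun j hj j' hj' hjj' ↦ ?_) fun j hj ↦ ?_
    · exact (i_lt j hj).trans_le ((blockStart_add_le hjj').trans (le_i j' hj'))
    · exact (i_lt j hj).trans_le (fit j (mem_filter.1 hj).1)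
  calc m = #{j ∈ range m | good j} + #{j ∈ range m | ¬ good j} := by
        rw [card_filter_add_card_filter_not, card_range]
    _ ≤ #{j ∈ range m | good j} + #{v | ¬ P v} := by
        gcongr
        exact card_le_card_of_injOn (f ∘ i) (fun j hj ↦ by simpa using not_P j hj) injOn

theorem exists_isCycle_of_mul_le_card [DecidableEq V] {C k : ℕ} {W : Finset V}
    (hG : G.IsHamiltonian) (hk : 0 < k) (hα : G.indepNum ≤ k) (hℓk : ℓ ≤ k) (hkℓ : k ≤ ℓ ^ 5)
    (hW : #W ≤ C * k ^ 2) (hn : (C + 318) * k ^ 2 * (2 * ℓ + 2) ≤ Fintype.card V) :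
    ∃ (u : V) (w : G.Walk u u), w.IsCycle ∧ w.length = Fintype.card V - 1 ∧
      ∀ x ∈ W, x ∈ w.support := by
  classical
  set M := 4 * (2 * ℓ + 2)
  set P : V → Prop := fun v ↦ v ∉ W ∧ G.indepNum + M < G.degree v
  have one_le : 1 ≤ k ^ 2 := Nat.one_le_pow _ _ hk
  have le_card : 318 * (2 * ℓ + 2) ≤ Fintype.card V :=
    (Nat.mul_le_mul_right _ (Nat.mul_le_mul (Nat.le_add_left _ _) one_le)).trans hn
  have : Nonempty V := Fintype.card_pos_iff.1 (by omega)
  by_contra no_cycle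
  obtain ⟨f, hf⟩ := exists_isCycleParam_of_isHamiltonian hG (by omega)
  obtain ⟨J, obstructed, le_card_J_add⟩ := exists_isObstructed (P := P) hf (by omega) hn
    fun near ↦ no_cycle near.exists_isCycle
  have card_J_lt := obstructed.card_lt one_le_indepNum (hα.trans hkℓ)
  have card_not_P_le : #{v | ¬ P v} ≤ C * k ^ 2 + 18 * k ^ 2 := by
    have subset : ({v | ¬ P v} : Finset V) ⊆
        W ∪ ({v | G.degree v ≤ G.indepNum + M} : Finset V) := by
      intro v
      simp only [P, mem_filter, mem_univ, mem_union, not_and, not_lt, true_and]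
      tauto
    calc #{v | ¬ P v} ≤ #W + #{v | G.degree v ≤ G.indepNum + M} :=
          (card_le_card subset).trans (card_union_le _ _)
      _ ≤ C * k ^ 2 + G.indepNum * (G.indepNum + M + 1) :=
          Nat.add_le_add hW (card_filter_degree_le G _)
      _ ≤ C * k ^ 2 + k * (18 * k) := by gcongr; omega
      _ = C * k ^ 2 + 18 * k ^ 2 := by ring
  have : 300 * G.indepNum ^ 2 ≤ 300 * k ^ 2 := by gcongr
  have : (C + 318) * k ^ 2 = C * k ^ 2 + 318 * k ^ 2 := Nat.add_mul _ _ _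
  omega

end Main

theorem exists_pow_five_ge {k : ℕ} (hk : 0 < k) :
    ∃ ℓ : ℕ, ℓ ≤ k ∧ k ≤ ℓ ^ 5 ∧
      (k : ℝ) ^ 2 * (2 * ℓ + 2) ≤ 6 * (k : ℝ) ^ ((11 : ℝ) / 5) := by
  have one_le_k : (1 : ℝ) ≤ k := by exact_mod_cast hk
  set t : ℝ := (k : ℝ) ^ ((1 : ℝ) / 5) with ht
  have one_le_t : 1 ≤ t := Real.one_le_rpow one_le_k (by norm_num)
  have pow_t : t ^ 5 = k := by
    rw [ht, ← Real.rpow_natCast, ← Real.rpow_mul k.cast_nonneg]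
    norm_num
  have k_pow : (k : ℝ) ^ ((11 : ℝ) / 5) = (k : ℝ) ^ 2 * t := by
    rw [ht, ← Real.rpow_natCast, ← Real.rpow_add (by linarith)]
    norm_num
  refine ⟨⌈t⌉₊, Nat.ceil_le.2 (pow_t ▸ le_self_pow₀ one_le_t (by norm_num)), ?_, ?_⟩
  · have : (k : ℝ) ≤ (⌈t⌉₊ : ℝ) ^ 5 := pow_t ▸ pow_le_pow_left₀ (by linarith) (Nat.le_ceil t) 5
    exact_mod_cast this
  · have ceil_lt := Nat.ceil_lt_add_one (zero_le_one.trans one_le_t)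
    calc (k : ℝ) ^ 2 * (2 * ⌈t⌉₊ + 2) ≤ (k : ℝ) ^ 2 * (6 * t) := by gcongr; linarith
      _ = 6 * (k : ℝ) ^ ((11 : ℝ) / 5) := by rw [k_pow]; ring

theorem statement1_general (C : ℕ) :
    ∃ c : ℝ, 0 < c ∧
      ∀ (k : ℕ), 0 < k →
        ∀ (V : Type*) [Fintype V] [DecidableEq V] (G : SimpleGraph V) (W : Finset V),
          G.IsHamiltonian →
          G.indepNum ≤ k →
          c * (k : ℝ) ^ ((11 : ℝ) / 5) ≤ (Fintype.card V : ℝ) →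
          W.card ≤ C * k ^ 2 →
          ∃ (u : V) (w : G.Walk u u), w.IsCycle ∧ w.length = Fintype.card V - 1 ∧
            ∀ x ∈ W, x ∈ w.support := by
  refine ⟨6 * (C + 318), by positivity, fun k hk V _ _ G W hG hα hn hW ↦ ?_⟩
  obtain ⟨ℓ, hℓk, hkℓ, hℓ⟩ := exists_pow_five_ge hk
  refine exists_isCycle_of_mul_le_card (C := C) (ℓ := ℓ) hG hk hα hℓk hkℓ hW ?_
  have : ((C + 318) * k ^ 2 * (2 * ℓ + 2) : ℝ) ≤ Fintype.card V := by
    calc ((C + 318) * k ^ 2 * (2 * ℓ + 2) : ℝ) = (C + 318) * ((k : ℝ) ^ 2 * (2 * ℓ + 2)) := by ring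
      _ ≤ (C + 318) * (6 * (k : ℝ) ^ ((11 : ℝ) / 5)) := by gcongr
      _ ≤ Fintype.card V := by linarith
  exact_mod_cast this

/-- There exists a constant `c > 0` such that for every positive integer `k`:
if `G` is a Hamiltonian graph on `n` vertices with `n ≥ c·k^(11/5)` and independence number at
most `k`, and `W` is a set of at most `20·k²` vertices of `G`, then `G` contains a cycle of
length `n − 1` passing through all vertices of `W`. -/
theorem statement1 :
    ∃ c : ℝ, 0 < c ∧
      ∀ (k : ℕ), 0 < k →
        ∀ (V : Type) [Fintype V] [DecidableEq V] (G : SimpleGraph V) (W : Finset V),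
          G.IsHamiltonian →
          (∀ s : Finset V, (∀ u ∈ s, ∀ v ∈ s, u ≠ v → ¬ G.Adj u v) → s.card ≤ k) →
          c * (k : ℝ) ^ ((11 : ℝ) / 5) ≤ (Fintype.card V : ℝ) →
          W.card ≤ 20 * k ^ 2 →
          ∃ (u : V) (w : G.Walk u u), w.IsCycle ∧ w.length = Fintype.card V - 1 ∧
            ∀ x ∈ W, x ∈ w.support := by
  obtain ⟨c, hc, h⟩ := statement1_general 20
  refine ⟨c, hc, fun k hk V _ _ G W hG hα ↦ h k hk V G W hG ?_⟩
  obtain ⟨s, hs⟩ := G.exists_isNIndepSet_indepNum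
  exact hs.card_eq ▸ hα s fun u hu v hv ↦ hs.isIndepSet hu hv
end
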